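/- For every β ≥ 0, the operator T̂ maps L(log L)^{1+β}(-1,1) boundedly into L(log L)^{β}(-1,1). In particular, T̂ : LlogL(-1,1) → L^1(-1,1) is bounded. -/

import Mathlib

open MeasureTheory Set Filter

noncomputable section

/-- Lebesgue measure restricted to the interval `(-1, 1)`. -/
def μI : Measure ℝ := volume.restrict (Set.Ioo (-1 : ℝ) 1)

/-- The finite Hilbert transform: the principal-value limit
`T(f)(t) = lim_{ε→0⁺} (1/π) ∫_{x∈(-1,1), |x-t|≥ε} f(x)/(x-t) dx`. -/
def FHT (f : ℝ → ℂ) (t : ℝ) : ℂ :=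
  limUnder (nhdsWithin (0 : ℝ) (Set.Ioi 0)) fun ε : ℝ =>
    (Real.pi : ℂ)⁻¹ *
      ∫ x in {x : ℝ | x ∈ Set.Ioo (-1 : ℝ) 1 ∧ ε ≤ |x - t|}, f x / ((x : ℂ) - (t : ℂ))

/-- The operator `T̂(g)(x) = -(1-x²)^{-1/2} T(t ↦ √(1-t²) g(t))(x)`. -/
def hatT (g : ℝ → ℂ) (x : ℝ) : ℂ :=
  -((Real.sqrt (1 - x ^ 2) : ℂ))⁻¹ * FHT (fun t => (Real.sqrt (1 - t ^ 2) : ℂ) * g t) x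

/-- Membership in the Zygmund space `L log L(-1,1)`:
`f` is a.e. measurable on `(-1,1)` and `∫ |f| log⁺|f| < ∞`. -/
def MemLlogL (f : ℝ → ℂ) : Prop :=
  AEStronglyMeasurable f μI ∧
    IntegrableOn (fun x => ‖f x‖ * max (Real.log ‖f x‖) 0) (Set.Ioo (-1 : ℝ) 1)

/-- The distribution function `λ ↦ |{x ∈ (-1,1) : |f(x)| > λ}|`. -/
def distFun (f : ℝ → ℂ) (lam : ℝ) : ℝ :=
  (volume {x : ℝ | x ∈ Set.Ioo (-1 : ℝ) 1 ∧ lam < ‖f x‖}).toReal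

/-- The decreasing rearrangement `f*` of `f`, a function on `(0,2)`. -/
def decRearr (f : ℝ → ℂ) (t : ℝ) : ℝ :=
  sInf {lam : ℝ | 0 ≤ lam ∧ distFun f lam ≤ t}

/-- The `L log L` norm `‖f‖ = ∫_0^2 f*(t) log(2e/t) dt`. -/
def llogLNorm (f : ℝ → ℂ) : ℝ :=
  ∫ t in Set.Ioo (0 : ℝ) 2, decRearr f t * Real.log (2 * Real.exp 1 / t)

/-- The `L(log L)^α` norm `∫_0^2 f*(t) log^α(2e/t) dt` (for `α = 0` this is the `L¹` norm). -/
def zygNorm (α : ℝ) (f : ℝ → ℂ) : ℝ :=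
  ∫ t in Set.Ioo (0 : ℝ) 2, decRearr f t * Real.log (2 * Real.exp 1 / t) ^ α

/-- Membership in the Zygmund space `L(log L)^α(-1,1)`. -/
def MemZyg (α : ℝ) (f : ℝ → ℂ) : Prop :=
  AEStronglyMeasurable f μI ∧
    IntegrableOn (fun t => decRearr f t * Real.log (2 * Real.exp 1 / t) ^ α)
      (Set.Ioo (0 : ℝ) 2)

/-- Membership in `L(log L)²(-1,1)`: `∫ |f| (log(2+|f|))² < ∞`. -/
def MemLlogL2 (f : ℝ → ℂ) : Prop :=
  AEStronglyMeasurable f μI ∧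
    IntegrableOn (fun x => ‖f x‖ * Real.log (2 + ‖f x‖) ^ 2) (Set.Ioo (-1 : ℝ) 1)

/-- The constant `c(β,γ) = max{1/(1-β), 1/(1-γ), 1/(β+γ-1)}`. -/
def cBG (β γ : ℝ) : ℝ := max (max (1 / (1 - β)) (1 / (1 - γ))) (1 / (β + γ - 1))

open scoped Topology ENNReal

/-!
The kernel of `T̂` is the truncated Hilbert kernel plus a remainder which is bounded on the diagonal
and singular only at the endpoints. For the Hilbert kernel, the Cauchy integral of the indicator of
a set is holomorphic with nonnegative real part `w` in the upper half-plane, and the Poisson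
formula for `-w²` and `w / (w + r)` gives the weak types `(2, 2)` and `(1, 1)`.

For both kernels the problem reduces to indicators, because a nonnegative function is the integral
of the indicators of its level sets and the Zygmund norms are integrals of a concave function of the
measures of these. On indicators, weak-type bounds integrate to restricted bounds in `L¹` with
logarithmic weights, uniformly over all weights `log^β (2e/ρ)` in which `ρ` ranks the points of the
interval. Ranking the points by the size of the image itself turns this into the `L (log L)^β` norm
of the image.
-/

/-! ### The Poisson formula in the upper half-plane -/

/-- `H` is holomorphic on a neighbourhood of the closed upper half-plane and tends to `c` at
infinity within it. -/
structure HolomorphicUpperHalfPlane (H : ℂ → ℂ) (c : ℂ) : Prop where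
  differentiableAt : ∀ z : ℂ, 0 ≤ z.im → DifferentiableAt ℂ H z
  tendsto : Tendsto H (Bornology.cobounded ℂ ⊓ 𝓟 {z | 0 ≤ z.im}) (𝓝 c)

/-- The Cayley map from the unit disc onto the upper half-plane, with `0 ↦ I` and `-1 ↦ ∞`. -/
def cayley (ζ : ℂ) : ℂ := Complex.I * (1 - ζ) / (1 + ζ)

lemma one_add_ne_zero_of_ne_neg_one {ζ : ℂ} (hζ : ζ ≠ -1) : 1 + ζ ≠ 0 := fun h =>
  hζ (by linear_combination h)

lemma one_sub_I_mul_ofReal_ne_zero (x : ℝ) : 1 - Complex.I * (x : ℂ) ≠ 0 := fun h => by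
  simpa using congrArg Complex.re h

lemma cayley_im (ζ : ℂ) : (cayley ζ).im = (1 - ‖ζ‖ ^ 2) / Complex.normSq (1 + ζ) := by
  simp only [cayley, Complex.div_im, Complex.mul_re, Complex.mul_im, Complex.I_re, Complex.I_im,
    Complex.sub_re, Complex.sub_im, Complex.one_re, Complex.one_im, Complex.add_re,
    Complex.add_im, ← Complex.normSq_eq_norm_sq, Complex.normSq_apply ζ]
  ring

lemma cayley_im_nonneg {ζ : ℂ} (h : ‖ζ‖ ≤ 1) : 0 ≤ (cayley ζ).im := by
  rw [cayley_im]
  exact div_nonneg (by nlinarith [norm_nonneg ζ]) (Complex.normSq_nonneg _)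

lemma cayley_differentiableAt {ζ : ℂ} (hζ : ζ ≠ -1) : DifferentiableAt ℂ cayley ζ := by
  have := one_add_ne_zero_of_ne_neg_one hζ
  unfold cayley
  fun_prop (disch := assumption)

lemma cayley_tendsto_cobounded : Tendsto cayley (𝓝[≠] (-1)) (Bornology.cobounded ℂ) := by
  have to_zero : Tendsto (fun ζ : ℂ => 1 + ζ) (𝓝[≠] (-1)) (𝓝[≠] 0) := by
    refine tendsto_nhdsWithin_iff.2 ⟨?_, ?_⟩
    · have : Tendsto (fun ζ : ℂ => 1 + ζ) (𝓝 (-1)) (𝓝 (1 + -1)) :=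
        Continuous.tendsto (by fun_prop) _
      exact (add_neg_cancel (1 : ℂ) ▸ this).mono_left nhdsWithin_le_nhds
    · filter_upwards [self_mem_nhdsWithin] with ζ hζ using one_add_ne_zero_of_ne_neg_one hζ
  have inv_atTop := tendsto_norm_cobounded_atTop.comp (tendsto_inv₀_nhdsNE_zero.comp to_zero)
  rw [← tendsto_norm_atTop_iff_cobounded]
  refine tendsto_atTop_mono' _ ?_ ((tendsto_atTop_add_const_right _ (-1)
    (tendsto_id.const_mul_atTop two_pos)).comp inv_atTop)
  filter_upwards [self_mem_nhdsWithin] with ζ hζ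
  have hζ' := one_add_ne_zero_of_ne_neg_one hζ
  have split : cayley ζ = Complex.I * (2 * (1 + ζ)⁻¹ - 1) := by
    rw [cayley]; field_simp; ring
  have := norm_sub_norm_le (2 * (1 + ζ)⁻¹) (1 : ℂ)
  rw [split, norm_mul, Complex.norm_I, one_mul]
  simpa [sub_eq_add_neg] using this

lemma circleMap_two_mul_arctan (x : ℝ) :
    circleMap 0 1 (2 * Real.arctan x) = (1 + Complex.I * x) / (1 - Complex.I * x) := by
  have h2 : circleMap 0 1 (2 * Real.arctan x) = Complex.exp (Real.arctan x * Complex.I) ^ 2 := by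
    rw [circleMap, ← Complex.exp_nat_mul]
    push_cast
    simp only [one_mul, zero_add]
    ring_nf
  have hs : ((√(1 + x ^ 2) : ℝ) : ℂ) ≠ 0 := by
    exact_mod_cast (Real.sqrt_pos.2 (by positivity : 0 < 1 + x ^ 2)).ne'
  have hsq : ((√(1 + x ^ 2) : ℝ) : ℂ) ^ 2 = 1 + x ^ 2 := by
    rw [← Complex.ofReal_pow, Real.sq_sqrt (by positivity)]; push_cast; ring
  rw [h2, Complex.exp_mul_I, ← Complex.ofReal_cos, ← Complex.ofReal_sin, Real.cos_arctan,
    Real.sin_arctan, eq_div_iff (one_sub_I_mul_ofReal_ne_zero x)]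
  push_cast
  field_simp
  rw [hsq]
  linear_combination (-x ^ 2 * (1 + Complex.I * x)) * Complex.I_sq

lemma circleMap_two_mul_arctan_ne_neg_one (x : ℝ) :
    circleMap 0 1 (2 * Real.arctan x) ≠ -1 := by
  rw [circleMap_two_mul_arctan, ne_eq, div_eq_iff (one_sub_I_mul_ofReal_ne_zero x)]
  intro h
  have := congrArg Complex.re h
  norm_num at this

lemma cayley_circleMap_two_mul_arctan (x : ℝ) :
    cayley (circleMap 0 1 (2 * Real.arctan x)) = x := by
  have h := one_sub_I_mul_ofReal_ne_zero x
  have num : 1 - (1 + Complex.I * (x : ℂ)) / (1 - Complex.I * x)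
      = -2 * Complex.I * x / (1 - Complex.I * x) := by field_simp; ring
  have den : 1 + (1 + Complex.I * (x : ℂ)) / (1 - Complex.I * x)
      = 2 / (1 - Complex.I * x) := by field_simp; ring
  rw [circleMap_two_mul_arctan, cayley, num, den]
  field_simp
  simp

lemma image_two_mul_arctan_univ :
    (fun x : ℝ => 2 * Real.arctan x) '' univ = Ioo (-Real.pi) Real.pi := by
  ext y
  constructor
  · rintro ⟨x, -, rfl⟩
    have := Real.neg_pi_div_two_lt_arctan x
    have := Real.arctan_lt_pi_div_two x
    constructor <;> dsimp only <;> linarith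
  · rintro ⟨h1, h2⟩
    refine ⟨Real.tan (y / 2), trivial, ?_⟩
    dsimp only
    rw [Real.arctan_tan (by linarith) (by linarith)]
    ring

lemma integral_circle_eq_integral_two_mul_arctan {E : Type*} [NormedAddCommGroup E]
    [NormedSpace ℝ E] {g : ℝ → E}
    (hg : IntegrableOn g (Ioo (-Real.pi) Real.pi)) :
    Integrable (fun x : ℝ => ((1 + x ^ 2)⁻¹ : ℝ) • g (2 * Real.arctan x)) ∧
      ∫ θ in Ioo (-Real.pi) Real.pi, g θ
        = (2 : ℝ) • ∫ x : ℝ, ((1 + x ^ 2)⁻¹ : ℝ) • g (2 * Real.arctan x) := by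
  have hderiv : ∀ x ∈ (univ : Set ℝ), HasDerivWithinAt (fun x : ℝ => 2 * Real.arctan x)
      (2 * (1 / (1 + x ^ 2))) univ x := fun x _ =>
    ((Real.hasDerivAt_arctan x).const_mul 2).hasDerivWithinAt
  have hinj : InjOn (fun x : ℝ => 2 * Real.arctan x) univ := fun x _ y _ h =>
    Real.arctan_injective (mul_left_cancel₀ two_ne_zero h)
  have jacobian : ∀ x : ℝ, |2 * (1 / (1 + x ^ 2))| • g (2 * Real.arctan x)
      = (2 : ℝ) • (((1 + x ^ 2)⁻¹ : ℝ) • g (2 * Real.arctan x)) := fun x => by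
    rw [abs_of_nonneg (by positivity), smul_smul, one_div]
  constructor
  · rw [← image_two_mul_arctan_univ,
      integrableOn_image_iff_integrableOn_abs_deriv_smul MeasurableSet.univ hderiv hinj,
      integrableOn_univ] at hg
    simp only [jacobian] at hg
    refine (hg.smul (2⁻¹ : ℝ)).congr (ae_of_all _ fun x => ?_)
    simp only [Pi.smul_apply, smul_smul, ← mul_assoc]
    norm_num
  · rw [← image_two_mul_arctan_univ,
      integral_image_eq_integral_abs_deriv_smul MeasurableSet.univ hderiv hinj, setIntegral_univ]
    simp only [jacobian]
    rw [integral_smul]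

namespace HolomorphicUpperHalfPlane

variable {H : ℂ → ℂ} {c : ℂ}

lemma diffContOnCl_update_comp_cayley (hH : HolomorphicUpperHalfPlane H c) :
    DiffContOnCl ℂ (Function.update (H ∘ cayley) (-1) c) (Metric.ball 0 1) := by
  have hdiff : ∀ ζ : ℂ, ζ ≠ -1 → ‖ζ‖ ≤ 1 →
      DifferentiableAt ℂ (Function.update (H ∘ cayley) (-1) c) ζ := fun ζ hne hle => by
    refine ((hH.differentiableAt _ (cayley_im_nonneg hle)).comp ζ
      (cayley_differentiableAt hne)).congr_of_eventuallyEq ?_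
    filter_upwards [isOpen_ne.mem_nhds hne] with w hw using Function.update_of_ne hw _ _
  constructor
  · intro ζ hζ
    rw [mem_ball_zero_iff] at hζ
    refine (hdiff ζ ?_ hζ.le).differentiableWithinAt
    rintro rfl
    simp at hζ
  · rw [closure_ball _ one_ne_zero]
    intro ζ hζ
    by_cases h : ζ = -1
    · subst h
      rw [continuousWithinAt_update_same]
      refine hH.tendsto.comp (tendsto_inf.2
        ⟨cayley_tendsto_cobounded.mono_left (nhdsWithin_mono _ fun w hw => hw.2), ?_⟩)
      rw [tendsto_principal]
      filter_upwards [self_mem_nhdsWithin] with w hw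
      exact cayley_im_nonneg (by simpa using hw.1)
    · exact (hdiff ζ h (by simpa using hζ)).continuousAt.continuousWithinAt

lemma integral_inv_one_add_sq_smul (hH : HolomorphicUpperHalfPlane H c) :
    Integrable (fun x : ℝ => ((1 + x ^ 2)⁻¹ : ℝ) • H x) ∧
      ∫ x : ℝ, ((1 + x ^ 2)⁻¹ : ℝ) • H x = Real.pi • H Complex.I := by
  set G : ℂ → ℂ := Function.update (H ∘ cayley) (-1) c
  have hG : DiffContOnCl ℂ G (Metric.ball 0 |1|) := by
    rw [abs_one]; exact hH.diffContOnCl_update_comp_cayley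
  have hG_line (x : ℝ) : G (circleMap 0 1 (2 * Real.arctan x)) = H x := by
    simp only [G, Function.update_of_ne (circleMap_two_mul_arctan_ne_neg_one x),
      Function.comp_apply, cayley_circleMap_two_mul_arctan]
  have hG_zero : G 0 = H Complex.I := by
    simp [G, cayley]
  have hcont : Continuous fun θ => G (circleMap 0 1 θ) :=
    hG.continuousOn.comp_continuous (continuous_circleMap 0 1) fun θ => by
      rw [abs_one, closure_ball _ one_ne_zero]
      exact circleMap_mem_closedBall 0 zero_le_one θ
  obtain ⟨hint, hval⟩ := integral_circle_eq_integral_two_mul_arctan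
    (hcont.integrableOn_Icc.mono_set Ioo_subset_Icc_self)
  simp only [hG_line] at hint hval
  have mean_value := hG.circleAverage
  rw [Real.circleAverage_eq_integral_add (-Real.pi),
    intervalIntegral.integral_comp_add_right (fun θ => G (circleMap 0 1 θ)),
    intervalIntegral.integral_of_le (by linarith [Real.pi_pos]), integral_Ioc_eq_integral_Ioo,
    zero_add, show 2 * Real.pi + -Real.pi = Real.pi by ring, hval, hG_zero] at mean_value
  refine ⟨hint, ?_⟩
  have cancel : Real.pi * ((2 * Real.pi)⁻¹ * 2) = 1 := by
    have := Real.pi_pos.ne'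
    field_simp
  rw [← mean_value, smul_smul, smul_smul, mul_assoc, cancel, one_smul]

lemma comp_affine (hH : HolomorphicUpperHalfPlane H c) (a : ℝ) {y : ℝ} (hy : 0 < y) :
    HolomorphicUpperHalfPlane (fun z => H (a + y * z)) c where
  differentiableAt z hz := by
    refine (hH.differentiableAt (a + y * z) ?_).comp z (by fun_prop)
    simpa using mul_nonneg hy.le hz
  tendsto := by
    refine hH.tendsto.comp (tendsto_inf.2 ⟨?_, ?_⟩)
    · refine Tendsto.mono_left ?_ inf_le_left
      rw [← tendsto_norm_atTop_iff_cobounded]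
      refine tendsto_atTop_mono (fun z => ?_) (tendsto_atTop_add_const_right _ (-‖(a : ℂ)‖)
        (tendsto_norm_cobounded_atTop.const_mul_atTop hy))
      have := norm_sub_norm_le ((y : ℂ) * z) (-a)
      rw [norm_mul, Complex.norm_real, Real.norm_of_nonneg hy.le, norm_neg, sub_neg_eq_add,
        add_comm _ (a : ℂ)] at this
      linarith
    · rw [tendsto_principal]
      filter_upwards [mem_inf_of_right (mem_principal_self _)] with z hz
      simpa using mul_nonneg hy.le hz

end HolomorphicUpperHalfPlane

/-- The Poisson kernel `P_y(s) = y / (π (s² + y²))` of the upper half-plane. -/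
def poissonKer (y s : ℝ) : ℝ := y / (s ^ 2 + y ^ 2) / Real.pi

lemma poissonKer_nonneg {y : ℝ} (hy : 0 ≤ y) (s : ℝ) : 0 ≤ poissonKer y s := by
  have := Real.pi_pos
  unfold poissonKer
  positivity

lemma poissonKer_mul {y : ℝ} (hy : y ≠ 0) (s : ℝ) :
    poissonKer y (y * s) = (Real.pi * y)⁻¹ * (1 + s ^ 2)⁻¹ := by
  have := Real.pi_pos.ne'
  have : 1 + s ^ 2 ≠ 0 := by positivity
  have : (y * s) ^ 2 + y ^ 2 ≠ 0 := by positivity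
  rw [poissonKer]
  field_simp
  ring

lemma poissonKer_eq {y : ℝ} (hy : y ≠ 0) (s : ℝ) :
    poissonKer y s = (Real.pi * y)⁻¹ * (1 + (s / y) ^ 2)⁻¹ := by
  rw [← poissonKer_mul hy, mul_div_cancel₀ s hy]

lemma integrable_poissonKer {y : ℝ} (hy : y ≠ 0) : Integrable (poissonKer y) := by
  simp only [funext (poissonKer_eq hy)]
  exact (integrable_inv_one_add_sq.comp_div hy).const_mul _

lemma integral_poissonKer {y : ℝ} (hy : 0 < y) : ∫ s, poissonKer y s = 1 := by
  simp_rw [poissonKer_eq hy.ne']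
  rw [integral_const_mul, Measure.integral_comp_div (fun s : ℝ => (1 + s ^ 2)⁻¹),
    integral_univ_inv_one_add_sq, abs_of_pos hy]
  have := Real.pi_pos.ne'
  simp only [smul_eq_mul]
  field_simp

lemma poissonKer_sub_comm (y a b : ℝ) : poissonKer y (a - b) = poissonKer y (b - a) := by
  rw [poissonKer, poissonKer, sub_sq_comm]

lemma HolomorphicUpperHalfPlane.integral_poissonKer_smul {H : ℂ → ℂ} {c : ℂ}
    (hH : HolomorphicUpperHalfPlane H c) (a : ℝ) {y : ℝ} (hy : 0 < y) :
    Integrable (fun t : ℝ => poissonKer y (a - t) • H t) ∧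
      ∫ t : ℝ, poissonKer y (a - t) • H t = H (a + y * Complex.I) := by
  simp only [poissonKer_sub_comm y a]
  set g : ℝ → ℂ := fun t => poissonKer y (t - a) • H t
  obtain ⟨hint, hval⟩ := (hH.comp_affine a hy).integral_inv_one_add_sq_smul
  have hπy : 0 < Real.pi * y := mul_pos Real.pi_pos hy
  have hscale (x : ℝ) : ((1 + x ^ 2)⁻¹ : ℝ) • H (a + y * x)
      = (Real.pi * y) • g (y * x + a) := by
    simp only [g, add_sub_cancel_right, poissonKer_mul hy.ne', smul_smul,
      mul_inv_cancel_left₀ hπy.ne']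
    rw [add_comm (y * x), Complex.ofReal_add, Complex.ofReal_mul]
  simp only [hscale] at hint hval
  rw [integrable_fun_smul_iff hπy.ne', integrable_comp_mul_left_iff (fun t => g (t + a)) hy.ne']
    at hint
  rw [integral_smul, Measure.integral_comp_mul_left (fun t => g (t + a)),
    integral_add_right_eq_self g, smul_smul, abs_of_pos (by positivity), mul_assoc,
    mul_inv_cancel₀ hy.ne', mul_one] at hval
  exact ⟨by simpa using hint.comp_sub_right a, smul_right_injective ℂ Real.pi_pos.ne' hval⟩

lemma add_ofReal_ne_zero {ζ : ℂ} (hζ : 0 ≤ ζ.re) {r : ℝ} (hr : 0 < r) : ζ + r ≠ 0 := fun h => by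
  have := congrArg Complex.re h
  simp only [Complex.add_re, Complex.ofReal_re, Complex.zero_re] at this
  linarith

lemma re_div_add_eq (ζ : ℂ) (r : ℝ) : (ζ / (ζ + r)).re
    = (ζ.re * (ζ.re + r) + ζ.im ^ 2) / ((ζ.re + r) ^ 2 + ζ.im ^ 2) := by
  rw [Complex.div_re, ← add_div, Complex.normSq_apply]
  simp only [Complex.add_re, Complex.add_im, Complex.ofReal_re, Complex.ofReal_im, add_zero]
  ring_nf

lemma re_div_add_nonneg {ζ : ℂ} (hζ : 0 ≤ ζ.re) {r : ℝ} (hr : 0 < r) : 0 ≤ (ζ / (ζ + r)).re := by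
  rw [re_div_add_eq]
  positivity

lemma inv_two_le_re_div_add {ζ : ℂ} (hζ : 0 ≤ ζ.re) {r : ℝ} (hr : 0 < r) (h : r ≤ |ζ.im|) :
    2⁻¹ ≤ (ζ / (ζ + r)).re := by
  have : r ^ 2 ≤ ζ.im ^ 2 := sq_abs ζ.im ▸ pow_le_pow_left₀ hr.le h 2
  rw [re_div_add_eq, le_div_iff₀ (by positivity)]
  nlinarith [sq_nonneg ζ.re]

namespace HolomorphicUpperHalfPlane

variable {H G : ℂ → ℂ} {c d : ℂ}

lemma sub (hH : HolomorphicUpperHalfPlane H c) (hG : HolomorphicUpperHalfPlane G d) :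
    HolomorphicUpperHalfPlane (fun z => H z - G z) (c - d) where
  differentiableAt z hz := (hH.differentiableAt z hz).sub (hG.differentiableAt z hz)
  tendsto := hH.tendsto.sub hG.tendsto

lemma tendsto_mul_I (hH : HolomorphicUpperHalfPlane H c) :
    Tendsto (fun y : ℝ => H (y * Complex.I)) atTop (𝓝 c) := by
  refine hH.tendsto.comp (tendsto_inf.2 ⟨?_, tendsto_principal.2 ?_⟩)
  · rw [← tendsto_norm_atTop_iff_cobounded]
    simpa using tendsto_abs_atTop_atTop
  · filter_upwards [eventually_ge_atTop 0] with y hy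
    simpa using hy

lemma continuous_ofReal (hH : HolomorphicUpperHalfPlane H c) : Continuous fun x : ℝ => H x :=
  continuous_iff_continuousAt.2 fun x =>
    ContinuousAt.comp (g := H) (hH.differentiableAt x (by simp)).continuousAt
      Complex.continuous_ofReal.continuousAt

lemma integral_weight_mul_re (hH : HolomorphicUpperHalfPlane H c) {y : ℝ} (hy : 0 < y) :
    Integrable (fun x : ℝ => y ^ 2 / (x ^ 2 + y ^ 2) * (H x).re) ∧
      ∫ x : ℝ, y ^ 2 / (x ^ 2 + y ^ 2) * (H x).re
        = Real.pi * (y * (H (y * Complex.I)).re) := by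
  obtain ⟨hint, hval⟩ := hH.integral_poissonKer_smul 0 hy
  have hre (x : ℝ) : y ^ 2 / (x ^ 2 + y ^ 2) * (H x).re
      = Real.pi * y * (poissonKer y (0 - x) • H x).re := by
    have := Real.pi_pos.ne'
    rw [Complex.smul_re, smul_eq_mul, poissonKer, zero_sub, even_two.neg_pow]
    field_simp
  have hval_re : ∫ x : ℝ, (poissonKer y (0 - x) • H x).re = (H ((0 : ℝ) + y * Complex.I)).re := by
    rw [← hval]; exact integral_re hint
  simp only [hre]
  refine ⟨hint.re.const_mul _, ?_⟩
  rw [integral_const_mul, hval_re, Complex.ofReal_zero, zero_add, mul_assoc]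

section

variable {φ ψ : ℝ → ℝ}

lemma lintegral_weight_mul_le (hφ0 : ∀ x, 0 ≤ φ x) (hψ0 : ∀ x, 0 ≤ ψ x)
    (hle : ∀ x : ℝ, φ x ≤ (H x).re + ψ x) (hH : HolomorphicUpperHalfPlane H c) (hψ : Integrable ψ)
    {y : ℝ} (hy : 0 < y) :
    ∫⁻ x, ENNReal.ofReal (y ^ 2 / (x ^ 2 + y ^ 2) * φ x) ≤
      (∫⁻ x, ENNReal.ofReal (ψ x)) + ENNReal.ofReal (Real.pi * (y * (H (y * Complex.I)).re)) := by
  set w : ℝ → ℝ := fun x => y ^ 2 / (x ^ 2 + y ^ 2)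
  have hw0 (x : ℝ) : 0 ≤ w x := by positivity
  have hw1 (x : ℝ) : w x ≤ 1 := div_le_one_of_le₀ (by nlinarith) (by positivity)
  have hwm : Measurable w := by fun_prop
  obtain ⟨hint, hval⟩ := hH.integral_weight_mul_re hy
  have hψw : Integrable fun x => w x * ψ x :=
    hψ.mono' (hwm.aestronglyMeasurable.mul hψ.1) (ae_of_all _ fun x => by
      rw [Real.norm_of_nonneg (mul_nonneg (hw0 x) (hψ0 x))]
      exact mul_le_of_le_one_left (hψ0 x) (hw1 x))
  have hpt (x : ℝ) : w x * φ x ≤ w x * (H x).re + w x * ψ x := by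
    rw [← mul_add]; exact mul_le_mul_of_nonneg_left (hle x) (hw0 x)
  calc ∫⁻ x, ENNReal.ofReal (w x * φ x)
      ≤ ∫⁻ x, ENNReal.ofReal (w x * (H x).re + w x * ψ x) :=
        lintegral_mono fun x => ENNReal.ofReal_le_ofReal (hpt x)
    _ = ENNReal.ofReal (∫ x, (w x * (H x).re + w x * ψ x)) :=
        (ofReal_integral_eq_lintegral_ofReal (hint.add hψw) (ae_of_all _ fun x =>
          (mul_nonneg (hw0 x) (hφ0 x)).trans (hpt x))).symm
    _ ≤ ENNReal.ofReal (Real.pi * (y * (H (y * Complex.I)).re) + ∫ x, ψ x) := by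
        rw [integral_add hint hψw, hval]
        gcongr
        exact fun x => mul_le_of_le_one_left (hψ0 x) (hw1 x)
    _ ≤ _ := by
        rw [← ofReal_integral_eq_lintegral_ofReal hψ (ae_of_all _ hψ0), add_comm]
        exact ENNReal.ofReal_add_le

/-- The weights `π y P_y ↑ 1` turn the Poisson formula at `iy` into a statement about integrals over
the line as `y → ∞`. -/
lemma lintegral_le_lintegral_add (hφ0 : ∀ x, 0 ≤ φ x) (hψ0 : ∀ x, 0 ≤ ψ x)
    (hle : ∀ x : ℝ, φ x ≤ (H x).re + ψ x) (hH : HolomorphicUpperHalfPlane H c) {A : ℝ}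
    (hA : Tendsto (fun y : ℝ => y * (H (y * Complex.I)).re) atTop (𝓝 A)) (hφ : Measurable φ)
    (hψ : Measurable ψ) :
    ∫⁻ x, ENNReal.ofReal (φ x) ≤ (∫⁻ x, ENNReal.ofReal (ψ x)) + ENNReal.ofReal (Real.pi * A) := by
  by_cases hψ_top : ∫⁻ x, ENNReal.ofReal (ψ x) = ∞
  · simp [hψ_top]
  have hψ_int : Integrable ψ := ⟨hψ.aestronglyMeasurable,
    (hasFiniteIntegral_iff_ofReal (ae_of_all _ hψ0)).2 (lt_top_iff_ne_top.2 hψ_top)⟩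
  set w : ℝ → ℝ → ℝ := fun y x => y ^ 2 / (x ^ 2 + y ^ 2)
  have hwm (y : ℝ) : Measurable (w y) := by fun_prop
  have hw_lim (x : ℝ) : Tendsto (fun y => w y x) atTop (𝓝 1) := by
    have : Tendsto (fun y : ℝ => (x ^ 2 / y ^ 2 + 1)⁻¹) atTop (𝓝 (0 + 1)⁻¹) :=
      ((tendsto_const_nhds.div_atTop (tendsto_pow_atTop two_ne_zero)).add_const 1).inv₀ (by simp)
    rw [zero_add, inv_one] at this
    refine this.congr' ?_
    filter_upwards [eventually_gt_atTop 0] with y hy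
    simp only [w]
    field_simp
  have limits (x : ℝ) : Tendsto (fun y => ENNReal.ofReal (w y x * φ x)) atTop
      (𝓝 (ENNReal.ofReal (φ x))) := by
    have := ENNReal.tendsto_ofReal ((hw_lim x).mul_const (φ x))
    rwa [one_mul] at this
  calc ∫⁻ x, ENNReal.ofReal (φ x)
      = ∫⁻ x, liminf (fun y => ENNReal.ofReal (w y x * φ x)) atTop :=
        lintegral_congr fun x => (limits x).liminf_eq.symm
    _ ≤ liminf (fun y => ∫⁻ x, ENNReal.ofReal (w y x * φ x)) atTop :=
        lintegral_liminf_le fun y => ((hwm y).mul hφ).ennreal_ofReal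
    _ ≤ liminf (fun y : ℝ => (∫⁻ x, ENNReal.ofReal (ψ x))
          + ENNReal.ofReal (Real.pi * (y * (H (y * Complex.I)).re))) atTop := by
        refine liminf_le_liminf ?_
        filter_upwards [eventually_gt_atTop 0] with y hy
          using hH.lintegral_weight_mul_le hφ0 hψ0 hle hψ_int hy
    _ = (∫⁻ x, ENNReal.ofReal (ψ x)) + ENNReal.ofReal (Real.pi * A) :=
        (tendsto_const_nhds.add (ENNReal.tendsto_ofReal (hA.const_mul _))).liminf_eq

end

variable {w : ℂ → ℂ} {L : ℂ}

/-- Apply the comparison to `Re (-w²) = (Im w)² - (Re w)²`. -/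
lemma lintegral_im_sq_le (hw : HolomorphicUpperHalfPlane w 0)
    (hL : Tendsto (fun y : ℝ => y * w (y * Complex.I)) atTop (𝓝 L)) :
    ∫⁻ x : ℝ, ENNReal.ofReal ((w x).im ^ 2) ≤ ∫⁻ x : ℝ, ENNReal.ofReal ((w x).re ^ 2) := by
  have hH : HolomorphicUpperHalfPlane (fun z => -(w z * w z)) 0 :=
    { differentiableAt := fun z hz =>
        ((hw.differentiableAt z hz).mul (hw.differentiableAt z hz)).neg
      tendsto := by simpa using (hw.tendsto.mul hw.tendsto).neg }
  have hA : Tendsto (fun y : ℝ => y * (-(w (y * Complex.I) * w (y * Complex.I))).re) atTop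
      (𝓝 0) := by
    have := (Complex.continuous_re.tendsto _).comp (hL.mul hw.tendsto_mul_I).neg
    simp only [mul_zero, neg_zero, Complex.zero_re] at this
    refine this.congr fun y => ?_
    rw [Function.comp_apply, mul_assoc, ← mul_neg, Complex.re_ofReal_mul]
  have key := hH.lintegral_le_lintegral_add (φ := fun x : ℝ => (w x).im ^ 2)
    (ψ := fun x : ℝ => (w x).re ^ 2) (fun _ => sq_nonneg _) (fun _ => sq_nonneg _)
    (fun x => by simp only [Complex.neg_re, Complex.mul_re]; linarith) hA
    (Complex.measurable_im.comp hw.continuous_ofReal.measurable |>.pow_const 2)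
    (Complex.measurable_re.comp hw.continuous_ofReal.measurable |>.pow_const 2)
  simpa using key

/-- The map `ζ ↦ ζ / (ζ + r)` sends the right half-plane into itself and its points outside the disc
of radius `r` into `{1/2 ≤ Re}`; apply the comparison to `w / (w + r)`. -/
lemma volume_lt_abs_im_le (hw : HolomorphicUpperHalfPlane w 0)
    (hL : Tendsto (fun y : ℝ => y * w (y * Complex.I)) atTop (𝓝 L))
    (hre : ∀ z : ℂ, 0 ≤ z.im → 0 ≤ (w z).re) {r : ℝ} (hr : 0 < r) :
    volume {x : ℝ | r < |(w x).im|} ≤ ENNReal.ofReal (2 * Real.pi * L.re / r) := by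
  set S : Set ℝ := {x : ℝ | r < |(w x).im|}
  have hS : MeasurableSet S := measurableSet_lt measurable_const
    (continuous_abs.measurable.comp (Complex.measurable_im.comp hw.continuous_ofReal.measurable))
  have hr' : (0 : ℂ) + r ≠ 0 := by simpa using hr.ne'
  have hH : HolomorphicUpperHalfPlane (fun z => w z / (w z + r)) 0 :=
    { differentiableAt := fun z hz => (hw.differentiableAt z hz).div
        ((hw.differentiableAt z hz).add_const _) (add_ofReal_ne_zero (hre z hz) hr)
      tendsto := by simpa [Pi.div_def] using hw.tendsto.div (hw.tendsto.add_const _) hr' }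
  have hA : Tendsto (fun y : ℝ => y * (w (y * Complex.I) / (w (y * Complex.I) + r)).re) atTop
      (𝓝 (L.re / r)) := by
    have := (Complex.continuous_re.tendsto _).comp
      (hL.div (hw.tendsto_mul_I.add_const (r : ℂ)) hr')
    rw [zero_add, Complex.div_ofReal_re] at this
    refine this.congr fun y => ?_
    rw [Function.comp_apply, Pi.div_apply, mul_div_assoc, Complex.re_ofReal_mul]
  have hhalf (x : ℝ) : S.indicator (fun _ => (2 : ℝ)⁻¹) x ≤ (w x / (w x + r)).re + 0 := by
    rw [add_zero]
    have hx0 := hre x (by simp)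
    by_cases hx : x ∈ S
    · rw [indicator_of_mem hx]
      exact inv_two_le_re_div_add hx0 hr hx.le
    · rw [indicator_of_notMem hx]
      exact re_div_add_nonneg hx0 hr
  have key := hH.lintegral_le_lintegral_add (φ := S.indicator fun _ => (2 : ℝ)⁻¹) (ψ := fun _ => 0)
    (fun x => indicator_nonneg (fun _ _ => by norm_num) x) (fun _ => le_rfl) hhalf hA
    (measurable_const.indicator hS) measurable_const
  have hconst (x : ℝ) : ENNReal.ofReal (S.indicator (fun _ => (2 : ℝ)⁻¹) x)
      = S.indicator (fun _ => (2 : ℝ≥0∞)⁻¹) x := by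
    by_cases hx : x ∈ S <;> simp [hx, ENNReal.ofReal_inv_of_pos]
  rw [lintegral_congr hconst, lintegral_indicator_const hS,
    lintegral_congr fun _ => ENNReal.ofReal_zero, lintegral_zero, zero_add,
    ENNReal.inv_mul_le_iff (by simp) (by simp)] at key
  refine key.trans_eq ?_
  rw [← ENNReal.ofReal_ofNat 2, ← ENNReal.ofReal_mul (by norm_num)]
  ring_nf

end HolomorphicUpperHalfPlane

/-! ### The Cauchy integral and the conjugate Poisson integral -/

/-- The conjugate Poisson kernel `Q_y(s) = s / (π (s² + y²))` of the upper half-plane. -/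
def conjPoissonKer (y s : ℝ) : ℝ := s / (s ^ 2 + y ^ 2) / Real.pi

/-- The Poisson integral `P_y * f`. -/
def poissonInt (y : ℝ) (f : ℝ → ℝ) (x : ℝ) : ℝ := ∫ t, f t * poissonKer y (x - t)

/-- The conjugate Poisson integral `Q_y * f`, a regularisation of the Hilbert transform of `f`. -/
def conjPoissonInt (y : ℝ) (f : ℝ → ℝ) (x : ℝ) : ℝ := ∫ t, f t * conjPoissonKer y (x - t)

/-- The Cauchy integral of `f`, normalised so that its real and imaginary parts on the line
`Im z = y` are the Poisson and the conjugate Poisson integrals of `f`. -/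
def cauchyInt (f : ℝ → ℝ) (z : ℂ) : ℂ := ∫ t, (f t : ℂ) * (Complex.I / Real.pi / (z - t))

@[fun_prop]
lemma measurable_conjPoissonKer (y : ℝ) : Measurable (conjPoissonKer y) := by
  unfold conjPoissonKer; fun_prop

@[fun_prop]
lemma measurable_poissonKer (y : ℝ) : Measurable (poissonKer y) := by
  unfold poissonKer; fun_prop

lemma im_le_norm_sub_ofReal (z : ℂ) (t : ℝ) : z.im ≤ ‖z - t‖ := by
  simpa using (le_abs_self _).trans (Complex.abs_im_le_norm (z - t))

lemma sub_ofReal_ne_zero {z : ℂ} (hz : 0 < z.im) (t : ℝ) : z - t ≠ 0 :=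
  norm_pos_iff.1 (hz.trans_le (im_le_norm_sub_ofReal z t))

lemma norm_I_div_pi_le_one : ‖(Complex.I / Real.pi : ℂ)‖ ≤ 1 := by
  rw [norm_div, Complex.norm_I, Complex.norm_real, Real.norm_of_nonneg Real.pi_pos.le]
  exact div_le_one_of_le₀ (by linarith [Real.pi_gt_three]) Real.pi_pos.le

lemma norm_cauchyKer_le {z : ℂ} {r : ℝ} (hr : 0 < r) (hz : r ≤ z.im) (t : ℝ) :
    ‖Complex.I / Real.pi / (z - t)‖ ≤ r⁻¹ := by
  rw [norm_div, div_eq_mul_inv]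
  exact (mul_le_of_le_one_left (by positivity) norm_I_div_pi_le_one).trans
    (inv_anti₀ hr (hz.trans (im_le_norm_sub_ofReal z t)))

lemma cauchyKer_eq {y : ℝ} (hy : 0 < y) (x t : ℝ) :
    Complex.I / Real.pi / ((x : ℂ) + y * Complex.I - t)
      = (poissonKer y (x - t) : ℂ) + (conjPoissonKer y (x - t) : ℂ) * Complex.I := by
  have h1 : (x : ℂ) + y * Complex.I - t ≠ 0 := sub_ofReal_ne_zero (by simpa using hy) t
  have h2 : ((x : ℂ) - t) ^ 2 + y ^ 2 ≠ 0 := by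
    exact_mod_cast (by positivity : (x - t) ^ 2 + y ^ 2 ≠ 0)
  have h3 : (Real.pi : ℂ) ≠ 0 := by exact_mod_cast Real.pi_pos.ne'
  rw [poissonKer, conjPoissonKer, div_eq_iff h1]
  push_cast
  field_simp
  linear_combination (-((x : ℂ) - t) * y) * Complex.I_sq

section

variable {f : ℝ → ℝ}

lemma integrable_mul_cauchyKer (hf : Integrable f) {z : ℂ} (hz : 0 < z.im) :
    Integrable fun t : ℝ => (f t : ℂ) * (Complex.I / Real.pi / (z - t)) :=
  hf.ofReal.mul_bdd (Measurable.aestronglyMeasurable (by fun_prop))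
    (ae_of_all _ fun t => norm_cauchyKer_le hz le_rfl t)

lemma differentiableAt_cauchyInt (hf : Integrable f) {z : ℂ} (hz : 0 < z.im) :
    DifferentiableAt ℂ (cauchyInt f) z := by
  have hs : {w : ℂ | z.im / 2 < w.im} ∈ 𝓝 z :=
    (isOpen_lt continuous_const Complex.continuous_im).mem_nhds (half_lt_self hz)
  refine (hasDerivAt_integral_of_dominated_loc_of_deriv_le (μ := volume)
    (F' := fun (w : ℂ) (t : ℝ) => (f t : ℂ) * (-(Complex.I / Real.pi) / (w - t) ^ 2))
    (bound := fun t => ‖f t‖ * ((z.im / 2)⁻¹ * (z.im / 2)⁻¹)) hs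
    (Eventually.of_forall fun w => ?_) (integrable_mul_cauchyKer hf hz) ?_ ?_
    (hf.norm.mul_const _) ?_).2.differentiableAt
  · exact hf.ofReal.1.mul (Measurable.aestronglyMeasurable (by fun_prop))
  · exact hf.ofReal.1.mul (Measurable.aestronglyMeasurable (by fun_prop))
  · refine ae_of_all _ fun t w hw => ?_
    rw [norm_mul, Complex.norm_real, neg_div, norm_neg, sq, ← div_div, norm_div,
      div_eq_mul_inv ‖_‖]
    gcongr
    · exact norm_cauchyKer_le (half_pos hz) hw.le t
    · exact hw.le.trans (im_le_norm_sub_ofReal w t)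
  · refine ae_of_all _ fun t w hw => ?_
    have hne := sub_ofReal_ne_zero ((half_pos hz).trans hw) t
    refine (((hasDerivAt_const w (Complex.I / Real.pi : ℂ)).div
      ((hasDerivAt_id w).sub_const (t : ℂ)) hne).const_mul (f t : ℂ)).congr_deriv ?_
    simp only [id_eq]
    ring

lemma holomorphicUpperHalfPlane_cauchyInt (hf : Integrable f) {ε : ℝ} (hε : 0 < ε) :
    HolomorphicUpperHalfPlane (fun z => cauchyInt f (z + ε * Complex.I)) 0 where
  differentiableAt z hz := by
    have h : DifferentiableAt ℂ (cauchyInt f) (z + ε * Complex.I) :=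
      differentiableAt_cauchyInt hf (by simpa using add_pos_of_nonneg_of_pos hz hε)
    exact DifferentiableAt.comp (g := cauchyInt f) z h (by fun_prop)
  tendsto := by
    have : (Bornology.cobounded ℂ).IsCountablyGenerated := by
      rw [← comap_norm_atTop]; infer_instance
    rw [← integral_zero ℝ ℂ (μ := volume)]
    refine tendsto_integral_filter_of_dominated_convergence (fun t => ‖f t‖ * ε⁻¹)
      (Eventually.of_forall fun z => hf.ofReal.1.mul
        (Measurable.aestronglyMeasurable (by fun_prop))) ?_ (hf.norm.mul_const _)
      (ae_of_all _ fun t => ?_)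
    · filter_upwards [mem_inf_of_right (mem_principal_self _)] with z hz
      refine ae_of_all _ fun t => ?_
      rw [norm_mul, Complex.norm_real]
      gcongr
      exact norm_cauchyKer_le hε (by simpa using hz) t
    · have h := tendsto_inv₀_cobounded.comp (tendsto_add_const_cobounded (ε * Complex.I - t))
      have := ((h.const_mul (Complex.I / Real.pi : ℂ)).const_mul (f t : ℂ)).mono_left
        (inf_le_left (b := 𝓟 {z : ℂ | 0 ≤ z.im}))
      simpa [div_eq_mul_inv, add_sub_assoc] using this

lemma tendsto_mul_cauchyInt (hf : Integrable f) {ε : ℝ} (hε : 0 < ε) :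
    Tendsto (fun y : ℝ => y * cauchyInt f (y * Complex.I + ε * Complex.I)) atTop
      (𝓝 (((∫ t, f t) / Real.pi : ℝ) : ℂ)) := by
  have hval : (((∫ t, f t) / Real.pi : ℝ) : ℂ) = ∫ t, (f t : ℂ) * (Real.pi : ℂ)⁻¹ := by
    rw [integral_mul_const, integral_complex_ofReal, Complex.ofReal_div, div_eq_mul_inv]
  simp only [cauchyInt, hval, ← integral_const_mul]
  refine tendsto_integral_filter_of_dominated_convergence (fun t => ‖f t‖)
    (Eventually.of_forall fun y => (hf.ofReal.1.mul
      (Measurable.aestronglyMeasurable (by fun_prop))).const_mul _) ?_ hf.norm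
      (ae_of_all _ fun t => ?_)
  · filter_upwards [eventually_gt_atTop 0] with y hy
    refine ae_of_all _ fun t => ?_
    rw [mul_left_comm, norm_mul, Complex.norm_real, norm_mul, Complex.norm_real,
      Real.norm_of_nonneg hy.le]
    refine mul_le_of_le_one_right (norm_nonneg _) ?_
    rw [← inv_mul_cancel₀ hy.ne', mul_comm]
    gcongr
    exact norm_cauchyKer_le hy (by simpa using hε.le) t
  · have hquot : Tendsto (fun y : ℝ => (Complex.I + (ε * Complex.I - t) / y)⁻¹) atTop
        (𝓝 (Complex.I + 0)⁻¹) := by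
      refine (tendsto_const_nhds.add ?_).inv₀ (by simp)
      have : Tendsto (fun y : ℝ => ((y⁻¹ : ℝ) : ℂ)) atTop (𝓝 ((0 : ℝ) : ℂ)) :=
        (Complex.continuous_ofReal.tendsto 0).comp tendsto_inv_atTop_zero
      simpa [div_eq_mul_inv] using this.const_mul (ε * Complex.I - t)
    have hlim := (hquot.const_mul (Complex.I / Real.pi : ℂ)).const_mul (f t : ℂ)
    have hI : Complex.I / Real.pi * (Complex.I + 0)⁻¹ = (Real.pi : ℂ)⁻¹ := by
      rw [add_zero, div_mul_eq_mul_div, mul_inv_cancel₀ Complex.I_ne_zero, one_div]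
    rw [hI] at hlim
    refine hlim.congr' ?_
    filter_upwards [eventually_gt_atTop 0] with y hy
    have hy' : (y : ℂ) ≠ 0 := by exact_mod_cast hy.ne'
    have hsum : Complex.I + (ε * Complex.I - t) / y
        = (y * Complex.I + ε * Complex.I - t) / y := by field_simp; ring
    rw [hsum, inv_div]
    ring

lemma integrable_mul_poissonKer (hf : Integrable f) {ε : ℝ} (hε : 0 < ε) (x : ℝ) :
    Integrable fun t => f t * poissonKer ε (x - t) := by
  refine (integrable_mul_cauchyKer hf (z := x + ε * Complex.I) (by simpa using hε)).re.congr
    (ae_of_all _ fun t => ?_)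
  simp [cauchyKer_eq hε]

lemma cauchyInt_re (hf : Integrable f) {ε : ℝ} (hε : 0 < ε) (x : ℝ) :
    (cauchyInt f (x + ε * Complex.I)).re = poissonInt ε f x := by
  refine (integral_re (integrable_mul_cauchyKer hf (z := x + ε * Complex.I)
    (by simpa using hε))).symm.trans (integral_congr_ae (ae_of_all _ fun t => ?_))
  simp [cauchyKer_eq hε]

lemma cauchyInt_im (hf : Integrable f) {ε : ℝ} (hε : 0 < ε) (x : ℝ) :
    (cauchyInt f (x + ε * Complex.I)).im = conjPoissonInt ε f x := by
  refine (integral_im (integrable_mul_cauchyKer hf (z := x + ε * Complex.I)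
    (by simpa using hε))).symm.trans (integral_congr_ae (ae_of_all _ fun t => ?_))
  simp [cauchyKer_eq hε]

lemma continuous_conjPoissonInt (hf : Integrable f) {ε : ℝ} (hε : 0 < ε) :
    Continuous (conjPoissonInt ε f) :=
  (Complex.continuous_im.comp (holomorphicUpperHalfPlane_cauchyInt hf hε).continuous_ofReal).congr
    (cauchyInt_im hf hε)

lemma conjPoissonInt_add (hf : Integrable f) {δ ε : ℝ} (hδ : 0 < δ) (hε : 0 < ε) (x : ℝ) :
    Integrable (fun t => poissonKer δ (x - t) * conjPoissonInt ε f t) ∧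
      ∫ t, poissonKer δ (x - t) * conjPoissonInt ε f t = conjPoissonInt (δ + ε) f x := by
  obtain ⟨hint, hval⟩ :=
    (holomorphicUpperHalfPlane_cauchyInt hf hε).integral_poissonKer_smul x hδ
  have him (t : ℝ) : (poissonKer δ (x - t) • cauchyInt f (t + ε * Complex.I)).im
      = poissonKer δ (x - t) * conjPoissonInt ε f t := by
    rw [Complex.smul_im, smul_eq_mul, cauchyInt_im hf hε]
  rw [add_assoc, ← add_mul, ← Complex.ofReal_add] at hval
  refine ⟨by simpa only [RCLike.im_eq_complex_im, him] using hint.im, ?_⟩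
  rw [← cauchyInt_im hf (add_pos hδ hε), ← hval]
  simpa only [RCLike.im_eq_complex_im, him] using integral_im hint

lemma lintegral_conjPoissonInt_sq_le (hf : Integrable f) {ε : ℝ} (hε : 0 < ε) :
    ∫⁻ x, ENNReal.ofReal (conjPoissonInt ε f x ^ 2)
      ≤ ∫⁻ x, ENNReal.ofReal (poissonInt ε f x ^ 2) := by
  simpa only [cauchyInt_re hf hε, cauchyInt_im hf hε] using
    (holomorphicUpperHalfPlane_cauchyInt hf hε).lintegral_im_sq_le (tendsto_mul_cauchyInt hf hε)

lemma lintegral_conjPoissonInt_sub_sq_le (hf : Integrable f) {ε δ : ℝ} (hε : 0 < ε) (hδ : 0 < δ) :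
    ∫⁻ x, ENNReal.ofReal ((conjPoissonInt ε f x - conjPoissonInt δ f x) ^ 2)
      ≤ ∫⁻ x, ENNReal.ofReal ((poissonInt ε f x - poissonInt δ f x) ^ 2) := by
  have hw := (holomorphicUpperHalfPlane_cauchyInt hf hε).sub
    (holomorphicUpperHalfPlane_cauchyInt hf hδ)
  rw [sub_zero] at hw
  have hL := (tendsto_mul_cauchyInt hf hε).sub (tendsto_mul_cauchyInt hf hδ)
  simp only [← mul_sub] at hL
  simpa only [Complex.sub_re, Complex.sub_im, cauchyInt_re hf hε, cauchyInt_im hf hε,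
    cauchyInt_re hf hδ, cauchyInt_im hf hδ] using hw.lintegral_im_sq_le hL

end

lemma poissonInt_nonneg {f : ℝ → ℝ} (hf0 : ∀ t, 0 ≤ f t) {ε : ℝ} (hε : 0 ≤ ε) (x : ℝ) :
    0 ≤ poissonInt ε f x :=
  integral_nonneg fun t => mul_nonneg (hf0 t) (poissonKer_nonneg hε _)

lemma volume_lt_abs_conjPoissonInt_le {f : ℝ → ℝ} (hf : Integrable f) (hf0 : ∀ t, 0 ≤ f t)
    {ε : ℝ} (hε : 0 < ε) {r : ℝ} (hr : 0 < r) :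
    volume {x : ℝ | r < |conjPoissonInt ε f x|} ≤ ENNReal.ofReal (2 * (∫ t, f t) / r) := by
  have hre (z : ℂ) (hz : 0 ≤ z.im) : 0 ≤ (cauchyInt f (z + ε * Complex.I)).re := by
    have him : 0 < z.im + ε := by positivity
    have : z + ε * Complex.I = (z.re : ℂ) + (z.im + ε : ℝ) * Complex.I := by
      conv_lhs => rw [← Complex.re_add_im z]
      push_cast
      ring
    rw [this, cauchyInt_re hf him]
    exact poissonInt_nonneg hf0 him.le _
  have key := (holomorphicUpperHalfPlane_cauchyInt hf hε).volume_lt_abs_im_le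
    (tendsto_mul_cauchyInt hf hε) hre hr
  simp only [cauchyInt_im hf hε, Complex.ofReal_re] at key
  rwa [mul_assoc, mul_div_cancel₀ _ Real.pi_pos.ne'] at key

lemma poissonInt_eq_convolution (f : ℝ → ℝ) (ε : ℝ) :
    poissonInt ε f = convolution f (poissonKer ε) (ContinuousLinearMap.mul ℝ ℝ) volume :=
  rfl

lemma integrable_poissonInt {f : ℝ → ℝ} (hf : Integrable f) {ε : ℝ} (hε : 0 < ε) :
    Integrable (poissonInt ε f) := by
  rw [poissonInt_eq_convolution]
  exact hf.integrable_convolution _ (integrable_poissonKer hε.ne')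

lemma integral_poissonInt {f : ℝ → ℝ} (hf : Integrable f) {ε : ℝ} (hε : 0 < ε) :
    ∫ x, poissonInt ε f x = ∫ t, f t := by
  rw [poissonInt_eq_convolution, integral_convolution _ hf (integrable_poissonKer hε.ne'),
    integral_poissonKer hε, ContinuousLinearMap.mul_apply', mul_one]

lemma poissonInt_le_one {f : ℝ → ℝ} (hf : Integrable f) (hf1 : ∀ t, f t ≤ 1) {ε : ℝ} (hε : 0 < ε)
    (x : ℝ) : poissonInt ε f x ≤ 1 := by
  have hker : Integrable fun t => poissonKer ε (x - t) :=
    (integrable_poissonKer hε.ne').comp_sub_left x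
  calc poissonInt ε f x ≤ ∫ t, poissonKer ε (x - t) := by
        exact integral_mono (integrable_mul_poissonKer hf hε x) hker fun t =>
          mul_le_of_le_one_left (poissonKer_nonneg hε.le _) (hf1 t)
    _ = 1 := by rw [integral_sub_left_eq_self (poissonKer ε), integral_poissonKer hε]

lemma lintegral_conjPoissonInt_sq_le_integral {f : ℝ → ℝ} (hf : Integrable f)
    (hf0 : ∀ t, 0 ≤ f t) (hf1 : ∀ t, f t ≤ 1) {ε : ℝ} (hε : 0 < ε) :
    ∫⁻ x, ENNReal.ofReal (conjPoissonInt ε f x ^ 2) ≤ ENNReal.ofReal (∫ t, f t) :=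
  calc ∫⁻ x, ENNReal.ofReal (conjPoissonInt ε f x ^ 2)
      ≤ ∫⁻ x, ENNReal.ofReal (poissonInt ε f x ^ 2) := lintegral_conjPoissonInt_sq_le hf hε
    _ ≤ ∫⁻ x, ENNReal.ofReal (poissonInt ε f x) := by
        gcongr with x
        have h0 := poissonInt_nonneg hf0 hε.le x
        exact pow_le_of_le_one h0 (poissonInt_le_one hf hf1 hε x) two_ne_zero
    _ = ENNReal.ofReal (∫ t, f t) := by
        rw [← integral_poissonInt hf hε, ofReal_integral_eq_lintegral_ofReal
          (integrable_poissonInt hf hε) (ae_of_all _ (poissonInt_nonneg hf0 hε.le))]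

lemma volume_lt_abs_conjPoissonInt_le_div_sq {f : ℝ → ℝ} (hf : Integrable f)
    (hf0 : ∀ t, 0 ≤ f t) (hf1 : ∀ t, f t ≤ 1) {ε : ℝ} (hε : 0 < ε) {r : ℝ} (hr : 0 < r) :
    volume {x : ℝ | r < |conjPoissonInt ε f x|} ≤ ENNReal.ofReal ((∫ t, f t) / r ^ 2) := by
  have hmeas : Measurable fun x => ENNReal.ofReal (conjPoissonInt ε f x ^ 2) :=
    ((continuous_conjPoissonInt hf hε).measurable.pow_const 2).ennreal_ofReal
  calc volume {x : ℝ | r < |conjPoissonInt ε f x|}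
      ≤ volume {x : ℝ | ENNReal.ofReal (r ^ 2) ≤ ENNReal.ofReal (conjPoissonInt ε f x ^ 2)} := by
        refine measure_mono fun x hx => ENNReal.ofReal_le_ofReal ?_
        rw [← sq_abs (conjPoissonInt ε f x)]
        exact pow_le_pow_left₀ hr.le (le_of_lt hx) 2
    _ ≤ (∫⁻ x, ENNReal.ofReal (conjPoissonInt ε f x ^ 2)) / ENNReal.ofReal (r ^ 2) :=
        meas_ge_le_lintegral_div hmeas.aemeasurable (by simpa using hr.ne') (by simp)
    _ ≤ ENNReal.ofReal ((∫ t, f t) / r ^ 2) := by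
        rw [ENNReal.ofReal_div_of_pos (by positivity)]
        gcongr
        exact lintegral_conjPoissonInt_sq_le_integral hf hf0 hf1 hε

/-! ### Lebesgue points and boundary values -/

section

variable {E : Type*} [NormedAddCommGroup E] {f : ℝ → E} {x : ℝ}

/-- The (unnormalised) mean oscillation of `f` about `f x` at scale `r`; the Lebesgue points of `f`
are the `x` for which it tends to `0` with `r`. -/
def meanOsc (f : ℝ → E) (x r : ℝ) : ℝ := r⁻¹ * ∫ t in Metric.closedBall x r, ‖f t - f x‖

lemma meanOsc_nonneg {r : ℝ} (hr : 0 ≤ r) : 0 ≤ meanOsc f x r :=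
  mul_nonneg (inv_nonneg.2 hr) (integral_nonneg fun _ => norm_nonneg _)

lemma ae_tendsto_meanOsc (hf : Integrable f) :
    ∀ᵐ x, Tendsto (meanOsc f x) (𝓝[>] 0) (𝓝 0) := by
  filter_upwards [(Besicovitch.vitaliFamily (volume : Measure ℝ)).ae_tendsto_average_norm_sub
    hf.locallyIntegrable] with x hx
  have h := (hx.comp (Besicovitch.tendsto_filterAt volume x)).const_mul 2
  rw [mul_zero] at h
  refine h.congr' ?_
  filter_upwards [self_mem_nhdsWithin] with r (hr : 0 < r)
  rw [Function.comp, setAverage_eq, measureReal_def, Real.volume_closedBall,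
    ENNReal.toReal_ofReal (by positivity), meanOsc, smul_eq_mul, mul_inv]
  ring

lemma integrableOn_closedBall_sub_const (hf : Integrable f) (c : E) (r : ℝ) :
    IntegrableOn (fun t => f t - c) (Metric.closedBall x r) :=
  hf.integrableOn.sub (integrableOn_const measure_closedBall_lt_top.ne)

lemma meanOsc_le (hf : Integrable f) {r : ℝ} (hr : 0 < r) :
    meanOsc f x r ≤ r⁻¹ * (∫ t, ‖f t‖) + 2 * ‖f x‖ := by
  have hconst : IntegrableOn (fun _ : ℝ => ‖f x‖) (Metric.closedBall x r) :=
    integrableOn_const measure_closedBall_lt_top.ne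
  have h : ∫ t in Metric.closedBall x r, ‖f t - f x‖ ≤ (∫ t, ‖f t‖) + 2 * r * ‖f x‖ :=
    calc ∫ t in Metric.closedBall x r, ‖f t - f x‖
        ≤ ∫ t in Metric.closedBall x r, (‖f t‖ + ‖f x‖) :=
          setIntegral_mono (integrableOn_closedBall_sub_const hf _ r).norm
            (hf.norm.integrableOn.add hconst) fun t => norm_sub_le _ _
      _ = (∫ t in Metric.closedBall x r, ‖f t‖) + 2 * r * ‖f x‖ := by
          rw [integral_add hf.norm.integrableOn hconst, setIntegral_const, measureReal_def,
            Real.volume_closedBall, ENNReal.toReal_ofReal (by positivity), smul_eq_mul]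
      _ ≤ (∫ t, ‖f t‖) + 2 * r * ‖f x‖ := by
          grw [setIntegral_le_integral hf.norm (ae_of_all _ fun t => norm_nonneg _)]
  calc meanOsc f x r ≤ r⁻¹ * ((∫ t, ‖f t‖) + 2 * r * ‖f x‖) := by unfold meanOsc; gcongr
    _ = r⁻¹ * (∫ t, ‖f t‖) + 2 * ‖f x‖ := by field_simp

lemma exists_meanOsc_le (hf : Integrable f) (hx : Tendsto (meanOsc f x) (𝓝[>] 0) (𝓝 0)) :
    ∃ M, ∀ r, 0 < r → meanOsc f x r ≤ M := by
  obtain ⟨r₀, hr₀, hsub⟩ := mem_nhdsGT_iff_exists_Ioc_subset.1 (hx.eventually_lt_const one_pos)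
  rw [mem_Ioi] at hr₀
  refine ⟨max 1 (r₀⁻¹ * (∫ t, ‖f t‖) + 2 * ‖f x‖), fun r hr => ?_⟩
  rcases le_or_gt r r₀ with h | h
  · exact le_max_of_le_left (hsub ⟨hr, h⟩).le
  · refine le_max_of_le_right ((meanOsc_le hf hr).trans ?_)
    have : 0 ≤ ∫ t, ‖f t‖ := integral_nonneg fun t => norm_nonneg _
    gcongr

lemma exists_dyadic_poissonKer_le {δ : ℝ} (hδ : 0 < δ) (s : ℝ) :
    ∃ k : ℕ, |s| ≤ 2 ^ k * δ ∧ poissonKer δ s ≤ 4 * (1 / 4) ^ k / δ := by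
  have hex : ∃ k : ℕ, |s| ≤ 2 ^ k * δ := by
    obtain ⟨k, hk⟩ := pow_unbounded_of_one_lt (|s| / δ) one_lt_two
    exact ⟨k, ((div_lt_iff₀ hδ).1 hk).le⟩
  classical
  have hpi : poissonKer δ s ≤ δ / (s ^ 2 + δ ^ 2) :=
    div_le_self (by positivity) (by linarith [Real.pi_gt_three])
  refine ⟨Nat.find hex, Nat.find_spec hex, hpi.trans ?_⟩
  rw [div_le_div_iff₀ (by positivity) hδ]
  rcases hk : Nat.find hex with _ | k
  · nlinarith [sq_nonneg s, sq_nonneg δ]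
  · have hmin : 2 ^ k * δ < |s| := not_le.1 (Nat.find_min hex (m := k) (by omega))
    have hsq : (2 ^ k * δ) ^ 2 ≤ s ^ 2 := by rw [← sq_abs s]; gcongr
    have hpow : (1 / 4 : ℝ) ^ k * (2 ^ k) ^ 2 = 1 := by
      rw [← pow_mul, mul_comm k 2, pow_mul, ← mul_pow]; norm_num
    calc δ * δ = (1 / 4) ^ k * (2 ^ k * δ) ^ 2 := by rw [mul_pow, ← mul_assoc, hpow]; ring
      _ ≤ (1 / 4) ^ k * (s ^ 2 + δ ^ 2) := by gcongr; linarith [sq_nonneg δ]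
      _ = 4 * (1 / 4) ^ (k + 1) * (s ^ 2 + δ ^ 2) := by ring

lemma lintegral_enorm_sub_mul_poissonKer_le (hf : Integrable f) {δ : ℝ} (hδ : 0 < δ) :
    ∫⁻ t, ‖f t - f x‖ₑ * ENNReal.ofReal (poissonKer δ (x - t))
      ≤ ∑' k : ℕ, ENNReal.ofReal (4 * (1 / 2 : ℝ) ^ k * meanOsc f x (2 ^ k * δ)) := by
  have hmeas (k : ℕ) : AEMeasurable fun t => ENNReal.ofReal (4 * (1 / 4) ^ k / δ) *
      (Metric.closedBall x (2 ^ k * δ)).indicator (fun t => ‖f t - f x‖ₑ) t :=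
    ((hf.1.sub aestronglyMeasurable_const).enorm.indicator
      measurableSet_closedBall).const_mul _
  calc ∫⁻ t, ‖f t - f x‖ₑ * ENNReal.ofReal (poissonKer δ (x - t))
      ≤ ∫⁻ t, ∑' k : ℕ, ENNReal.ofReal (4 * (1 / 4) ^ k / δ) *
          (Metric.closedBall x (2 ^ k * δ)).indicator (fun t => ‖f t - f x‖ₑ) t := by
        refine lintegral_mono fun t => ?_
        obtain ⟨k, hk, hle⟩ := exists_dyadic_poissonKer_le hδ (x - t)
        refine le_trans ?_ (ENNReal.le_tsum k)
        rw [indicator_of_mem (by rwa [Metric.mem_closedBall, dist_comm, Real.dist_eq]), mul_comm]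
        gcongr
    _ = ∑' k : ℕ, ENNReal.ofReal (4 * (1 / 2 : ℝ) ^ k * meanOsc f x (2 ^ k * δ)) := by
        rw [lintegral_tsum hmeas]
        refine tsum_congr fun k => ?_
        rw [lintegral_const_mul' _ _ ENNReal.ofReal_ne_top,
          lintegral_indicator measurableSet_closedBall, ← ofReal_integral_norm_eq_lintegral_enorm
            (integrableOn_closedBall_sub_const hf _ _), ← ENNReal.ofReal_mul (by positivity),
          meanOsc]
        have hpow : (1 / 2 : ℝ) ^ k = (1 / 4) ^ k * 2 ^ k := by rw [← mul_pow]; norm_num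
        rw [hpow]
        congr 1
        field_simp

lemma tendsto_lintegral_enorm_sub_mul_poissonKer (hf : Integrable f)
    (hx : Tendsto (meanOsc f x) (𝓝[>] 0) (𝓝 0)) :
    Tendsto (fun δ : ℝ => ∫⁻ t, ‖f t - f x‖ₑ * ENNReal.ofReal (poissonKer δ (x - t)))
      (𝓝[>] 0) (𝓝 0) := by
  obtain ⟨M, hM⟩ := exists_meanOsc_le hf hx
  have hsum : Summable fun k : ℕ => 4 * (1 / 2 : ℝ) ^ k * M :=
    (summable_geometric_two.mul_left 4).mul_right M
  have hterm {δ : ℝ} (hδ : 0 < δ) (k : ℕ) : 0 ≤ 4 * (1 / 2 : ℝ) ^ k * meanOsc f x (2 ^ k * δ) ∧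
      4 * (1 / 2 : ℝ) ^ k * meanOsc f x (2 ^ k * δ) ≤ 4 * (1 / 2 : ℝ) ^ k * M := by
    have h0 : 0 ≤ meanOsc f x (2 ^ k * δ) := meanOsc_nonneg (by positivity)
    exact ⟨by positivity, by gcongr; exact hM _ (by positivity)⟩
  have hscale (k : ℕ) : Tendsto (fun δ : ℝ => 2 ^ k * δ) (𝓝[>] 0) (𝓝[>] 0) := by
    refine tendsto_nhdsWithin_of_tendsto_nhds_of_eventually_within _
      (Continuous.tendsto' (by fun_prop) _ _ (mul_zero _) |>.mono_left nhdsWithin_le_nhds) ?_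
    filter_upwards [self_mem_nhdsWithin] with δ (hδ : 0 < δ)
    exact mul_pos (by positivity) hδ
  have hreal : Tendsto (fun δ : ℝ => ∑' k : ℕ, 4 * (1 / 2 : ℝ) ^ k * meanOsc f x (2 ^ k * δ))
      (𝓝[>] 0) (𝓝 (∑' _ : ℕ, (0 : ℝ))) := by
    refine tendsto_tsum_of_dominated_convergence hsum
      (fun k => by simpa using (hx.comp (hscale k)).const_mul (4 * (1 / 2 : ℝ) ^ k)) ?_
    filter_upwards [self_mem_nhdsWithin] with δ hδ k
    rw [Real.norm_of_nonneg (hterm hδ k).1]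
    exact (hterm hδ k).2
  have henn := ENNReal.tendsto_ofReal hreal
  rw [tsum_zero, ENNReal.ofReal_zero] at henn
  refine tendsto_of_tendsto_of_tendsto_of_le_of_le' tendsto_const_nhds henn
    (Eventually.of_forall fun _ => zero_le) ?_
  filter_upwards [self_mem_nhdsWithin] with δ (hδ : 0 < δ)
  rw [ENNReal.ofReal_tsum_of_nonneg (fun k => (hterm hδ k).1)
    (hsum.of_nonneg_of_le (fun k => (hterm hδ k).1) fun k => (hterm hδ k).2)]
  exact lintegral_enorm_sub_mul_poissonKer_le hf hδ

end

lemma poissonKer_le_inv {y : ℝ} (hy : 0 < y) (s : ℝ) : poissonKer y s ≤ y⁻¹ := by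
  have hpi : poissonKer y s ≤ y / (s ^ 2 + y ^ 2) :=
    div_le_self (by positivity) (by linarith [Real.pi_gt_three])
  refine hpi.trans ?_
  rw [← one_div, div_le_div_iff₀ (by positivity) hy]
  nlinarith [sq_nonneg s]

lemma tendsto_integral_mul_of_abs_le_poissonKer {f : ℝ → ℝ} (hf : Integrable f) {x : ℝ}
    (hx : Tendsto (meanOsc f x) (𝓝[>] 0) (𝓝 0)) {m : ℝ → ℝ → ℝ} (hm : ∀ δ, Measurable (m δ))
    (hle : ∀ δ s, 0 < δ → |m δ s| ≤ poissonKer δ s) {c : ℝ} (hc : ∀ δ, 0 < δ → ∫ s, m δ s = c) :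
    Tendsto (fun δ => ∫ t, f t * m δ (x - t)) (𝓝[>] 0) (𝓝 (f x * c)) := by
  have hdiff : Tendsto (fun δ => ∫ t, (f t - f x) * m δ (x - t)) (𝓝[>] 0) (𝓝 0) := by
    rw [tendsto_zero_iff_enorm_tendsto_zero]
    refine tendsto_of_tendsto_of_tendsto_of_le_of_le' tendsto_const_nhds
      (tendsto_lintegral_enorm_sub_mul_poissonKer hf hx) (Eventually.of_forall fun _ => zero_le) ?_
    filter_upwards [self_mem_nhdsWithin] with δ hδ
    refine (enorm_integral_le_lintegral_enorm _).trans (lintegral_mono fun t => ?_)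
    rw [enorm_mul, Real.enorm_eq_ofReal_abs (m δ _)]
    gcongr
    exact hle δ _ hδ
  have hsum := hdiff.add_const (f x * c)
  rw [zero_add] at hsum
  refine hsum.congr' ?_
  filter_upwards [self_mem_nhdsWithin] with δ (hδ : 0 < δ)
  have hint : Integrable (m δ) :=
    (integrable_poissonKer hδ.ne').mono' (hm δ).aestronglyMeasurable
      (ae_of_all _ fun s => hle δ s hδ)
  have hfm : Integrable fun t => f t * m δ (x - t) :=
    hf.mul_bdd (c := δ⁻¹) ((hm δ).comp (measurable_const.sub measurable_id)).aestronglyMeasurable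
      (ae_of_all _ fun t => (hle δ _ hδ).trans (poissonKer_le_inv hδ _))
  simp_rw [sub_mul]
  rw [integral_sub hfm ((hint.comp_sub_left x).const_mul _), integral_const_mul,
    integral_sub_left_eq_self (m δ), hc δ hδ]
  ring

lemma tendsto_poissonInt {f : ℝ → ℝ} (hf : Integrable f) {x : ℝ}
    (hx : Tendsto (meanOsc f x) (𝓝[>] 0) (𝓝 0)) :
    Tendsto (fun δ => poissonInt δ f x) (𝓝[>] 0) (𝓝 (f x)) := by
  have h := tendsto_integral_mul_of_abs_le_poissonKer hf hx measurable_poissonKer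
    (fun δ s hδ => (abs_of_nonneg (poissonKer_nonneg hδ.le s)).le) fun δ => integral_poissonKer
  rwa [mul_one] at h

lemma poissonKer_sub_le {δ : ℝ} (hδ : 0 < δ) (x t : ℝ) :
    poissonKer δ (x - t) ≤ ((1 + 2 * x ^ 2) / δ + 2 * δ) * poissonKer 1 t := by
  unfold poissonKer
  rw [← mul_div_assoc, div_le_div_iff_of_pos_right Real.pi_pos, mul_one_div,
    div_le_div_iff₀ (by positivity) (by positivity), one_pow]
  calc δ * (t ^ 2 + 1) ≤ δ * (1 + 2 * x ^ 2 + 2 * (x - t) ^ 2) := by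
        exact mul_le_mul_of_nonneg_left (by nlinarith [sq_nonneg (t - 2 * x)]) hδ.le
    _ ≤ δ * (1 + 2 * x ^ 2 + 2 * (x - t) ^ 2)
          + ((1 + 2 * x ^ 2) / δ * (x - t) ^ 2 + 2 * δ * δ ^ 2) := by
        linarith [(by positivity : 0 ≤ (1 + 2 * x ^ 2) / δ * (x - t) ^ 2 + 2 * δ * δ ^ 2)]
    _ = ((1 + 2 * x ^ 2) / δ + 2 * δ) * ((x - t) ^ 2 + δ ^ 2) := by field_simp; ring

lemma poissonKer_sub_le_of_one_le {δ : ℝ} (hδ : 0 < δ) {x t : ℝ} (hxt : 1 ≤ |x - t|) :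
    poissonKer δ (x - t) ≤ δ * (3 + 2 * x ^ 2) * poissonKer 1 t := by
  have h1 : 1 ≤ (x - t) ^ 2 := by rw [← sq_abs]; exact one_le_pow₀ hxt
  unfold poissonKer
  rw [← mul_div_assoc, div_le_div_iff_of_pos_right Real.pi_pos, mul_one_div,
    div_le_div_iff₀ (by positivity) (by positivity), one_pow, mul_assoc]
  gcongr
  calc t ^ 2 + 1 ≤ 1 + 2 * x ^ 2 + 2 * (x - t) ^ 2 := by nlinarith [sq_nonneg (t - 2 * x)]
    _ ≤ (3 + 2 * x ^ 2) * (x - t) ^ 2 := by nlinarith [mul_nonneg (sq_nonneg x) (sub_nonneg.2 h1)]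
    _ ≤ (3 + 2 * x ^ 2) * ((x - t) ^ 2 + δ ^ 2) := by gcongr; linarith [sq_nonneg δ]

section

variable {g : ℝ → ℝ}

lemma aestronglyMeasurable_of_mul_poissonKer (hg : Integrable fun t => g t * poissonKer 1 t) :
    AEStronglyMeasurable g := by
  have h := hg.1.mul ((measurable_poissonKer 1).inv.aestronglyMeasurable)
  refine h.congr (ae_of_all _ fun t => ?_)
  have hpos : poissonKer 1 t ≠ 0 := by unfold poissonKer; positivity
  simp [hpos]

lemma integrable_mul_of_abs_le_poissonKer (hg : Integrable fun t => g t * poissonKer 1 t)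
    {k : ℝ → ℝ} (hk : Measurable k) {C : ℝ} (hle : ∀ t, |k t| ≤ C * poissonKer 1 t) :
    Integrable fun t => g t * k t := by
  refine (hg.norm.const_mul C).mono' ((aestronglyMeasurable_of_mul_poissonKer hg).mul
    hk.aestronglyMeasurable) (ae_of_all _ fun t => ?_)
  rw [norm_mul, norm_mul, Real.norm_of_nonneg (poissonKer_nonneg zero_le_one t), mul_left_comm]
  exact mul_le_mul_of_nonneg_left (hle t) (norm_nonneg _)

lemma integrable_indicator_of_mul_poissonKer (hg : Integrable fun t => g t * poissonKer 1 t)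
    (r : ℝ) : Integrable ((Metric.ball 0 r).indicator g) := by
  refine (hg.norm.const_mul (Real.pi * (r ^ 2 + 1))).mono'
    ((aestronglyMeasurable_of_mul_poissonKer hg).indicator measurableSet_ball)
    (ae_of_all _ fun t => ?_)
  by_cases ht : t ∈ Metric.ball 0 r
  · have hsq : t ^ 2 ≤ r ^ 2 := by
      have h : ‖t‖ ≤ r := (mem_ball_zero_iff.1 ht).le
      simpa using pow_le_pow_left₀ (norm_nonneg t) h 2
    have hone : 1 ≤ Real.pi * (r ^ 2 + 1) * poissonKer 1 t := by
      rw [poissonKer, one_pow, div_div, mul_one_div, mul_comm, one_le_div (by positivity)]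
      gcongr
    rw [indicator_of_mem ht, norm_mul, Real.norm_of_nonneg (poissonKer_nonneg zero_le_one t),
      mul_left_comm]
    exact le_mul_of_one_le_right (norm_nonneg _) hone
  · rw [indicator_of_notMem ht, norm_zero]
    positivity

lemma tendsto_integral_far (hg : Integrable fun t => g t * poissonKer 1 t) (x r : ℝ)
    (hr : |x| + 1 ≤ r) :
    Tendsto (fun δ => ∫ t, (Metric.ball 0 r)ᶜ.indicator g t * poissonKer δ (x - t))
      (𝓝[>] 0) (𝓝 0) := by
  have hlim : Tendsto (fun δ : ℝ => δ * (3 + 2 * x ^ 2) * ∫ t, ‖g t * poissonKer 1 t‖)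
      (𝓝[>] 0) (𝓝 0) :=
    (Continuous.tendsto' (by fun_prop) _ _ (by simp)).mono_left nhdsWithin_le_nhds
  refine squeeze_zero_norm' ?_ hlim
  filter_upwards [self_mem_nhdsWithin] with δ (hδ : 0 < δ)
  rw [← integral_const_mul]
  refine norm_integral_le_of_norm_le (hg.norm.const_mul _) (ae_of_all _ fun t => ?_)
  by_cases ht : t ∈ Metric.ball 0 r
  · simp only [indicator_of_notMem (notMem_compl_iff.2 ht), zero_mul, norm_zero]
    positivity
  · have hxt : 1 ≤ |x - t| := by
      rw [mem_ball_zero_iff, not_lt, Real.norm_eq_abs] at ht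
      linarith [abs_sub_abs_le_abs_sub t x, abs_sub_comm t x]
    rw [indicator_of_mem ht, norm_mul, norm_mul, Real.norm_of_nonneg (poissonKer_nonneg hδ.le _),
      Real.norm_of_nonneg (poissonKer_nonneg zero_le_one t), mul_left_comm]
    exact mul_le_mul_of_nonneg_left (poissonKer_sub_le_of_one_le hδ hxt) (norm_nonneg _)

lemma ae_tendsto_poissonInt (hg : Integrable fun t => g t * poissonKer 1 t) :
    ∀ᵐ x, Tendsto (fun δ => poissonInt δ g x) (𝓝[>] 0) (𝓝 (g x)) := by
  have hball (n : ℕ) := integrable_indicator_of_mul_poissonKer hg n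
  filter_upwards [ae_all_iff.2 fun n => ae_tendsto_meanOsc (hball n)] with x hx
  obtain ⟨n, hn⟩ := exists_nat_ge (|x| + 1)
  have hxn : x ∈ Metric.ball 0 (n : ℝ) := by
    rw [mem_ball_zero_iff, Real.norm_eq_abs]; linarith
  have hlim := (tendsto_poissonInt (hball n) (hx n)).add (tendsto_integral_far hg x n hn)
  rw [indicator_of_mem hxn, add_zero] at hlim
  refine hlim.congr' ?_
  filter_upwards [self_mem_nhdsWithin] with δ (hδ : 0 < δ)
  have hint : Integrable fun t => g t * poissonKer δ (x - t) :=
    integrable_mul_of_abs_le_poissonKer hg (by fun_prop) fun t =>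
      (abs_of_nonneg (poissonKer_nonneg hδ.le _)).trans_le (poissonKer_sub_le hδ x t)
  have hmul (s : Set ℝ) : (fun t => s.indicator g t * poissonKer δ (x - t))
      = s.indicator fun t => g t * poissonKer δ (x - t) :=
    funext fun t => (indicator_mul_left s g fun t => poissonKer δ (x - t)).symm
  rw [poissonInt, poissonInt, hmul, hmul, integral_indicator measurableSet_ball,
    integral_indicator measurableSet_ball.compl, integral_add_compl measurableSet_ball hint]

end

/-- The standard Cauchy distribution `dx / (π (1 + x²))`: convergence in `L¹` of this measure is
what passes to the limit under every Poisson kernel. -/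
abbrev stdCauchy : Measure ℝ := ProbabilityTheory.cauchyMeasure 0 1

lemma stdCauchy_eq_withDensity :
    stdCauchy = volume.withDensity fun s => ENNReal.ofReal (poissonKer 1 s) := by
  rw [stdCauchy, ProbabilityTheory.cauchyMeasure_of_scale_ne_zero 0 one_ne_zero]
  congr 1
  funext s
  rw [ProbabilityTheory.cauchyPDF_def, ProbabilityTheory.cauchyPDFReal_def, poissonKer]
  simp [div_eq_mul_inv, mul_comm]

lemma stdCauchy_le_volume : stdCauchy ≤ volume := by
  rw [stdCauchy_eq_withDensity]
  conv_rhs => rw [← withDensity_one (μ := volume)]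
  refine withDensity_mono (ae_of_all _ fun s => ?_)
  simpa using ENNReal.ofReal_le_ofReal (poissonKer_le_inv one_pos s)

lemma lintegral_stdCauchy (u : ℝ → ℝ≥0∞) :
    ∫⁻ s, u s ∂stdCauchy = ∫⁻ s, ENNReal.ofReal (poissonKer 1 s) * u s := by
  rw [stdCauchy_eq_withDensity]
  exact lintegral_withDensity_eq_lintegral_mul_non_measurable _ (by fun_prop)
    (ae_of_all _ fun _ => ENNReal.ofReal_lt_top) u

lemma integrable_mul_poissonKer_of_stdCauchy {g : ℝ → ℝ} (hg : Integrable g stdCauchy) :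
    Integrable fun t => g t * poissonKer 1 t := by
  rw [stdCauchy_eq_withDensity, integrable_withDensity_iff (by fun_prop)
    (ae_of_all _ fun _ => ENNReal.ofReal_lt_top)] at hg
  simpa only [ENNReal.toReal_ofReal (poissonKer_nonneg zero_le_one _)] using hg

section

variable {f g : ℝ → ℝ}

lemma integrable_mul_conjPoissonKer (hf : Integrable f) {δ : ℝ} (hδ : 0 < δ) (x : ℝ) :
    Integrable fun t => f t * conjPoissonKer δ (x - t) := by
  refine (integrable_mul_cauchyKer hf (z := x + δ * Complex.I) (by simpa using hδ)).im.congr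
    (ae_of_all _ fun t => ?_)
  simp [cauchyKer_eq hδ]

lemma continuousAt_conjPoissonInt (hf : Integrable f) {δ : ℝ} (hδ : 0 < δ) (x : ℝ) :
    ContinuousAt (fun ε => conjPoissonInt ε f x) δ := by
  have h : ContinuousAt (fun ε : ℝ => (cauchyInt f (x + ε * Complex.I)).im) δ :=
    Complex.continuous_im.continuousAt.comp
      (ContinuousAt.comp (f := fun ε : ℝ => (x : ℂ) + ε * Complex.I)
        (differentiableAt_cauchyInt hf (by simpa using hδ)).continuousAt (by fun_prop))
  refine h.congr ?_
  filter_upwards [lt_mem_nhds hδ] with ε hε using cauchyInt_im hf hε x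

lemma conjPoissonInt_eq_poissonInt (hf : Integrable f) (hg : Integrable g stdCauchy)
    (hlim : Tendsto (fun ε => ∫⁻ y, ‖conjPoissonInt ε f y - g y‖ₑ ∂stdCauchy) (𝓝[>] 0) (𝓝 0))
    {δ : ℝ} (hδ : 0 < δ) (x : ℝ) : conjPoissonInt δ f x = poissonInt δ g x := by
  have hadd : Tendsto (fun ε => ∫ t, poissonKer δ (x - t) * conjPoissonInt ε f t) (𝓝[>] 0)
      (𝓝 (conjPoissonInt δ f x)) := by
    have hε : Tendsto (fun ε => δ + ε) (𝓝[>] 0) (𝓝 δ) :=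
      (Continuous.tendsto' (by fun_prop) _ _ (add_zero δ)).mono_left nhdsWithin_le_nhds
    refine ((continuousAt_conjPoissonInt hf hδ x).tendsto.comp hε).congr' ?_
    filter_upwards [self_mem_nhdsWithin] with ε hε using (conjPoissonInt_add hf hδ hε x).2.symm
  refine tendsto_nhds_unique hadd ?_
  simp only [poissonInt, mul_comm (g _)]
  have hle (t : ℝ) : |poissonKer δ (x - t)| ≤ ((1 + 2 * x ^ 2) / δ + 2 * δ) * poissonKer 1 t :=
    (abs_of_nonneg (poissonKer_nonneg hδ.le _)).trans_le (poissonKer_sub_le hδ x t)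
  have hgP := integrable_mul_of_abs_le_poissonKer (integrable_mul_poissonKer_of_stdCauchy hg)
    (k := fun t => poissonKer δ (x - t)) (by fun_prop) hle
  refine tendsto_integral_of_L1 _ (by simpa only [mul_comm] using hgP.1)
    (by filter_upwards [self_mem_nhdsWithin] with ε hε using (conjPoissonInt_add hf hδ hε x).1) ?_
  have hC := ENNReal.Tendsto.const_mul hlim
    (a := ENNReal.ofReal ((1 + 2 * x ^ 2) / δ + 2 * δ)) (Or.inr ENNReal.ofReal_ne_top)
  rw [mul_zero] at hC
  refine tendsto_of_tendsto_of_tendsto_of_le_of_le tendsto_const_nhds hC (fun _ => zero_le)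
    fun n => ?_
  simp only [lintegral_stdCauchy]
  rw [← lintegral_const_mul' _ _ ENNReal.ofReal_ne_top]
  refine lintegral_mono fun t => ?_
  rw [← mul_sub, enorm_mul, ← mul_assoc, ← ENNReal.ofReal_mul (by positivity),
    Real.enorm_eq_ofReal_abs]
  gcongr
  exact hle t

end

/-- The kernel `1 / (π s)` of the Hilbert transform, truncated to `δ ≤ |s|`. -/
def truncHilbertKer (δ s : ℝ) : ℝ := if δ ≤ |s| then (Real.pi * s)⁻¹ else 0

@[fun_prop]
lemma measurable_truncHilbertKer (δ : ℝ) : Measurable (truncHilbertKer δ) :=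
  Measurable.ite (measurableSet_le measurable_const measurable_norm) (by fun_prop) measurable_const

lemma abs_truncHilbertKer_sub_le {δ : ℝ} (s : ℝ) (hδ : 0 < δ) :
    |truncHilbertKer δ s - conjPoissonKer δ s| ≤ poissonKer δ s := by
  have hpi := Real.pi_pos
  rw [truncHilbertKer, conjPoissonKer, poissonKer]
  split_ifs with h
  · have hs : s ≠ 0 := abs_pos.1 (hδ.trans_le h)
    have heq : (Real.pi * s)⁻¹ - s / (s ^ 2 + δ ^ 2) / Real.pi
        = δ / s * (δ / (s ^ 2 + δ ^ 2) / Real.pi) := by field_simp; ring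
    rw [heq, abs_mul, abs_div, abs_of_pos hδ, abs_of_nonneg (a := δ / (_ + _) / _) (by positivity)]
    exact mul_le_of_le_one_left (by positivity) (div_le_one_of_le₀ h (abs_nonneg s))
  · rw [zero_sub, abs_neg, abs_div, abs_div, abs_of_pos hpi,
      abs_of_pos (by positivity : 0 < s ^ 2 + δ ^ 2)]
    gcongr
    exact (not_le.1 h).le

lemma integral_truncHilbertKer_sub (δ : ℝ) :
    ∫ s, (truncHilbertKer δ s - conjPoissonKer δ s) = 0 := by
  have hodd (s : ℝ) : truncHilbertKer δ (-s) - conjPoissonKer δ (-s)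
      = -(truncHilbertKer δ s - conjPoissonKer δ s) := by
    simp only [truncHilbertKer, conjPoissonKer, abs_neg]
    split_ifs
    · rw [mul_neg, inv_neg]; ring
    · ring
  have h := integral_neg_eq_self (fun s => truncHilbertKer δ s - conjPoissonKer δ s) volume
  simp_rw [hodd, integral_neg] at h
  linarith

theorem ae_tendsto_integral_mul_truncHilbertKer {f g : ℝ → ℝ} (hf : Integrable f)
    (hg : Integrable g stdCauchy)
    (hlim : Tendsto (fun ε => ∫⁻ y, ‖conjPoissonInt ε f y - g y‖ₑ ∂stdCauchy) (𝓝[>] 0) (𝓝 0)) :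
    ∀ᵐ x, Tendsto (fun δ => ∫ t, f t * truncHilbertKer δ (x - t)) (𝓝[>] 0) (𝓝 (g x)) := by
  filter_upwards [ae_tendsto_meanOsc hf,
    ae_tendsto_poissonInt (integrable_mul_poissonKer_of_stdCauchy hg)] with x hfx hgx
  have hdiff := tendsto_integral_mul_of_abs_le_poissonKer hf hfx
    (m := fun δ s => truncHilbertKer δ s - conjPoissonKer δ s) (fun δ => by fun_prop)
    (fun δ s => abs_truncHilbertKer_sub_le s) fun δ _ => integral_truncHilbertKer_sub δ
  have hsum := hdiff.add hgx
  rw [mul_zero, zero_add] at hsum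
  refine hsum.congr' ?_
  filter_upwards [self_mem_nhdsWithin] with δ (hδ : 0 < δ)
  rw [← conjPoissonInt_eq_poissonInt hf hg hlim hδ, conjPoissonInt, ← integral_add _
    (integrable_mul_conjPoissonKer hf hδ x)]
  · exact integral_congr_ae (ae_of_all _ fun t => by ring)
  · exact hf.mul_bdd (c := δ⁻¹) (Measurable.aestronglyMeasurable (by fun_prop))
      (ae_of_all _ fun t => (abs_truncHilbertKer_sub_le _ hδ).trans (poissonKer_le_inv hδ _))

/-! ### Mean convergence of the conjugate Poisson integrals of bounded functions -/

section

variable {f : ℝ → ℝ}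

lemma integral_abs_poissonInt_sub (hf : Integrable f) {ε : ℝ} (hε : 0 < ε) :
    ∫ x, |poissonInt ε f x - f x| = 2 * ∫ x, max (f x - poissonInt ε f x) 0 := by
  have hP := integrable_poissonInt hf hε
  have hsub : Integrable fun x => f x - poissonInt ε f x := hf.sub hP
  have hsub' : Integrable fun x => poissonInt ε f x - f x := hP.sub hf
  have habs (a : ℝ) : |a| = 2 * max (-a) 0 + a := by
    rcases le_total 0 a with h | h
    · rw [abs_of_nonneg h, max_eq_right (by linarith)]; ring
    · rw [abs_of_nonpos h, max_eq_left (by linarith)]; ring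
  simp_rw [habs (poissonInt ε f _ - f _), neg_sub]
  rw [integral_add (hsub.pos_part.const_mul 2) hsub', integral_const_mul,
    integral_sub hP hf, integral_poissonInt hf hε, sub_self, add_zero]

lemma tendsto_integral_abs_poissonInt_sub (hf : Integrable f) (hf0 : ∀ t, 0 ≤ f t) :
    Tendsto (fun ε => ∫ x, |poissonInt ε f x - f x|) (𝓝[>] 0) (𝓝 0) := by
  have hpos : Tendsto (fun ε => ∫ x, max (f x - poissonInt ε f x) 0) (𝓝[>] 0)
      (𝓝 (∫ _ : ℝ, (0 : ℝ))) := by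
    refine tendsto_integral_filter_of_dominated_convergence f ?_ ?_ hf ?_
    · filter_upwards [self_mem_nhdsWithin] with ε hε
      exact (hf.sub (integrable_poissonInt hf hε)).pos_part.1
    · filter_upwards [self_mem_nhdsWithin] with ε (hε : 0 < ε)
      refine ae_of_all _ fun x => ?_
      rw [Real.norm_of_nonneg (le_max_right _ _)]
      exact max_le (sub_le_self _ (poissonInt_nonneg hf0 hε.le x)) (hf0 x)
    · filter_upwards [ae_tendsto_meanOsc hf] with x hx
      simpa using ((tendsto_poissonInt hf hx).const_sub (f x)).max
        (tendsto_const_nhds (x := (0 : ℝ)))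
  have h := hpos.const_mul 2
  rw [integral_zero, mul_zero] at h
  refine h.congr' ?_
  filter_upwards [self_mem_nhdsWithin] with ε hε using (integral_abs_poissonInt_sub hf hε).symm

lemma lintegral_conjPoissonInt_sub_sq_le_integral (hf : Integrable f) (hf0 : ∀ t, 0 ≤ f t)
    (hf1 : ∀ t, f t ≤ 1) {ε δ : ℝ} (hε : 0 < ε) (hδ : 0 < δ) :
    ∫⁻ x, ENNReal.ofReal ((conjPoissonInt ε f x - conjPoissonInt δ f x) ^ 2)
      ≤ ENNReal.ofReal ((∫ x, |poissonInt ε f x - f x|) + ∫ x, |poissonInt δ f x - f x|) := by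
  have hint {η : ℝ} (hη : 0 < η) : Integrable fun x => |poissonInt η f x - f x| :=
    ((integrable_poissonInt hf hη).sub hf).norm
  have hsum : Integrable fun x => |poissonInt ε f x - f x| + |poissonInt δ f x - f x| :=
    (hint hε).add (hint hδ)
  rw [← integral_add (hint hε) (hint hδ), ofReal_integral_eq_lintegral_ofReal
    hsum (ae_of_all _ fun x => by positivity)]
  refine (lintegral_conjPoissonInt_sub_sq_le hf hε hδ).trans
    (lintegral_mono fun x => ENNReal.ofReal_le_ofReal ?_)
  have hone : |poissonInt ε f x - poissonInt δ f x| ≤ 1 := by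
    have hmem (η : ℝ) (hη : 0 < η) : poissonInt η f x ∈ Icc 0 1 :=
      ⟨poissonInt_nonneg hf0 hη.le x, poissonInt_le_one hf hf1 hη x⟩
    exact Real.dist_le_of_mem_Icc_01 (hmem ε hε) (hmem δ hδ)
  calc (poissonInt ε f x - poissonInt δ f x) ^ 2
      = |poissonInt ε f x - poissonInt δ f x| ^ 2 := (sq_abs _).symm
    _ ≤ |poissonInt ε f x - poissonInt δ f x| := pow_le_of_le_one (abs_nonneg _) hone two_ne_zero
    _ ≤ |poissonInt ε f x - f x| + |poissonInt δ f x - f x| := by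
        rw [abs_sub_comm (poissonInt δ f x)]; exact abs_sub_le _ _ _

lemma tendsto_lintegral_conjPoissonInt_sub (hf : Integrable f) (hf0 : ∀ t, 0 ≤ f t)
    (hf1 : ∀ t, f t ≤ 1) :
    Tendsto (fun p : ℝ × ℝ => ∫⁻ x, ‖conjPoissonInt p.1 f x - conjPoissonInt p.2 f x‖ₑ ∂stdCauchy)
      (𝓝[>] 0 ×ˢ 𝓝[>] 0) (𝓝 0) := by
  have hA := tendsto_integral_abs_poissonInt_sub hf hf0
  have hlim := (ENNReal.tendsto_ofReal
    ((hA.comp tendsto_fst).add (hA.comp tendsto_snd))).ennrpow_const (1 / 2 : ℝ)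
  rw [add_zero, ENNReal.ofReal_zero, ENNReal.zero_rpow_of_pos (by norm_num)] at hlim
  refine tendsto_of_tendsto_of_tendsto_of_le_of_le' tendsto_const_nhds hlim
    (Eventually.of_forall fun _ => zero_le) ?_
  filter_upwards [prod_mem_prod self_mem_nhdsWithin self_mem_nhdsWithin] with p ⟨hp1, hp2⟩
  set u : ℝ → ℝ := fun x => conjPoissonInt p.1 f x - conjPoissonInt p.2 f x
  have hu : AEMeasurable (fun x => ‖u x‖ₑ) stdCauchy := ((continuous_conjPoissonInt hf hp1).sub
    (continuous_conjPoissonInt hf hp2)).measurable.enorm.aemeasurable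
  have hsq (x : ℝ) : ‖u x‖ₑ ^ (2 : ℝ) = ENNReal.ofReal (u x ^ 2) := by
    rw [ENNReal.rpow_two, Real.enorm_eq_ofReal_abs, ← ENNReal.ofReal_pow (abs_nonneg _), sq_abs]
  calc ∫⁻ x, ‖u x‖ₑ ∂stdCauchy
      ≤ (∫⁻ x, ‖u x‖ₑ ^ (2 : ℝ) ∂stdCauchy) ^ (1 / 2 : ℝ) := by
        simpa using ENNReal.lintegral_mul_le_Lp_mul_Lq stdCauchy Real.HolderConjugate.two_two hu
          (aemeasurable_const (b := (1 : ℝ≥0∞)))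
    _ ≤ (∫⁻ x, ENNReal.ofReal (u x ^ 2)) ^ (1 / 2 : ℝ) := by
        simp only [hsq]
        exact ENNReal.rpow_le_rpow (lintegral_mono' stdCauchy_le_volume le_rfl) (by norm_num)
    _ ≤ _ := by
        gcongr
        exact lintegral_conjPoissonInt_sub_sq_le_integral hf hf0 hf1 hp1 hp2

end

/-! ### Logarithmic weights and rearrangement -/

/-- The logarithm `log (2e/t)` of the Zygmund norms, continued by `1` beyond `t = 2` so that it is
antitone and at least `1` on the whole half-line. -/
def zygLog (t : ℝ) : ℝ := max 1 (Real.log (2 * Real.exp 1 / t))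

/-- The primitive `∫₀ˢ log^β (2e/t) dt`: the largest value of `∫_E log^β (2e/ρ)` over sets `E` of
measure `s` and functions `ρ` whose sublevel sets `{ρ < r}` have measure at most `r`. -/
def logMass (β s : ℝ) : ℝ≥0∞ := ∫⁻ t in Ioo 0 s, ENNReal.ofReal (zygLog t ^ β)

lemma one_le_zygLog (t : ℝ) : 1 ≤ zygLog t := le_max_left _ _

lemma zygLog_pos (t : ℝ) : 0 < zygLog t := one_pos.trans_le (one_le_zygLog t)

lemma zygLog_of_le_two {t : ℝ} (ht0 : 0 < t) (ht : t ≤ 2) :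
    zygLog t = Real.log (2 * Real.exp 1 / t) := by
  refine max_eq_right ((Real.le_log_iff_exp_le (by positivity)).2 ?_)
  rw [le_div_iff₀ ht0, mul_comm]
  gcongr

lemma antitoneOn_zygLog : AntitoneOn zygLog (Ioi 0) := fun s hs t ht hst => by
  rw [mem_Ioi] at hs ht
  unfold zygLog
  gcongr

lemma antitoneOn_zygLog_rpow {β : ℝ} (hβ : 0 ≤ β) :
    AntitoneOn (fun t => zygLog t ^ β) (Ioi 0) := fun _ hs t ht hst =>
  Real.rpow_le_rpow (zygLog_pos t).le (antitoneOn_zygLog hs ht hst) hβ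

@[fun_prop]
lemma measurable_zygLog : Measurable zygLog := by unfold zygLog; fun_prop

lemma logMass_mono (β : ℝ) : Monotone (logMass β) := fun _ _ h =>
  lintegral_mono_set (Ioo_subset_Ioo_right h)

lemma ofReal_mul_zygLog_le_logMass {β s : ℝ} (hβ : 0 ≤ β) :
    ENNReal.ofReal (s * zygLog s ^ β) ≤ logMass β s := by
  rcases le_or_gt s 0 with hs | hs
  · rw [ENNReal.ofReal_of_nonpos (mul_nonpos_of_nonpos_of_nonneg hs
      (Real.rpow_nonneg (zygLog_pos s).le β))]
    exact zero_le
  calc ENNReal.ofReal (s * zygLog s ^ β)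
      = ∫⁻ _ in Ioo 0 s, ENNReal.ofReal (zygLog s ^ β) := by
        rw [setLIntegral_const, Real.volume_Ioo, sub_zero, mul_comm,
          ENNReal.ofReal_mul (Real.rpow_nonneg (zygLog_pos s).le β)]
    _ ≤ logMass β s := setLIntegral_mono' measurableSet_Ioo fun t ht =>
        ENNReal.ofReal_le_ofReal (antitoneOn_zygLog_rpow hβ ht.1 hs ht.2.le)

lemma zygLog_div_le {s k : ℝ} (hs : 0 < s) (hk : 1 ≤ k) :
    zygLog (s / k) ≤ zygLog s * (1 + Real.log k) := by
  have hk0 : 0 < k := one_pos.trans_le hk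
  have hlog : 0 ≤ Real.log k := Real.log_nonneg hk
  have hsplit :
      Real.log (2 * Real.exp 1 / (s / k)) = Real.log (2 * Real.exp 1 / s) + Real.log k := by
    rw [← Real.log_mul (by positivity) hk0.ne']
    congr 1
    field_simp
  have hle : zygLog (s / k) ≤ zygLog s + Real.log k := by
    refine max_le (by linarith [one_le_zygLog s]) ?_
    rw [hsplit]
    exact add_le_add_left (le_max_right _ _) _
  nlinarith [mul_nonneg (sub_nonneg.2 (one_le_zygLog s)) hlog]

lemma exists_one_add_log_rpow_le {β : ℝ} (hβ : 0 ≤ β) {η : ℝ} (hη : 0 < η) :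
    ∃ C, 0 < C ∧ ∀ k, 1 ≤ k → (1 + Real.log k) ^ β ≤ C * k ^ η := by
  set θ : ℝ := η / (β + 1)
  have hθ : 0 < θ := by positivity
  refine ⟨(1 + 1 / θ) ^ β, by positivity, fun k hk => ?_⟩
  have hk0 : 0 ≤ k := zero_le_one.trans hk
  have hlog : 1 + Real.log k ≤ (1 + 1 / θ) * k ^ θ := by
    linarith [Real.log_le_rpow_div hk0 hθ, Real.one_le_rpow hk hθ.le, add_mul 1 (1 / θ) (k ^ θ),
      div_eq_mul_one_div (k ^ θ) θ]
  have hexp : θ * β ≤ η := by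
    rw [div_mul_eq_mul_div, div_le_iff₀ (by positivity)]
    gcongr
    linarith
  calc (1 + Real.log k) ^ β ≤ ((1 + 1 / θ) * k ^ θ) ^ β := by
        have := Real.log_nonneg hk
        gcongr
    _ = (1 + 1 / θ) ^ β * k ^ (θ * β) := by
        rw [Real.mul_rpow (by positivity) (by positivity), Real.rpow_mul hk0]
    _ ≤ (1 + 1 / θ) ^ β * k ^ η := by gcongr

lemma exists_zygLog_div_rpow_le {β : ℝ} (hβ : 0 ≤ β) {η : ℝ} (hη : 0 < η) :
    ∃ C, 0 < C ∧ ∀ s k, 0 < s → 1 ≤ k → zygLog (s / k) ^ β ≤ C * zygLog s ^ β * k ^ η := by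
  obtain ⟨C, hC, hle⟩ := exists_one_add_log_rpow_le hβ hη
  refine ⟨C, hC, fun s k hs hk => ?_⟩
  have hlog := Real.log_nonneg hk
  calc zygLog (s / k) ^ β ≤ (zygLog s * (1 + Real.log k)) ^ β :=
        Real.rpow_le_rpow (zygLog_pos _).le (zygLog_div_le hs hk) hβ
    _ = zygLog s ^ β * (1 + Real.log k) ^ β :=
        Real.mul_rpow (zygLog_pos s).le (by positivity)
    _ ≤ zygLog s ^ β * (C * k ^ η) :=
        mul_le_mul_of_nonneg_left (hle k hk) (Real.rpow_nonneg (zygLog_pos s).le β)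
    _ = C * zygLog s ^ β * k ^ η := by ring

lemma lintegral_Ioo_rpow {s p : ℝ} (hs : 0 < s) (hp : -1 < p) :
    ∫⁻ t in Ioo 0 s, ENNReal.ofReal (t ^ p) = ENNReal.ofReal (s ^ (p + 1) / (p + 1)) := by
  have hint : IntegrableOn (fun t : ℝ => t ^ p) (Ioo 0 s) :=
    (intervalIntegral.integrableOn_Ioo_rpow_iff hs).2 hp
  rw [← ofReal_integral_eq_lintegral_ofReal hint
    ((ae_restrict_iff' measurableSet_Ioo).2 (ae_of_all _ fun t ht => Real.rpow_nonneg ht.1.le p)),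
    ← integral_Ioc_eq_integral_Ioo, ← intervalIntegral.integral_of_le hs.le,
    integral_rpow (Or.inl hp), Real.zero_rpow (by linarith), sub_zero]

lemma exists_logMass_le {β : ℝ} (hβ : 0 ≤ β) :
    ∃ C, 0 < C ∧ ∀ s, logMass β s ≤ ENNReal.ofReal (C * (s * zygLog s ^ β)) := by
  obtain ⟨C, hC, hle⟩ := exists_zygLog_div_rpow_le hβ (η := 1 / 2) (by norm_num)
  refine ⟨2 * C, by positivity, fun s => ?_⟩
  rcases le_or_gt s 0 with hs | hs
  · simp [logMass, Ioo_eq_empty (not_lt.2 hs)]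
  have hzyg : 0 ≤ zygLog s ^ β := Real.rpow_nonneg (zygLog_pos s).le β
  calc logMass β s
      ≤ ∫⁻ t in Ioo 0 s, ENNReal.ofReal (C * zygLog s ^ β * s ^ (1 / 2 : ℝ))
          * ENNReal.ofReal (t ^ (-(1 / 2) : ℝ)) := by
        refine setLIntegral_mono' measurableSet_Ioo fun t ht => ?_
        rw [← ENNReal.ofReal_mul (by positivity)]
        refine ENNReal.ofReal_le_ofReal ?_
        have h := hle s (s / t) hs ((one_le_div ht.1).2 ht.2.le)
        rwa [div_div_cancel₀ hs.ne', Real.div_rpow hs.le ht.1.le, div_eq_mul_inv,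
          ← Real.rpow_neg ht.1.le, ← mul_assoc] at h
    _ = ENNReal.ofReal (2 * C * (s * zygLog s ^ β)) := by
        rw [lintegral_const_mul' _ _ ENNReal.ofReal_ne_top, lintegral_Ioo_rpow hs (by norm_num),
          ← ENNReal.ofReal_mul (by positivity)]
        congr 1
        have hsqrt : s ^ (1 / 2 : ℝ) * s ^ (1 / 2 : ℝ) = s := by
          rw [← Real.rpow_add hs]; norm_num
        norm_num
        linear_combination (2 * C * zygLog s ^ β) * hsqrt

section

variable {α : Type*} {mα : MeasurableSpace α} {μ : Measure α}

lemma ae_pos_of_measure_lt_le {ρ : α → ℝ} (hρ : ∀ r, μ {x | ρ x < r} ≤ ENNReal.ofReal r) :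
    ∀ᵐ x ∂μ, 0 < ρ x := by
  have h : μ {x | ρ x ≤ 0} ≤ 0 := by
    refine ENNReal.le_of_forall_pos_le_add fun r hr _ => ?_
    rw [zero_add, ← ENNReal.ofReal_coe_nnreal]
    exact (measure_mono fun x (hx : ρ x ≤ 0) => hx.trans_lt (NNReal.coe_pos.2 hr)).trans (hρ r)
  simpa [ae_iff] using h

lemma setLIntegral_comp_le_of_antitoneOn [IsFiniteMeasure μ] {ρ : α → ℝ} (hρm : Measurable ρ)
    (hρ : ∀ r, μ {x | ρ x < r} ≤ ENNReal.ofReal r) {w : ℝ → ℝ} (hwm : Measurable w)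
    (hw : AntitoneOn w (Ioi 0)) (hw0 : ∀ t, 0 ≤ w t) (S : Set α) :
    ∫⁻ x in S, ENNReal.ofReal (w (ρ x)) ∂μ
      ≤ ∫⁻ t in Ioo 0 (μ.real S), ENNReal.ofReal (w t) := by
  rw [lintegral_eq_lintegral_meas_lt _ (ae_of_all _ fun x => hw0 _) (hwm.comp hρm).aemeasurable,
    lintegral_eq_lintegral_meas_lt _ (ae_of_all _ fun x => hw0 _) hwm.aemeasurable]
  refine lintegral_mono fun c => ?_
  have hwρ : Measurable fun x => w (ρ x) := hwm.comp hρm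
  rw [Measure.restrict_apply (measurableSet_lt measurable_const hwρ),
    Measure.restrict_apply (measurableSet_lt measurable_const hwm)]
  refine le_of_forall_gt_imp_ge_of_dense fun r hr => ?_
  obtain ⟨s, hs0, hs, hsr⟩ := ENNReal.lt_iff_exists_real_btwn.1 hr
  refine le_trans ?_ hsr.le
  rcases le_or_gt (μ.real S) s with hSs | hSs
  · refine (measure_mono inter_subset_right).trans ?_
    rw [← ofReal_measureReal]
    exact ENNReal.ofReal_le_ofReal hSs
  have hspos : 0 < s := hs0.lt_of_ne fun h => by simp [← h] at hs
  have hws : w s ≤ c := by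
    by_contra! hc
    refine hs.not_ge ?_
    calc ENNReal.ofReal s = volume (Ioo 0 s) := by rw [Real.volume_Ioo, sub_zero]
      _ ≤ volume ({t | c < w t} ∩ Ioo 0 (μ.real S)) := measure_mono fun t ht =>
          ⟨hc.trans_le (hw ht.1 hspos ht.2.le), ht.1, ht.2.trans hSs⟩
  refine (measure_mono_ae ?_).trans (hρ s)
  filter_upwards [ae_pos_of_measure_lt_le hρ] with x hx hxS
  by_contra hle
  exact (hxS.1.trans_le (hw hspos hx (not_lt.1 hle))).not_ge hws

end

lemma setLIntegral_Ioc_inv_le {a : ℝ} (ha : 0 < a) :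
    ∫⁻ l in Ioc a 1, ENNReal.ofReal l⁻¹ ≤ ENNReal.ofReal (zygLog a) := by
  rcases lt_or_ge 1 a with h1 | h1
  · simp [Ioc_eq_empty (not_lt.2 h1.le)]
  have hint : IntervalIntegrable (fun l : ℝ => l⁻¹) volume a 1 :=
    intervalIntegral.intervalIntegrable_inv (fun l hl => by
      rw [uIcc_of_le h1] at hl; exact (ha.trans_le hl.1).ne') continuousOn_id
  rw [← ofReal_integral_eq_lintegral_ofReal hint.1
    ((ae_restrict_iff' measurableSet_Ioc).2
      (ae_of_all _ fun l hl => inv_nonneg.2 (ha.trans hl.1).le)),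
    ← intervalIntegral.integral_of_le h1, integral_inv_of_pos ha one_pos,
    zygLog_of_le_two ha (h1.trans one_le_two)]
  refine ENNReal.ofReal_le_ofReal (Real.log_le_log (by positivity) ?_)
  gcongr
  linarith [Real.add_one_le_exp 1]

lemma setLIntegral_Ioi_rpow_neg_three_half :
    ∫⁻ l in Ioi (1 : ℝ), ENNReal.ofReal (l ^ (-(3 / 2) : ℝ)) = 2 := by
  rw [← ofReal_integral_eq_lintegral_ofReal
    (integrableOn_Ioi_rpow_of_lt (by norm_num) one_pos)
    ((ae_restrict_iff' measurableSet_Ioi).2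
      (ae_of_all _ fun l hl => Real.rpow_nonneg (one_pos.trans hl).le _)),
    integral_Ioi_rpow_of_lt (by norm_num) one_pos]
  norm_num

lemma exists_setLIntegral_Ioc_logMass_div_le {β c : ℝ} (hβ : 0 ≤ β) (hc : 1 ≤ c) :
    ∃ C, 0 < C ∧ ∀ a, 0 < a → ∫⁻ l in Ioc a 1, logMass β (c * a / l)
      ≤ ENNReal.ofReal (C * (a * zygLog a ^ (1 + β))) := by
  obtain ⟨C, hC, hle⟩ := exists_logMass_le hβ
  refine ⟨C * c, by positivity, fun a ha => ?_⟩
  have hz : 0 < zygLog a ^ β := Real.rpow_pos_of_pos (zygLog_pos a) β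
  have hpoint : ∀ l ∈ Ioc a 1, logMass β (c * a / l)
      ≤ ENNReal.ofReal (C * c * (a * zygLog a ^ β)) * ENNReal.ofReal l⁻¹ := fun l hl => by
    have hl0 : 0 < l := ha.trans hl.1
    have hal : a ≤ c * a / l := (le_div_iff₀ hl0).2 (by nlinarith [hl.2])
    rw [← ENNReal.ofReal_mul (by positivity)]
    refine (hle _).trans (ENNReal.ofReal_le_ofReal ?_)
    calc C * (c * a / l * zygLog (c * a / l) ^ β) ≤ C * (c * a / l * zygLog a ^ β) :=
          mul_le_mul_of_nonneg_left (mul_le_mul_of_nonneg_left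
            (antitoneOn_zygLog_rpow hβ ha (ha.trans_le hal) hal) (by positivity)) hC.le
      _ = C * c * (a * zygLog a ^ β) * l⁻¹ := by ring
  calc ∫⁻ l in Ioc a 1, logMass β (c * a / l)
      ≤ ENNReal.ofReal (C * c * (a * zygLog a ^ β)) * ∫⁻ l in Ioc a 1, ENNReal.ofReal l⁻¹ := by
        rw [← lintegral_const_mul' _ _ ENNReal.ofReal_ne_top]
        exact setLIntegral_mono' measurableSet_Ioc hpoint
    _ ≤ ENNReal.ofReal (C * c * (a * zygLog a ^ β)) * ENNReal.ofReal (zygLog a) := by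
        gcongr
        exact setLIntegral_Ioc_inv_le ha
    _ = ENNReal.ofReal (C * c * (a * zygLog a ^ (1 + β))) := by
        rw [← ENNReal.ofReal_mul (by positivity),
          Real.rpow_one_add' (zygLog_pos a).le (by linarith)]
        ring_nf

lemma exists_setLIntegral_Ioi_logMass_div_sq_le {β c : ℝ} (hβ : 0 ≤ β) (hc : 1 ≤ c) :
    ∃ C, 0 < C ∧ ∀ a, 0 < a → ∫⁻ l in Ioi 1, logMass β (c * a / l ^ 2)
      ≤ ENNReal.ofReal (C * (a * zygLog a ^ β)) := by
  obtain ⟨C₁, hC₁, h₁⟩ := exists_logMass_le hβ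
  obtain ⟨C₂, hC₂, h₂⟩ := exists_zygLog_div_rpow_le hβ (η := 1 / 4) (by norm_num)
  refine ⟨2 * (C₁ * C₂ * c), by positivity, fun a ha => ?_⟩
  have hz : 0 < zygLog a ^ β := Real.rpow_pos_of_pos (zygLog_pos a) β
  have hzc : zygLog (c * a) ^ β ≤ zygLog a ^ β :=
    antitoneOn_zygLog_rpow hβ ha (mul_pos (one_pos.trans_le hc) ha)
      (le_mul_of_one_le_left ha.le hc)
  have hpoint : ∀ l ∈ Ioi (1 : ℝ), logMass β (c * a / l ^ 2)
      ≤ ENNReal.ofReal (C₁ * C₂ * c * (a * zygLog a ^ β)) * ENNReal.ofReal (l ^ (-(3 / 2) : ℝ)) :=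
    fun l (hl : 1 < l) => by
    have hl0 : 0 < l := one_pos.trans hl
    have hpow : (l ^ 2)⁻¹ * (l ^ 2) ^ (1 / 4 : ℝ) = l ^ (-(3 / 2) : ℝ) := by
      rw [← Real.rpow_natCast, ← Real.rpow_neg hl0.le, ← Real.rpow_mul hl0.le,
        ← Real.rpow_add hl0]
      norm_num
    rw [← ENNReal.ofReal_mul (by positivity)]
    refine (h₁ _).trans (ENNReal.ofReal_le_ofReal ?_)
    calc C₁ * (c * a / l ^ 2 * zygLog (c * a / l ^ 2) ^ β)
        ≤ C₁ * (c * a / l ^ 2 * (C₂ * zygLog (c * a) ^ β * (l ^ 2) ^ (1 / 4 : ℝ))) := by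
          gcongr
          exact h₂ (c * a) (l ^ 2) (by positivity) (one_le_pow₀ hl.le)
      _ ≤ C₁ * (c * a / l ^ 2 * (C₂ * zygLog a ^ β * (l ^ 2) ^ (1 / 4 : ℝ))) := by gcongr
      _ = C₁ * C₂ * c * (a * zygLog a ^ β) * l ^ (-(3 / 2) : ℝ) := by rw [← hpow]; ring
  refine (setLIntegral_mono' measurableSet_Ioi hpoint).trans_eq ?_
  rw [lintegral_const_mul' _ _ ENNReal.ofReal_ne_top, setLIntegral_Ioi_rpow_neg_three_half,
    ← ENNReal.ofReal_ofNat, ← ENNReal.ofReal_mul (by positivity)]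
  ring_nf

lemma exists_lintegral_logMass_min_le {β c : ℝ} (hβ : 0 ≤ β) (hc : 1 ≤ c) :
    ∃ C, 0 < C ∧ ∀ a, 0 ≤ a →
      ∫⁻ l in Ioi 0, logMass β (min 2 (min (c * a / l) (c * a / l ^ 2)))
        ≤ ENNReal.ofReal (C * (a * zygLog a ^ (1 + β))) := by
  obtain ⟨C₀, hC₀, h₀⟩ := exists_logMass_le hβ
  obtain ⟨C₁, hC₁, h₁⟩ := exists_setLIntegral_Ioc_logMass_div_le hβ hc
  obtain ⟨C₂, hC₂, h₂⟩ := exists_setLIntegral_Ioi_logMass_div_sq_le hβ hc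
  have htwo : logMass β 2 ≤ ENNReal.ofReal (C₀ * 2) := by
    refine (h₀ 2).trans_eq ?_
    rw [zygLog_of_le_two two_pos le_rfl]
    norm_num
  refine ⟨C₀ * 2 + C₁ + C₂, by positivity, fun a ha => ?_⟩
  rcases ha.eq_or_lt with rfl | ha
  · simp [logMass]
  have hz := zygLog_pos a
  set F : ℝ → ℝ≥0∞ := fun l => logMass β (min 2 (min (c * a / l) (c * a / l ^ 2)))
  have hsmall : ∫⁻ l in Ioc 0 a, F l ≤ ENNReal.ofReal (C₀ * 2 * a) := by
    refine (lintegral_mono fun l => (logMass_mono β (min_le_left _ _)).trans htwo).trans_eq ?_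
    rw [setLIntegral_const, Real.volume_Ioc, sub_zero, ENNReal.ofReal_mul (p := C₀ * 2)
      (by positivity)]
  have hmiddle : ∫⁻ l in Ioc a 1, F l ≤ _ := (lintegral_mono fun l =>
    logMass_mono β ((min_le_right _ _).trans (min_le_left _ _))).trans (h₁ a ha)
  have hlarge : ∫⁻ l in Ioi 1, F l ≤ _ := (lintegral_mono fun l =>
    logMass_mono β ((min_le_right _ _).trans (min_le_right _ _))).trans (h₂ a ha)
  have hcover : Ioi (0 : ℝ) ⊆ Ioc 0 a ∪ Ioc a 1 ∪ Ioi 1 := fun l hl => by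
    simp only [mem_union, mem_Ioc, mem_Ioi] at hl ⊢
    grind
  refine (lintegral_mono_set hcover).trans ((lintegral_union_le _ _ _).trans ((add_le_add
    ((lintegral_union_le _ _ _).trans (add_le_add hsmall hmiddle)) hlarge).trans ?_))
  rw [← ENNReal.ofReal_add (by positivity) (by positivity),
    ← ENNReal.ofReal_add (by positivity) (by positivity)]
  refine ENNReal.ofReal_le_ofReal ?_
  have hone : 1 ≤ zygLog a ^ (1 + β) := Real.one_le_rpow (one_le_zygLog a) (by linarith)
  have hle : zygLog a ^ β ≤ zygLog a ^ (1 + β) :=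
    Real.rpow_le_rpow_of_exponent_le (one_le_zygLog a) (by linarith)
  calc C₀ * 2 * a + C₁ * (a * zygLog a ^ (1 + β)) + C₂ * (a * zygLog a ^ β)
      ≤ C₀ * 2 * (a * zygLog a ^ (1 + β)) + C₁ * (a * zygLog a ^ (1 + β))
          + C₂ * (a * zygLog a ^ (1 + β)) := by
        gcongr
        exact le_mul_of_one_le_right ha.le hone
    _ = (C₀ * 2 + C₁ + C₂) * (a * zygLog a ^ (1 + β)) := by ring

/-- The property of the measures `log^β (2e/ρ) dμ`, for `ρ` a ranking of the points by `μ`-measure,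
which the estimates use. It is chosen so that the `L (log L)^β(μ)` norm is equivalent to the
supremum of the `L¹(ν)` norms over all such `ν`. -/
def LogDominated {α : Type*} [MeasurableSpace α] (β : ℝ) (ν μ : Measure α) : Prop :=
  ∀ S, MeasurableSet S → ν S ≤ logMass β (μ.real S)

/-- Read `u` as the image under an operator of the indicator of a set of measure `a`: its weak-type
bounds on indicators give a restricted bound from `L (log L)^{1+β}` to `L (log L)^β`. -/
lemma exists_lintegral_le_of_weakType {α : Type*} [MeasurableSpace α] {β c : ℝ} (hβ : 0 ≤ β)
    (hc : 1 ≤ c) :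
    ∃ C, 0 < C ∧ ∀ (μ ν : Measure α) [IsFiniteMeasure μ], μ.real univ ≤ 2 → LogDominated β ν μ →
      ∀ (a : ℝ) (u : α → ℝ), 0 ≤ a → Measurable u →
        (∀ l, 0 < l → μ.real {x | l < |u x|} ≤ c * a / l) →
        (∀ l, 0 < l → μ.real {x | l < |u x|} ≤ c * a / l ^ 2) →
        ∫⁻ x, ‖u x‖ₑ ∂ν ≤ ENNReal.ofReal (C * (a * zygLog a ^ (1 + β))) := by
  obtain ⟨C, hC, hle⟩ := exists_lintegral_logMass_min_le hβ hc
  refine ⟨C, hC, fun μ ν _ hμ hν a u ha hu h₁ h₂ => le_trans ?_ (hle a ha)⟩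
  simp only [Real.enorm_eq_ofReal_abs]
  rw [lintegral_eq_lintegral_meas_lt _ (ae_of_all _ fun x => abs_nonneg _) hu.abs.aemeasurable]
  exact setLIntegral_mono' measurableSet_Ioi fun l hl =>
    (hν _ (measurableSet_lt measurable_const hu.abs)).trans (logMass_mono β (le_min
      ((measureReal_mono (subset_univ _)).trans hμ) (le_min (h₁ l hl) (h₂ l hl))))

/-! ### From level sets to functions -/

section LayerCake

lemma levelSet_indicator_eq {X : Type*} (f : X → ℝ) (l : ℝ) (t : X) :
    {t | l < f t}.indicator (1 : X → ℝ) t = (Iio (f t)).indicator 1 l := rfl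

lemma setIntegral_Ioi_indicator_Iio_mul {a : ℝ} (ha : 0 ≤ a) (c : ℝ) :
    ∫ l in Ioi 0, (Iio a).indicator 1 l * c = a * c := by
  rw [integral_mul_const, integral_indicator_one measurableSet_Iio, measureReal_def,
    Measure.restrict_apply measurableSet_Iio, inter_comm, Ioi_inter_Iio, ← measureReal_def,
    Real.volume_real_Ioo_of_le ha, sub_zero]

variable {α X : Type*} [MeasurableSpace α] [MeasurableSpace X] {μ : Measure X} {f : X → ℝ}
  {k : α → X → ℝ}

lemma measurable_integral_levelSet_mul [SFinite μ] (hf : Measurable f)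
    (hk : Measurable (Function.uncurry k)) :
    Measurable fun p : ℝ × α => ∫ t, {t | p.1 < f t}.indicator 1 t * k p.2 t ∂μ := by
  have hlevel : MeasurableSet {q : (ℝ × α) × X | q.1.1 < f q.2} :=
    measurableSet_lt (by fun_prop) (by fun_prop)
  have hm : Measurable fun q : (ℝ × α) × X =>
      {q : (ℝ × α) × X | q.1.1 < f q.2}.indicator (1 : (ℝ × α) × X → ℝ) q * k q.1.2 q.2 :=
    (measurable_one.indicator hlevel).mul
      (hk.comp ((measurable_snd.comp measurable_fst).prodMk measurable_snd))
  exact (hm.stronglyMeasurable.integral_prod_right (ν := μ)).measurable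

lemma integrable_levelSet_mul (hf : Measurable f) (hf0 : ∀ t, 0 ≤ f t) {k : X → ℝ}
    (hk : Measurable k) (hfk : Integrable (fun t => f t * k t) μ) :
    Integrable (Function.uncurry fun t l => {t | l < f t}.indicator 1 t * k t)
      (μ.prod (volume.restrict (Ioi (0 : ℝ)))) := by
  have hlevel : MeasurableSet {q : X × ℝ | q.2 < f q.1} :=
    measurableSet_lt (by fun_prop) (by fun_prop)
  have hm : Measurable (Function.uncurry fun t (l : ℝ) =>
      {t | l < f t}.indicator (1 : X → ℝ) t * k t) :=
    (measurable_one.indicator hlevel).mul (hk.comp measurable_fst)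
  refine (integrable_prod_iff hm.aestronglyMeasurable).2 ⟨ae_of_all _ fun t => ?_, ?_⟩
  · refine ((integrableOn_const (C := (1 : ℝ)) (s := Iio (f t)) ?_).integrable_indicator
      measurableSet_Iio).mul_const (k t)
    rw [Measure.restrict_apply measurableSet_Iio, inter_comm, Ioi_inter_Iio]
    exact (measure_Ioo_lt_top (a := (0 : ℝ)) (b := f t)).ne
  · refine hfk.norm.congr (ae_of_all _ fun t => ?_)
    have hnorm (l : ℝ) : ‖(Iio (f t)).indicator (1 : ℝ → ℝ) l * k t‖
        = (Iio (f t)).indicator 1 l * ‖k t‖ := by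
      rw [norm_mul, Real.norm_of_nonneg
        (indicator_nonneg (f := (1 : ℝ → ℝ)) (fun _ _ => zero_le_one) l)]
    simp only [Function.uncurry_apply_pair, levelSet_indicator_eq, hnorm]
    rw [setIntegral_Ioi_indicator_Iio_mul (hf0 t), norm_mul, Real.norm_of_nonneg (hf0 t)]

lemma integral_mul_eq_integral_levelSet [SFinite μ] (hf : Measurable f) (hf0 : ∀ t, 0 ≤ f t)
    {k : X → ℝ} (hk : Measurable k) (hfk : Integrable (fun t => f t * k t) μ) :
    ∫ t, f t * k t ∂μ = ∫ l in Ioi 0, ∫ t, {t | l < f t}.indicator 1 t * k t ∂μ := by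
  rw [← integral_integral_swap (integrable_levelSet_mul hf hf0 hk hfk)]
  simp only [levelSet_indicator_eq, setIntegral_Ioi_indicator_Iio_mul (hf0 _)]

lemma lintegral_enorm_integral_mul_le [SFinite μ] {ν : Measure α} [SFinite ν] (hf : Measurable f)
    (hf0 : ∀ t, 0 ≤ f t) (hk : Measurable (Function.uncurry k)) :
    ∫⁻ x, ‖∫ t, f t * k x t ∂μ‖ₑ ∂ν
      ≤ ∫⁻ l in Ioi 0, ∫⁻ x, ‖∫ t, {t | l < f t}.indicator 1 t * k x t ∂μ‖ₑ ∂ν := by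
  have hpoint (x : α) : ‖∫ t, f t * k x t ∂μ‖ₑ
      ≤ ∫⁻ l in Ioi 0, ‖∫ t, {t | l < f t}.indicator 1 t * k x t ∂μ‖ₑ := by
    by_cases hfk : Integrable (fun t => f t * k x t) μ
    · rw [integral_mul_eq_integral_levelSet hf hf0 hk.of_uncurry_left hfk]
      exact enorm_integral_le_lintegral_enorm _
    · simp [integral_undef hfk]
  refine (lintegral_mono hpoint).trans_eq (lintegral_lintegral_swap ?_)
  exact ((measurable_integral_levelSet_mul hf hk).comp measurable_swap).enorm.aemeasurable

end LayerCake

/-- The `L (log L)^α` norm of a nonnegative function, as the integral of `logMass α` over the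
distribution function. -/
def zygMass (α : ℝ) (f : ℝ → ℝ) : ℝ≥0∞ := ∫⁻ l in Ioi 0, logMass α (volume.real {x | l < f x})

lemma LogDominated.isFiniteMeasure {α : Type*} [MeasurableSpace α] {β : ℝ} {ν μ : Measure α}
    (h : LogDominated β ν μ) (hβ : 0 ≤ β) : IsFiniteMeasure ν := by
  obtain ⟨C, -, hle⟩ := exists_logMass_le hβ
  exact ⟨((h univ .univ).trans (hle _)).trans_lt ENNReal.ofReal_lt_top⟩

lemma LogDominated.absolutelyContinuous {α : Type*} [MeasurableSpace α] {β : ℝ} {ν μ : Measure α}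
    (h : LogDominated β ν μ) : ν ≪ μ :=
  Measure.AbsolutelyContinuous.mk fun S hS hμ => le_antisymm
    ((h S hS).trans_eq (by simp [logMass, measureReal_def, hμ])) zero_le

lemma logDominated_zero_self {α : Type*} [MeasurableSpace α] (μ : Measure α) [IsFiniteMeasure μ] :
    LogDominated 0 μ μ := fun S _ => by
  simp [logMass, ofReal_measureReal]

lemma exists_lintegral_conjPoissonInt_indicator_le {β : ℝ} (hβ : 0 ≤ β) :
    ∃ C, 0 < C ∧ ∀ (μ ν : Measure ℝ) [IsFiniteMeasure μ], μ ≤ volume → μ.real univ ≤ 2 →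
      LogDominated β ν μ → ∀ E : Set ℝ, MeasurableSet E → volume E ≠ ∞ → ∀ ε, 0 < ε →
        ∫⁻ x, ‖conjPoissonInt ε (E.indicator 1) x‖ₑ ∂ν
          ≤ ENNReal.ofReal C * logMass (1 + β) (volume.real E) := by
  obtain ⟨C, hC, hle⟩ := exists_lintegral_le_of_weakType (α := ℝ) hβ one_le_two
  refine ⟨C, hC, fun μ ν _ hμ hμ2 hν E hE hEfin ε hε => ?_⟩
  have hint : Integrable (E.indicator (1 : ℝ → ℝ)) :=
    (integrable_indicator_iff hE).2 (integrableOn_const hEfin)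
  have h0 (t : ℝ) : 0 ≤ E.indicator (1 : ℝ → ℝ) t :=
    indicator_nonneg (f := (1 : ℝ → ℝ)) (fun _ _ => zero_le_one) t
  have h1 (t : ℝ) : E.indicator (1 : ℝ → ℝ) t ≤ 1 :=
    indicator_apply_le' (fun _ => le_rfl) fun _ => zero_le_one
  set u := conjPoissonInt ε (E.indicator 1)
  have hreal {l b : ℝ} (hb : 0 ≤ b) (h : volume {x | l < |u x|} ≤ ENNReal.ofReal b) :
      μ.real {x | l < |u x|} ≤ b :=
    ENNReal.toReal_le_of_le_ofReal hb ((hμ _).trans h)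
  have hweak₁ (l : ℝ) (hl : 0 < l) := volume_lt_abs_conjPoissonInt_le hint h0 hε hl
  have hweak₂ (l : ℝ) (hl : 0 < l) := volume_lt_abs_conjPoissonInt_le_div_sq hint h0 h1 hε hl
  rw [integral_indicator_one hE] at hweak₁ hweak₂
  calc ∫⁻ x, ‖u x‖ₑ ∂ν
      ≤ ENNReal.ofReal (C * (volume.real E * zygLog (volume.real E) ^ (1 + β))) := by
        refine hle μ ν hμ2 hν _ u measureReal_nonneg (continuous_conjPoissonInt hint hε).measurable
          (fun l hl => hreal (by positivity) (hweak₁ l hl))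
          fun l hl => (hreal (by positivity) (hweak₂ l hl)).trans ?_
        gcongr
        linarith [measureReal_nonneg (μ := volume) (s := E)]
    _ ≤ ENNReal.ofReal C * logMass (1 + β) (volume.real E) := by
        rw [ENNReal.ofReal_mul hC.le]
        gcongr
        exact ofReal_mul_zygLog_le_logMass (by positivity)

variable {f : ℝ → ℝ}

lemma exists_lintegral_conjPoissonInt_le {β : ℝ} (hβ : 0 ≤ β) :
    ∃ C, 0 < C ∧ ∀ (μ ν : Measure ℝ) [IsFiniteMeasure μ], μ ≤ volume → μ.real univ ≤ 2 →
      LogDominated β ν μ → ∀ f : ℝ → ℝ, Measurable f → Integrable f → (∀ t, 0 ≤ f t) →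
        ∀ ε, 0 < ε →
          ∫⁻ x, ‖conjPoissonInt ε f x‖ₑ ∂ν ≤ ENNReal.ofReal C * zygMass (1 + β) f := by
  obtain ⟨C, hC, hle⟩ := exists_lintegral_conjPoissonInt_indicator_le hβ
  refine ⟨C, hC, fun μ ν _ hμ hμ2 hν f hfm hf hf0 ε hε => ?_⟩
  have := hν.isFiniteMeasure hβ
  rw [zygMass, ← lintegral_const_mul' _ _ ENNReal.ofReal_ne_top]
  refine (lintegral_enorm_integral_mul_le hfm hf0 (by unfold Function.uncurry; fun_prop)).trans
    (setLIntegral_mono' measurableSet_Ioi fun l hl => ?_)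
  exact hle μ ν hμ hμ2 hν _ (measurableSet_lt measurable_const hfm)
    (hf.measure_gt_lt_top hl).ne ε hε

lemma conjPoissonInt_sub (hf : Integrable f) {ε δ : ℝ} (hε : 0 < ε) (hδ : 0 < δ) (x : ℝ) :
    conjPoissonInt ε f x - conjPoissonInt δ f x
      = ∫ t, f t * (conjPoissonKer ε (x - t) - conjPoissonKer δ (x - t)) := by
  simp only [mul_sub]
  exact (integral_sub (integrable_mul_conjPoissonKer hf hε x)
    (integrable_mul_conjPoissonKer hf hδ x)).symm

lemma exists_lintegral_conjPoissonInt_indicator_sub_le :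
    ∃ C, ∀ E : Set ℝ, MeasurableSet E → volume E ≠ ∞ → ∀ ε δ, 0 < ε → 0 < δ →
      ∫⁻ x, ‖conjPoissonInt ε (E.indicator 1) x - conjPoissonInt δ (E.indicator 1) x‖ₑ ∂stdCauchy
        ≤ ENNReal.ofReal C * logMass 1 (volume.real E) := by
  obtain ⟨C, -, hle⟩ := exists_lintegral_conjPoissonInt_indicator_le le_rfl
  refine ⟨2 * C, fun E hE hEfin ε δ hε hδ => ?_⟩
  have hint : Integrable (E.indicator (1 : ℝ → ℝ)) :=
    (integrable_indicator_iff hE).2 (integrableOn_const hEfin)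
  have hbound (η : ℝ) (hη : 0 < η) := hle stdCauchy stdCauchy stdCauchy_le_volume (by simp)
    (logDominated_zero_self _) E hE hEfin η hη
  refine (lintegral_mono fun x => enorm_sub_le).trans ?_
  rw [lintegral_add_left (continuous_conjPoissonInt hint hε).measurable.enorm,
    ENNReal.ofReal_mul two_pos.le, ENNReal.ofReal_ofNat, mul_assoc, two_mul]
  simpa only [add_zero] using add_le_add (hbound ε hε) (hbound δ hδ)

lemma tendsto_lintegral_lintegral_levelSet_conjPoissonKer_sub (hfm : Measurable f)
    (hf : Integrable f) (hzyg : zygMass 1 f ≠ ∞) :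
    Tendsto (fun p : ℝ × ℝ => ∫⁻ l in Ioi 0, ∫⁻ x, ‖∫ t, {t | l < f t}.indicator 1 t
      * (conjPoissonKer p.1 (x - t) - conjPoissonKer p.2 (x - t))‖ₑ ∂stdCauchy)
      (𝓝[>] 0 ×ˢ 𝓝[>] 0) (𝓝 0) := by
  obtain ⟨C, hC⟩ := exists_lintegral_conjPoissonInt_indicator_sub_le
  have hmeas (l : ℝ) : MeasurableSet {t | l < f t} := measurableSet_lt measurable_const hfm
  have hfin (l : ℝ) (hl : 0 < l) : volume {t | l < f t} ≠ ∞ := (hf.measure_gt_lt_top hl).ne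
  have hint (l : ℝ) (hl : 0 < l) : Integrable ({t | l < f t}.indicator (1 : ℝ → ℝ)) :=
    (integrable_indicator_iff (hmeas l)).2 (integrableOn_const (hfin l hl))
  have hpos : ∀ᶠ p : ℝ × ℝ in 𝓝[>] 0 ×ˢ 𝓝[>] 0, 0 < p.1 ∧ 0 < p.2 :=
    prod_mem_prod self_mem_nhdsWithin self_mem_nhdsWithin
  rw [← lintegral_zero (μ := volume.restrict (Ioi (0 : ℝ)))]
  refine tendsto_lintegral_filter_of_dominated_convergence
    (fun l => ENNReal.ofReal C * logMass 1 (volume.real {t | l < f t}))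
    (Eventually.of_forall fun p => (measurable_integral_levelSet_mul (k := fun x t =>
      conjPoissonKer p.1 (x - t) - conjPoissonKer p.2 (x - t)) hfm
      (by unfold Function.uncurry; fun_prop)).enorm.lintegral_prod_right') ?_ ?_ ?_
  · filter_upwards [hpos] with p hp
    filter_upwards [ae_restrict_mem measurableSet_Ioi] with l hl
    simp only [← conjPoissonInt_sub (hint l hl) hp.1 hp.2]
    exact hC _ (hmeas l) (hfin l hl) _ _ hp.1 hp.2
  · rw [lintegral_const_mul' _ _ ENNReal.ofReal_ne_top]
    exact ENNReal.mul_ne_top ENNReal.ofReal_ne_top hzyg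
  · filter_upwards [ae_restrict_mem measurableSet_Ioi] with l hl
    refine (tendsto_lintegral_conjPoissonInt_sub (hint l hl)
      (fun t => indicator_nonneg (f := (1 : ℝ → ℝ)) (fun _ _ => zero_le_one) t)
      fun t => indicator_apply_le' (fun _ => le_rfl) fun _ => zero_le_one).congr' ?_
    filter_upwards [hpos] with p hp
    simp only [← conjPoissonInt_sub (hint l hl) hp.1 hp.2]

lemma tendsto_lintegral_conjPoissonInt_sub_of_zygMass (hfm : Measurable f) (hf : Integrable f)
    (hf0 : ∀ t, 0 ≤ f t) (hzyg : zygMass 1 f ≠ ∞) :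
    Tendsto (fun p : ℝ × ℝ => ∫⁻ x, ‖conjPoissonInt p.1 f x - conjPoissonInt p.2 f x‖ₑ ∂stdCauchy)
      (𝓝[>] 0 ×ˢ 𝓝[>] 0) (𝓝 0) := by
  refine tendsto_of_tendsto_of_tendsto_of_le_of_le' tendsto_const_nhds
    (tendsto_lintegral_lintegral_levelSet_conjPoissonKer_sub hfm hf hzyg)
    (Eventually.of_forall fun _ => zero_le) ?_
  filter_upwards [prod_mem_prod self_mem_nhdsWithin self_mem_nhdsWithin] with p ⟨hp₁, hp₂⟩
  simp only [conjPoissonInt_sub hf hp₁ hp₂]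
  exact lintegral_enorm_integral_mul_le hfm hf0 (by unfold Function.uncurry; fun_prop)

lemma exists_integrable_tendsto_lintegral_sub {ι α : Type*} [MeasurableSpace α] {μ : Measure α}
    {L : Filter ι} [L.NeBot] {u : ι → α → ℝ} (hu : ∀ᶠ i in L, Integrable (u i) μ)
    (hcauchy : Tendsto (fun p : ι × ι => ∫⁻ x, ‖u p.1 x - u p.2 x‖ₑ ∂μ) (L ×ˢ L) (𝓝 0)) :
    ∃ g, Measurable g ∧ Integrable g μ ∧
      Tendsto (fun i => ∫⁻ x, ‖u i x - g x‖ₑ ∂μ) L (𝓝 0) := by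
  classical
  set F : ι → Lp ℝ 1 μ := fun i =>
    if h : Integrable (u i) μ then (memLp_one_iff_integrable.2 h).toLp else 0
  have hF : ∀ᶠ i in L, (F i : α → ℝ) =ᵐ[μ] u i := hu.mono fun i hi => by
    simp only [F, dif_pos hi]
    exact MemLp.coeFn_toLp _
  have hFcauchy : Cauchy (map F L) := by
    refine cauchy_map_iff.2
      ⟨inferInstance, uniformity_basis_edist.tendsto_right_iff.2 fun ε hε => ?_⟩
    filter_upwards [hF.prod_mk hF, hcauchy.eventually (gt_mem_nhds hε)] with p ⟨hp₁, hp₂⟩ hp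
    rw [Lp.edist_def, eLpNorm_one_eq_lintegral_enorm]
    refine lt_of_eq_of_lt (lintegral_congr_ae ?_) hp
    filter_upwards [hp₁, hp₂] with x hx₁ hx₂
    simp [hx₁, hx₂]
  obtain ⟨G, hG⟩ := CompleteSpace.complete hFcauchy
  refine ⟨G, (Lp.stronglyMeasurable G).measurable, L1.integrable_coeFn G, ?_⟩
  have := tendsto_iff_edist_tendsto_0.1 hG
  refine this.congr' ?_
  filter_upwards [hF] with i hi
  rw [Lp.edist_def, eLpNorm_one_eq_lintegral_enorm]
  exact lintegral_congr_ae (hi.mono fun x hx => by simp [hx])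

lemma exists_seq_tendsto_ae_of_lintegral {α : Type*} [MeasurableSpace α] {μ : Measure α}
    {u : ℝ → α → ℝ} {g : α → ℝ} (hu : ∀ ε, 0 < ε → Measurable (u ε)) (hg : Measurable g)
    (hlim : Tendsto (fun ε => ∫⁻ x, ‖u ε x - g x‖ₑ ∂μ) (𝓝[>] 0) (𝓝 0)) :
    ∃ ε : ℕ → ℝ, (∀ n, 0 < ε n) ∧ ∀ᵐ x ∂μ, Tendsto (fun n => u (ε n) x) atTop (𝓝 (g x)) := by
  set δ : ℕ → ℝ := fun n => 1 / ((n : ℝ) + 1)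
  have hδ0 (n : ℕ) : 0 < δ n := Nat.one_div_pos_of_nat
  have hδ : Tendsto δ atTop (𝓝[>] 0) := tendsto_nhdsWithin_iff.2
    ⟨tendsto_one_div_add_atTop_nhds_zero_nat, Eventually.of_forall hδ0⟩
  have hmeas : TendstoInMeasure μ (fun n => u (δ n)) atTop g := by
    refine tendstoInMeasure_of_tendsto_eLpNorm one_ne_zero
      (fun n => (hu _ (hδ0 n)).aestronglyMeasurable) hg.aestronglyMeasurable ?_
    simpa only [eLpNorm_one_eq_lintegral_enorm] using! hlim.comp hδ
  obtain ⟨ns, -, hns⟩ := hmeas.exists_seq_tendsto_ae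
  exact ⟨fun n => δ (ns n), fun n => hδ0 _, hns⟩

lemma volume_absolutelyContinuous_stdCauchy : volume ≪ stdCauchy := by
  rw [stdCauchy_eq_withDensity]
  refine withDensity_absolutelyContinuous' (by fun_prop) (ae_of_all _ fun s => ?_)
  rw [ne_eq, ENNReal.ofReal_eq_zero, not_le, poissonKer]
  positivity

lemma exists_ae_tendsto_integral_mul_truncHilbertKer {β : ℝ} (hβ : 0 ≤ β) :
    ∃ C, 0 < C ∧ ∀ f : ℝ → ℝ, Measurable f → Integrable f → (∀ t, 0 ≤ f t) → zygMass 1 f ≠ ∞ →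
      ∃ g : ℝ → ℝ, Measurable g ∧
        (∀ᵐ x, Tendsto (fun δ => ∫ t, f t * truncHilbertKer δ (x - t)) (𝓝[>] 0) (𝓝 (g x))) ∧
        ∀ (μ ν : Measure ℝ) [IsFiniteMeasure μ], μ ≤ volume → μ.real univ ≤ 2 →
          LogDominated β ν μ → ∫⁻ x, ‖g x‖ₑ ∂ν ≤ ENNReal.ofReal C * zygMass (1 + β) f := by
  obtain ⟨C, hC, hle⟩ := exists_lintegral_conjPoissonInt_le hβ
  obtain ⟨C₀, -, hle₀⟩ := exists_lintegral_conjPoissonInt_le le_rfl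
  rw [add_zero] at hle₀
  refine ⟨C, hC, fun f hfm hf hf0 hzyg => ?_⟩
  have hmeas (ε : ℝ) (hε : 0 < ε) : Measurable (conjPoissonInt ε f) :=
    (continuous_conjPoissonInt hf hε).measurable
  have hint : ∀ᶠ ε in 𝓝[>] 0, Integrable (conjPoissonInt ε f) stdCauchy :=
    eventually_mem_nhdsWithin.mono fun ε hε => ⟨(hmeas ε hε).aestronglyMeasurable,
      (hle₀ stdCauchy stdCauchy stdCauchy_le_volume (by simp) (logDominated_zero_self _) f hfm hf
        hf0 ε hε).trans_lt (ENNReal.mul_lt_top ENNReal.ofReal_lt_top hzyg.lt_top)⟩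
  obtain ⟨g, hgm, hg, hlim⟩ := exists_integrable_tendsto_lintegral_sub hint
    (tendsto_lintegral_conjPoissonInt_sub_of_zygMass hfm hf hf0 hzyg)
  refine ⟨g, hgm, ae_tendsto_integral_mul_truncHilbertKer hf hg hlim, fun μ ν _ hμ hμ2 hν => ?_⟩
  obtain ⟨ε, hε0, hε⟩ := exists_seq_tendsto_ae_of_lintegral hmeas hgm hlim
  have hνac : ν ≪ stdCauchy := (hν.absolutelyContinuous.trans hμ.absolutelyContinuous).trans
    volume_absolutelyContinuous_stdCauchy
  rw [← eLpNorm_one_eq_lintegral_enorm]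
  refine Lp.eLpNorm_le_of_ae_tendsto (Eventually.of_forall fun n => ?_)
    (fun n => (hmeas _ (hε0 n)).aestronglyMeasurable) (hνac.ae_le hε)
  rw [eLpNorm_one_eq_lintegral_enorm]
  exact hle μ ν hμ hμ2 hν f hfm hf hf0 _ (hε0 n)

/-! ### The remainder kernel on the interval -/

/-- The difference between the kernel `√(1 - t²) / (π (x - t) √(1 - x²))` of `hatT` and the Hilbert
kernel `1 / (π (x - t))`, with the value `0 / 0 = 0` on the diagonal. -/
def remainderKer (x t : ℝ) : ℝ := (√(1 - t ^ 2) - √(1 - x ^ 2)) / (Real.pi * (x - t) * √(1 - x ^ 2))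

lemma measurable_remainderKer : Measurable (Function.uncurry remainderKer) := by
  unfold Function.uncurry remainderKer
  fun_prop

lemma one_sub_sq_pos {x : ℝ} (hx : x ∈ Ioo (-1) 1) : 0 < 1 - x ^ 2 := by
  nlinarith [hx.1, hx.2]

lemma abs_remainderKer_le {x t : ℝ} (hx : x ∈ Ioo (-1) 1) (ht : t ∈ Ioo (-1) 1) :
    |remainderKer x t| ≤ (√(1 - x ^ 2) * (√(1 - t ^ 2) + √(1 - x ^ 2)))⁻¹ := by
  have ha : 0 < √(1 - x ^ 2) := Real.sqrt_pos.2 (one_sub_sq_pos hx)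
  have hb : 0 < √(1 - t ^ 2) := Real.sqrt_pos.2 (one_sub_sq_pos ht)
  have hab : (√(1 - t ^ 2) - √(1 - x ^ 2)) * (√(1 - t ^ 2) + √(1 - x ^ 2)) = (x - t) * (x + t) := by
    linear_combination Real.sq_sqrt (one_sub_sq_pos ht).le - Real.sq_sqrt (one_sub_sq_pos hx).le
  rw [remainderKer]
  set a := √(1 - x ^ 2)
  set b := √(1 - t ^ 2)
  rcases eq_or_ne x t with rfl | hne
  · simp only [sub_self, mul_zero, zero_mul, div_zero, abs_zero]
    positivity
  have hfactor : (b - a) / (Real.pi * (x - t) * a) = (x + t) / Real.pi * (a * (b + a))⁻¹ := by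
    have := sub_ne_zero.2 hne
    field_simp
    linear_combination hab
  rw [hfactor, abs_mul, abs_of_pos (by positivity : 0 < (a * (b + a))⁻¹)]
  refine mul_le_of_le_one_left (by positivity) ?_
  rw [abs_div, abs_of_pos Real.pi_pos, div_le_one Real.pi_pos]
  exact (abs_le.2 ⟨by linarith [hx.1, ht.1], by linarith [hx.2, ht.2]⟩).trans Real.two_le_pi

lemma abs_remainderKer_le_inv {x t : ℝ} (hx : x ∈ Ioo (-1) 1) (ht : t ∈ Ioo (-1) 1) :
    |remainderKer x t| ≤ (1 - x ^ 2)⁻¹ := by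
  have ha : 0 < √(1 - x ^ 2) := Real.sqrt_pos.2 (one_sub_sq_pos hx)
  refine (abs_remainderKer_le hx ht).trans ?_
  nth_rw 3 [← Real.mul_self_sqrt (one_sub_sq_pos hx).le]
  gcongr
  linarith [Real.sqrt_nonneg (1 - t ^ 2)]

lemma abs_remainderKer_le_inv_sqrt_mul {x t : ℝ} (hx : x ∈ Ioo (-1) 1) (ht : t ∈ Ioo (-1) 1) :
    |remainderKer x t| ≤ (√(1 - x ^ 2))⁻¹ * (√(1 - t ^ 2))⁻¹ := by
  have ha : 0 < √(1 - x ^ 2) := Real.sqrt_pos.2 (one_sub_sq_pos hx)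
  have hb : 0 < √(1 - t ^ 2) := Real.sqrt_pos.2 (one_sub_sq_pos ht)
  refine (abs_remainderKer_le hx ht).trans ?_
  rw [← mul_inv]
  gcongr
  linarith

instance : IsFiniteMeasure μI := inferInstanceAs (IsFiniteMeasure (volume.restrict (Ioo (-1) 1)))

lemma ae_mem_Ioo_μI : ∀ᵐ x ∂μI, x ∈ Ioo (-1 : ℝ) 1 := ae_restrict_mem measurableSet_Ioo

lemma μI_real_univ : μI.real univ = 2 := by
  rw [μI, measureReal_restrict_apply_univ, Real.volume_real_Ioo_of_le (by norm_num)]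
  norm_num

lemma μI_one_sub_sq_lt_le (r : ℝ) : μI {x | 1 - x ^ 2 < r} ≤ ENNReal.ofReal (2 * r) := by
  have hsub : {x : ℝ | 1 - x ^ 2 < r} ∩ Ioo (-1) 1 ⊆ Ioo (-1) (r - 1) ∪ Ioo (1 - r) 1 := by
    rintro x ⟨hr : 1 - x ^ 2 < r, hx⟩
    rcases le_total x 0 with h | h
    · exact Or.inl ⟨hx.1, by nlinarith [hx.1]⟩
    · exact Or.inr ⟨by nlinarith [hx.2], hx.2⟩
  rw [μI, Measure.restrict_apply' measurableSet_Ioo]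
  refine (measure_mono hsub).trans ((measure_union_le _ _).trans_eq ?_)
  simp only [Real.volume_Ioo, sub_neg_eq_add, sub_add_cancel, sub_sub_cancel]
  rw [← two_mul, ENNReal.ofReal_mul zero_le_two, ENNReal.ofReal_ofNat]

lemma setLIntegral_inv_sqrt_one_sub_sq_le (E : Set ℝ) :
    ∫⁻ t in E, ENNReal.ofReal (√(1 - t ^ 2))⁻¹ ∂μI ≤ ENNReal.ofReal √(8 * μI.real E) := by
  have hρ (r : ℝ) : μI {x | 2 * (1 - x ^ 2) < r} ≤ ENNReal.ofReal r := by
    have := μI_one_sub_sq_lt_le (r / 2)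
    rw [mul_div_cancel₀ r two_ne_zero] at this
    simpa only [lt_div_iff₀' (zero_lt_two' ℝ)] using this
  have hw : AntitoneOn (fun s => (√(s / 2))⁻¹) (Ioi 0) := fun s hs t _ hst =>
    inv_anti₀ (Real.sqrt_pos.2 (half_pos hs)) (by gcongr)
  have hrearr := setLIntegral_comp_le_of_antitoneOn (by fun_prop) hρ (by fun_prop) hw
    (fun t => by positivity) E
  simp only [mul_div_cancel_left₀ _ (two_ne_zero' ℝ)] at hrearr
  refine hrearr.trans ?_
  rcases (measureReal_nonneg (μ := μI) (s := E)).eq_or_lt with h | h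
  · simp [← h]
  have hsqrt {s : ℝ} (hs : s ∈ Ioo 0 (μI.real E)) :
      ENNReal.ofReal (√(s / 2))⁻¹ = ENNReal.ofReal √2 * ENNReal.ofReal (s ^ (-(1 / 2) : ℝ)) := by
    rw [← ENNReal.ofReal_mul (by positivity), Real.rpow_neg hs.1.le, ← Real.sqrt_eq_rpow,
      Real.sqrt_div hs.1.le, inv_div, div_eq_mul_inv]
  rw [setLIntegral_congr_fun measurableSet_Ioo fun s hs => hsqrt hs,
    lintegral_const_mul' _ _ ENNReal.ofReal_ne_top, lintegral_Ioo_rpow h (by norm_num),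
    ← ENNReal.ofReal_mul (by positivity)]
  refine (congrArg ENNReal.ofReal ?_).le
  rw [show (8 : ℝ) = 2 * 2 ^ 2 by norm_num, mul_assoc, Real.sqrt_mul zero_le_two,
    Real.sqrt_mul (by positivity), Real.sqrt_sq zero_le_two, Real.sqrt_eq_rpow (μI.real E)]
  norm_num
  ring

variable {E : Set ℝ} {x : ℝ}

lemma abs_setIntegral_remainderKer_le (hx : x ∈ Ioo (-1) 1) :
    |∫ t in E, remainderKer x t ∂μI| ≤ (1 - x ^ 2)⁻¹ * μI.real E := by
  rw [← Real.norm_eq_abs]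
  refine norm_setIntegral_le_of_norm_le_const_ae' (measure_lt_top μI E) ?_
  filter_upwards [ae_mem_Ioo_μI] with t ht _
  exact abs_remainderKer_le_inv hx ht

lemma abs_setIntegral_remainderKer_le_sqrt (hx : x ∈ Ioo (-1) 1) :
    |∫ t in E, remainderKer x t ∂μI| ≤ (√(1 - x ^ 2))⁻¹ * √(8 * μI.real E) := by
  rw [← ENNReal.ofReal_le_ofReal_iff (by positivity), ← Real.enorm_eq_ofReal_abs]
  calc ‖∫ t in E, remainderKer x t ∂μI‖ₑ
      ≤ ∫⁻ t in E, ‖remainderKer x t‖ₑ ∂μI := enorm_integral_le_lintegral_enorm _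
    _ ≤ ∫⁻ t in E, ENNReal.ofReal (√(1 - x ^ 2))⁻¹ * ENNReal.ofReal (√(1 - t ^ 2))⁻¹ ∂μI := by
        refine lintegral_mono_ae (ae_restrict_of_ae ?_)
        filter_upwards [ae_mem_Ioo_μI] with t ht
        rw [← ENNReal.ofReal_mul (by positivity), Real.enorm_eq_ofReal_abs]
        exact ENNReal.ofReal_le_ofReal (abs_remainderKer_le_inv_sqrt_mul hx ht)
    _ ≤ ENNReal.ofReal ((√(1 - x ^ 2))⁻¹ * √(8 * μI.real E)) := by
        rw [lintegral_const_mul' _ _ ENNReal.ofReal_ne_top, ENNReal.ofReal_mul (by positivity)]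
        gcongr
        exact setLIntegral_inv_sqrt_one_sub_sq_le E

lemma μI_real_le_of_forall_one_sub_sq_lt {S : Set ℝ} {r : ℝ} (hr : 0 ≤ r)
    (hS : ∀ x ∈ S, x ∈ Ioo (-1) 1 → 1 - x ^ 2 < r) : μI.real S ≤ 2 * r := by
  refine ENNReal.toReal_le_of_le_ofReal (by positivity)
    (le_trans (measure_mono_ae ?_) (μI_one_sub_sq_lt_le r))
  filter_upwards [ae_mem_Ioo_μI] with x hx hxS
  exact hS x hxS hx

lemma μI_real_lt_abs_setIntegral_remainderKer_le {l : ℝ} (hl : 0 < l) :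
    μI.real {x | l < |∫ t in E, remainderKer x t ∂μI|} ≤ 2 * (μI.real E / l) := by
  refine μI_real_le_of_forall_one_sub_sq_lt (by positivity) fun x hlx hx => ?_
  have := hlx.trans_le (abs_setIntegral_remainderKer_le hx)
  rwa [inv_mul_eq_div, lt_div_comm₀ hl (one_sub_sq_pos hx)] at this

lemma μI_real_lt_abs_setIntegral_remainderKer_le_div_sq {l : ℝ} (hl : 0 < l) :
    μI.real {x | l < |∫ t in E, remainderKer x t ∂μI|} ≤ 2 * (8 * μI.real E / l ^ 2) := by
  refine μI_real_le_of_forall_one_sub_sq_lt (by positivity) fun x hlx hx => ?_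
  have := hlx.trans_le (abs_setIntegral_remainderKer_le_sqrt hx)
  rw [inv_mul_eq_div, ← Real.sqrt_div (by positivity), Real.lt_sqrt hl.le] at this
  rwa [lt_div_comm₀ (by positivity) (one_sub_sq_pos hx)] at this

lemma μI_le_volume : μI ≤ volume := Measure.restrict_le_self

lemma exists_lintegral_integral_remainderKer_le {β : ℝ} (hβ : 0 ≤ β) :
    ∃ C, 0 < C ∧ ∀ ν : Measure ℝ, LogDominated β ν μI → ∀ f : ℝ → ℝ, Measurable f →
      Integrable f → (∀ t, 0 ≤ f t) →
        ∫⁻ x, ‖∫ t, f t * remainderKer x t ∂μI‖ₑ ∂ν ≤ ENNReal.ofReal C * zygMass (1 + β) f := by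
  obtain ⟨C, hC, hle⟩ := exists_lintegral_le_of_weakType (α := ℝ) hβ (by norm_num : (1 : ℝ) ≤ 16)
  refine ⟨C, hC, fun ν hν f hfm hf hf0 => ?_⟩
  have := hν.isFiniteMeasure hβ
  rw [zygMass, ← lintegral_const_mul' _ _ ENNReal.ofReal_ne_top]
  refine (lintegral_enorm_integral_mul_le hfm hf0 measurable_remainderKer).trans
    (setLIntegral_mono' measurableSet_Ioi fun l hl => ?_)
  have hE : MeasurableSet {t | l < f t} := measurableSet_lt measurable_const hfm
  have hvol : μI.real {t | l < f t} ≤ volume.real {t | l < f t} :=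
    ENNReal.toReal_mono (hf.measure_gt_lt_top hl).ne (μI_le_volume _)
  set E := {t | l < f t}
  simp only [← indicator_mul_left, Pi.one_apply, one_mul, integral_indicator hE]
  calc ∫⁻ x, ‖∫ t in E, remainderKer x t ∂μI‖ₑ ∂ν
      ≤ ENNReal.ofReal (C * (μI.real E * zygLog (μI.real E) ^ (1 + β))) := by
        refine hle μI ν μI_real_univ.le hν _ _ measureReal_nonneg
          (measurable_remainderKer.stronglyMeasurable.integral_prod_right
            (ν := μI.restrict E)).measurable (fun l hl => ?_) fun l hl => ?_
        · refine (μI_real_lt_abs_setIntegral_remainderKer_le hl).trans ?_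
          rw [← mul_div_assoc]
          gcongr
          norm_num
        · refine (μI_real_lt_abs_setIntegral_remainderKer_le_div_sq hl).trans_eq ?_
          ring
    _ ≤ ENNReal.ofReal C * logMass (1 + β) (volume.real E) := by
        rw [ENNReal.ofReal_mul hC.le]
        gcongr
        exact (ofReal_mul_zygLog_le_logMass (by positivity)).trans (logMass_mono _ hvol)

/-! ### The operator on the interval -/

/-- The kernel of `hatT`, truncated at distance `δ` from the diagonal. -/
def airfoilKer (δ x t : ℝ) : ℝ := truncHilbertKer δ (x - t) * (√(1 - t ^ 2) / √(1 - x ^ 2))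

section

variable {f : ℝ → ℝ} {x δ : ℝ}

lemma airfoilKer_eq_add (hx : x ∈ Ioo (-1) 1) (t : ℝ) :
    airfoilKer δ x t =
      truncHilbertKer δ (x - t) + {t | δ ≤ |x - t|}.indicator (remainderKer x) t := by
  have ha : √(1 - x ^ 2) ≠ 0 := (Real.sqrt_pos.2 (one_sub_sq_pos hx)).ne'
  by_cases h : δ ≤ |x - t|
  · rw [airfoilKer, truncHilbertKer, if_pos h, indicator_of_mem (by exact h), remainderKer]
    rcases eq_or_ne x t with rfl | hne
    · simp
    · have := sub_ne_zero.2 hne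
      field_simp
      ring
  · rw [airfoilKer, truncHilbertKer, if_neg h, indicator_of_notMem (by exact h), zero_mul, zero_add]

lemma integrable_mul_truncHilbertKer {μ : Measure ℝ} (hf : Integrable f μ) (hδ : 0 < δ) (x : ℝ) :
    Integrable (fun t => f t * truncHilbertKer δ (x - t)) μ := by
  refine hf.mul_bdd (c := (Real.pi * δ)⁻¹)
    ((measurable_truncHilbertKer δ).comp (measurable_const.sub measurable_id)).aestronglyMeasurable
    (ae_of_all _ fun t => ?_)
  rw [truncHilbertKer, Real.norm_eq_abs]
  split_ifs with h
  · rw [abs_inv, abs_mul, abs_of_pos Real.pi_pos]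
    gcongr
  · rw [abs_zero]
    positivity

lemma integrable_mul_remainderKer (hf : Integrable f μI) (hx : x ∈ Ioo (-1) 1) :
    Integrable (fun t => f t * remainderKer x t) μI := by
  refine hf.mul_bdd (c := (1 - x ^ 2)⁻¹)
    measurable_remainderKer.of_uncurry_left.aestronglyMeasurable ?_
  filter_upwards [ae_mem_Ioo_μI] with t ht
  exact abs_remainderKer_le_inv hx ht

lemma measurableSet_le_abs_sub (δ x : ℝ) : MeasurableSet {t : ℝ | δ ≤ |x - t|} :=
  measurableSet_le (by fun_prop) (by fun_prop)

lemma integrable_mul_indicator_remainderKer (hf : Integrable f μI) (hx : x ∈ Ioo (-1) 1) :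
    Integrable (fun t => f t * {t | δ ≤ |x - t|}.indicator (remainderKer x) t) μI := by
  simpa only [← indicator_mul_right {t | δ ≤ |x - t|} f] using
    (integrable_mul_remainderKer hf hx).indicator (measurableSet_le_abs_sub δ x)

lemma integrable_mul_airfoilKer (hf : Integrable f μI) (hδ : 0 < δ) (hx : x ∈ Ioo (-1) 1) :
    Integrable (fun t => f t * airfoilKer δ x t) μI := by
  simp only [airfoilKer_eq_add hx, mul_add]
  exact (integrable_mul_truncHilbertKer hf hδ x).add (integrable_mul_indicator_remainderKer hf hx)

lemma tendsto_integral_mul_indicator_remainderKer (hf : Integrable f μI) (hx : x ∈ Ioo (-1) 1) :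
    Tendsto (fun δ => ∫ t, f t * {t | δ ≤ |x - t|}.indicator (remainderKer x) t ∂μI) (𝓝[>] 0)
      (𝓝 (∫ t, f t * remainderKer x t ∂μI)) := by
  have hint := integrable_mul_remainderKer hf hx
  simp only [← indicator_mul_right {t | _ ≤ |x - t|} f]
  refine tendsto_integral_filter_of_dominated_convergence _
    (Eventually.of_forall fun δ =>
      hint.aestronglyMeasurable.indicator (measurableSet_le_abs_sub δ x))
    (Eventually.of_forall fun δ => ae_of_all _ fun t => norm_indicator_le_norm_self _ _)
    hint.norm (ae_of_all _ fun t => ?_)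
  rcases eq_or_ne x t with rfl | hne
  · simp [indicator, remainderKer]
  · refine tendsto_const_nhds.congr' ?_
    filter_upwards [nhdsWithin_le_nhds (gt_mem_nhds (abs_pos.2 (sub_ne_zero.2 hne)))] with δ hδ
    exact (indicator_of_mem (s := {t | δ ≤ |x - t|}) hδ.le fun t => f t * remainderKer x t).symm

lemma integral_mul_airfoilKer (hf : Integrable f) (hfI : ∀ t ∉ Ioo (-1) 1, f t = 0) (hδ : 0 < δ)
    (hx : x ∈ Ioo (-1) 1) :
    ∫ t, f t * airfoilKer δ x t ∂μI = (∫ t, f t * truncHilbertKer δ (x - t))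
      + ∫ t, f t * {t | δ ≤ |x - t|}.indicator (remainderKer x) t ∂μI := by
  have hvol : ∫ t, f t * truncHilbertKer δ (x - t) = ∫ t, f t * truncHilbertKer δ (x - t) ∂μI :=
    (setIntegral_eq_integral_of_forall_compl_eq_zero fun t ht => by rw [hfI t ht, zero_mul]).symm
  rw [hvol]
  simp only [airfoilKer_eq_add hx, mul_add]
  exact integral_add (integrable_mul_truncHilbertKer hf.restrict hδ x)
    (integrable_mul_indicator_remainderKer hf.restrict hx)

lemma exists_ae_tendsto_integral_mul_airfoilKer {β : ℝ} (hβ : 0 ≤ β) :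
    ∃ C, 0 < C ∧ ∀ f : ℝ → ℝ, Measurable f → Integrable f → (∀ t, 0 ≤ f t) →
      (∀ t ∉ Ioo (-1) 1, f t = 0) → zygMass 1 f ≠ ∞ → ∃ h : ℝ → ℝ, Measurable h ∧
        (∀ᵐ x ∂μI, Tendsto (fun δ => ∫ t, f t * airfoilKer δ x t ∂μI) (𝓝[>] 0) (𝓝 (h x))) ∧
        ∀ ν, LogDominated β ν μI → ∫⁻ x, ‖h x‖ₑ ∂ν ≤ ENNReal.ofReal C * zygMass (1 + β) f := by
  obtain ⟨C₁, hC₁, hHilbert⟩ := exists_ae_tendsto_integral_mul_truncHilbertKer hβ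
  obtain ⟨C₂, hC₂, hrem⟩ := exists_lintegral_integral_remainderKer_le hβ
  refine ⟨C₁ + C₂, by positivity, fun f hfm hf hf0 hfI hzyg => ?_⟩
  obtain ⟨g, hgm, hg, hgle⟩ := hHilbert f hfm hf hf0 hzyg
  refine ⟨fun x => g x + ∫ t, f t * remainderKer x t ∂μI, ?_, ?_, fun ν hν => ?_⟩
  · have : Measurable fun p : ℝ × ℝ => f p.2 * remainderKer p.1 p.2 :=
      (hfm.comp measurable_snd).mul measurable_remainderKer
    exact hgm.add this.stronglyMeasurable.integral_prod_right.measurable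
  · filter_upwards [ae_mem_Ioo_μI, μI_le_volume.absolutelyContinuous.ae_le hg] with x hx hgx
    refine (hgx.add (tendsto_integral_mul_indicator_remainderKer hf.restrict hx)).congr' ?_
    filter_upwards [self_mem_nhdsWithin] with δ hδ
    exact (integral_mul_airfoilKer hf hfI hδ hx).symm
  · rw [ENNReal.ofReal_add hC₁.le hC₂.le, add_mul]
    calc ∫⁻ x, ‖g x + ∫ t, f t * remainderKer x t ∂μI‖ₑ ∂ν
        ≤ ∫⁻ x, ‖g x‖ₑ ∂ν + ∫⁻ x, ‖∫ t, f t * remainderKer x t ∂μI‖ₑ ∂ν := by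
          rw [← lintegral_add_left hgm.enorm]
          exact lintegral_mono fun x => enorm_add_le _ _
      _ ≤ _ := add_le_add (hgle μI ν μI_le_volume μI_real_univ.le hν) (hrem ν hν f hfm hf hf0)

end

lemma integral_ofReal_mul_airfoilKer (f : ℝ → ℂ) {δ x : ℝ} :
    ∫ t, f t * (airfoilKer δ x t : ℂ) ∂μI = -(√(1 - x ^ 2) : ℂ)⁻¹ * ((Real.pi : ℂ)⁻¹ *
      ∫ y in {y : ℝ | y ∈ Ioo (-1 : ℝ) 1 ∧ δ ≤ |y - x|}, (√(1 - y ^ 2) : ℂ) * f y / (y - x)) := by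
  have hset : {y : ℝ | y ∈ Ioo (-1 : ℝ) 1 ∧ δ ≤ |y - x|} = Ioo (-1) 1 ∩ {y | δ ≤ |x - y|} := by
    ext y
    simp only [mem_ofPred_eq, mem_inter_iff, abs_sub_comm]
  rw [hset, ← setIntegral_indicator (measurableSet_le_abs_sub δ x), ← integral_const_mul,
    ← integral_const_mul]
  congr 1 with y
  by_cases hy : δ ≤ |x - y|
  · rw [indicator_of_mem (by exact hy), airfoilKer, truncHilbertKer, if_pos hy, ← neg_sub y x]
    push_cast
    rw [mul_neg, inv_neg, mul_inv]
    ring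
  · rw [indicator_of_notMem (by exact hy), airfoilKer, truncHilbertKer, if_neg hy]
    simp

lemma hatT_eq_of_tendsto {f : ℝ → ℂ} {x : ℝ} {c : ℂ} (hx : x ∈ Ioo (-1) 1)
    (h : Tendsto (fun δ => ∫ t, f t * (airfoilKer δ x t : ℂ) ∂μI) (𝓝[>] 0) (𝓝 c)) :
    hatT f x = c := by
  have ha : (√(1 - x ^ 2) : ℂ) ≠ 0 :=
    Complex.ofReal_ne_zero.2 (Real.sqrt_pos.2 (one_sub_sq_pos hx)).ne'
  have hlim := h.const_mul (-(√(1 - x ^ 2) : ℂ))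
  simp only [integral_ofReal_mul_airfoilKer, ← mul_assoc, neg_mul_neg, mul_inv_cancel₀ ha,
    one_mul] at hlim
  rw [hatT, FHT, hlim.limUnder_eq, ← mul_assoc, neg_mul_neg, inv_mul_cancel₀ ha, one_mul]

lemma sum_I_pow_mul_max_re (z : ℂ) :
    ∑ j : Fin 4, Complex.I ^ (j : ℕ) * (max ((-Complex.I) ^ (j : ℕ) * z).re 0 : ℝ) = z := by
  have hmax (a : ℝ) : max a 0 - max (-a) 0 = a := by
    exact max_zero_sub_max_neg_zero_eq_self a
  apply Complex.ext <;> simp [Fin.sum_univ_four, pow_succ, hmax, ← sub_eq_add_neg]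

lemma max_re_neg_I_pow_mul_le_norm (j : ℕ) (z : ℂ) : max ((-Complex.I) ^ j * z).re 0 ≤ ‖z‖ :=
  max_le ((Complex.re_le_norm _).trans_eq (by simp)) (norm_nonneg z)

lemma zygMass_mono {α : ℝ} {f g : ℝ → ℝ} (hg : Integrable g) (hfg : ∀ t, f t ≤ g t) :
    zygMass α f ≤ zygMass α g :=
  setLIntegral_mono' measurableSet_Ioi fun _ hl => logMass_mono α
    (measureReal_mono (fun t ht => ht.trans_le (hfg t)) (hg.measure_gt_lt_top hl).ne)

lemma sum_I_pow_mul_integral_max_re {f : ℝ → ℂ} {δ x : ℝ} (hf : Integrable f μI) (hδ : 0 < δ)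
    (hx : x ∈ Ioo (-1) 1) :
    ∑ j : Fin 4, Complex.I ^ (j : ℕ) *
        (∫ t, max ((-Complex.I) ^ (j : ℕ) * f t).re 0 * airfoilKer δ x t ∂μI : ℝ)
      = ∫ t, f t * (airfoilKer δ x t : ℂ) ∂μI := by
  have hint (j : Fin 4) : Integrable (fun t => Complex.I ^ (j : ℕ) *
      ((max ((-Complex.I) ^ (j : ℕ) * f t).re 0 * airfoilKer δ x t : ℝ) : ℂ)) μI :=
    (integrable_mul_airfoilKer (hf.const_mul _).re.pos_part hδ hx).ofReal.const_mul _
  simp only [← integral_complex_ofReal, ← integral_const_mul]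
  rw [← integral_finsetSum _ fun j _ => hint j]
  congr 1 with t
  simp only [Complex.ofReal_mul, ← mul_assoc, ← Finset.sum_mul, sum_I_pow_mul_max_re]

lemma exists_ae_eq_hatT_of_integrable {β : ℝ} (hβ : 0 ≤ β) :
    ∃ C, 0 < C ∧ ∀ f : ℝ → ℂ, Measurable f → Integrable f → (∀ t ∉ Ioo (-1) 1, f t = 0) →
      zygMass 1 (fun t => ‖f t‖) ≠ ∞ → ∃ h : ℝ → ℂ, Measurable h ∧ hatT f =ᵐ[μI] h ∧
        ∀ ν, LogDominated β ν μI →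
          ∫⁻ x, ‖h x‖ₑ ∂ν ≤ ENNReal.ofReal C * zygMass (1 + β) fun t => ‖f t‖ := by
  obtain ⟨C, hC, hreal⟩ := exists_ae_tendsto_integral_mul_airfoilKer hβ
  refine ⟨4 * C, by positivity, fun f hfm hf hfI hzyg => ?_⟩
  set φ : Fin 4 → ℝ → ℝ := fun j t => max ((-Complex.I) ^ (j : ℕ) * f t).re 0
  have hφle (j : Fin 4) (t : ℝ) : φ j t ≤ ‖f t‖ := max_re_neg_I_pow_mul_le_norm j (f t)
  have hφ0 (j : Fin 4) (t : ℝ) : 0 ≤ φ j t := le_max_right _ _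
  have hφm (j : Fin 4) : Measurable (φ j) := by fun_prop
  have hφ (j : Fin 4) : Integrable (φ j) := hf.norm.mono' (hφm j).aestronglyMeasurable
    (ae_of_all _ fun t => by rw [Real.norm_of_nonneg (hφ0 j t)]; exact hφle j t)
  choose h hhm hlim hle using fun j : Fin 4 => hreal (φ j) (hφm j) (hφ j) (hφ0 j)
    (fun t ht => by simp [φ, hfI t ht]) (ne_top_of_le_ne_top hzyg (zygMass_mono hf.norm (hφle j)))
  refine ⟨fun x => ∑ j : Fin 4, Complex.I ^ (j : ℕ) * (h j x : ℂ), by fun_prop, ?_, fun ν hν => ?_⟩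
  · filter_upwards [ae_mem_Ioo_μI, ae_all_iff.2 hlim] with x hx hlimx
    refine hatT_eq_of_tendsto hx ((tendsto_finsetSum Finset.univ fun j _ =>
      ((Complex.continuous_ofReal.tendsto _).comp (hlimx j)).const_mul _).congr' ?_)
    filter_upwards [self_mem_nhdsWithin] with δ hδ
    exact sum_I_pow_mul_integral_max_re hf.restrict hδ hx
  · calc ∫⁻ x, ‖∑ j : Fin 4, Complex.I ^ (j : ℕ) * (h j x : ℂ)‖ₑ ∂ν
        ≤ ∫⁻ x, ∑ j, ‖h j x‖ₑ ∂ν := lintegral_mono fun x => (enorm_sum_le _ _).trans_eq (by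
          simp [← ofReal_norm])
      _ = ∑ j, ∫⁻ x, ‖h j x‖ₑ ∂ν := lintegral_finsetSum _ fun j _ => (hhm j).enorm
      _ ≤ ∑ _j : Fin 4, ENNReal.ofReal C * zygMass (1 + β) fun t => ‖f t‖ :=
        Finset.sum_le_sum fun j _ => (hle j ν hν).trans
          (mul_le_mul_right (zygMass_mono hf.norm (hφle j)) _)
      _ = ENNReal.ofReal (4 * C) * zygMass (1 + β) fun t => ‖f t‖ := by
        simp [ENNReal.ofReal_mul, mul_assoc]

lemma hatT_congr_ae {f g : ℝ → ℂ} (h : f =ᵐ[μI] g) : hatT f = hatT g := by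
  have hcongr (x ε : ℝ) :
      ∫ t in {t | t ∈ Ioo (-1 : ℝ) 1 ∧ ε ≤ |t - x|}, (√(1 - t ^ 2) : ℂ) * f t / (t - x)
        = ∫ t in {t | t ∈ Ioo (-1 : ℝ) 1 ∧ ε ≤ |t - x|}, (√(1 - t ^ 2) : ℂ) * g t / (t - x) := by
    refine integral_congr_ae ?_
    filter_upwards [ae_restrict_of_ae_restrict_of_subset (fun t ht => ht.1) h] with t ht
    rw [ht]
  ext x
  simp only [hatT, FHT, hcongr]

/-! ### Distribution functions and decreasing rearrangements -/

section

variable {f : ℝ → ℂ}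

lemma distFun_eq_measureReal (f : ℝ → ℂ) (l : ℝ) : distFun f l = μI.real {x | l < ‖f x‖} := by
  rw [measureReal_def, μI, Measure.restrict_apply' measurableSet_Ioo, inter_comm]
  rfl

lemma distFun_antitone (f : ℝ → ℂ) : Antitone (distFun f) := fun l l' h => by
  simp only [distFun_eq_measureReal]
  exact measureReal_mono fun x hx => h.trans_lt hx

lemma distFun_le_two (f : ℝ → ℂ) (l : ℝ) : distFun f l ≤ 2 := by
  rw [distFun_eq_measureReal, ← μI_real_univ]
  exact measureReal_mono (subset_univ _)

lemma volume_real_lt_norm_indicator (f : ℝ → ℂ) {l : ℝ} (hl : 0 < l) :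
    volume.real {x | l < ‖(Ioo (-1 : ℝ) 1).indicator f x‖} = distFun f l := by
  rw [distFun, measureReal_def]
  congr 2
  ext x
  by_cases hx : x ∈ Ioo (-1 : ℝ) 1
  · simp only [mem_ofPred_eq, indicator_of_mem hx, hx, true_and]
  · simp only [mem_ofPred_eq, indicator_of_notMem hx, hx, false_and, norm_zero, hl.not_gt]

/-- The norm of `L (log L)^α(-1, 1)` in terms of the distribution function, infinite outside the
space. -/
def zygENorm (α : ℝ) (f : ℝ → ℂ) : ℝ≥0∞ := ∫⁻ l in Ioi 0, logMass α (distFun f l)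

lemma zygMass_norm_indicator (α : ℝ) (f : ℝ → ℂ) :
    zygMass α (fun x => ‖(Ioo (-1 : ℝ) 1).indicator f x‖) = zygENorm α f :=
  setLIntegral_congr_fun measurableSet_Ioi fun _ hl =>
    congrArg (logMass α) (volume_real_lt_norm_indicator f hl)

lemma exists_distFun_le (hf : AEStronglyMeasurable f μI) {t : ℝ} (ht : 0 < t) :
    ∃ l, 0 ≤ l ∧ distFun f l ≤ t := by
  have hlim : Tendsto (fun n : ℕ => μI {x | (n : ℝ) < ‖f x‖}) atTop (𝓝 0) := by
    have h := tendsto_measure_iInter_atTop (μ := μI) (s := fun n : ℕ => {x | (n : ℝ) < ‖f x‖})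
      (fun n => nullMeasurableSet_lt aemeasurable_const hf.norm.aemeasurable)
      (fun m n hmn x hx => lt_of_le_of_lt (Nat.cast_le (α := ℝ).2 hmn) hx) ⟨0, measure_ne_top _ _⟩
    have hempty : ⋂ n : ℕ, {x | (n : ℝ) < ‖f x‖} = ∅ := eq_empty_of_forall_notMem fun x hx =>
      let ⟨n, hn⟩ := exists_nat_ge ‖f x‖
      hn.not_gt (mem_iInter.1 hx n)
    rwa [hempty, measure_empty] at h
  obtain ⟨n, hn⟩ := (hlim.eventually_le_const (ENNReal.ofReal_pos.2 ht)).exists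
  refine ⟨n, n.cast_nonneg, ?_⟩
  rw [distFun_eq_measureReal]
  exact ENNReal.toReal_le_of_le_ofReal ht.le hn

lemma decRearr_nonneg (f : ℝ → ℂ) (t : ℝ) : 0 ≤ decRearr f t := Real.sInf_nonneg fun _ hl => hl.1

lemma lt_distFun_of_lt_decRearr {l t : ℝ} (hl : 0 ≤ l) (h : l < decRearr f t) :
    t < distFun f l := by
  by_contra! hle
  exact h.not_ge (csInf_le ⟨0, fun _ hl => hl.1⟩ ⟨hl, hle⟩)

lemma le_decRearr_of_lt_distFun (hf : AEStronglyMeasurable f μI) {l t : ℝ} (ht : 0 < t)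
    (h : t < distFun f l) : l ≤ decRearr f t :=
  le_csInf (exists_distFun_le hf ht) fun _ hb =>
    le_of_not_gt fun hbl => (h.trans_le (distFun_antitone f hbl.le)).not_ge hb.2

lemma antitoneOn_decRearr (hf : AEStronglyMeasurable f μI) : AntitoneOn (decRearr f) (Ioi 0) :=
  fun _ hs _ _ hst => csInf_le_csInf ⟨0, fun _ hl => hl.1⟩ (exists_distFun_le hf hs)
    fun _ hl => ⟨hl.1, hl.2.trans hst⟩

lemma aemeasurable_decRearr (hf : AEStronglyMeasurable f μI) :
    AEMeasurable (decRearr f) (volume.restrict (Ioo 0 2)) :=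
  aemeasurable_restrict_of_antitoneOn measurableSet_Ioo
    ((antitoneOn_decRearr hf).mono Ioo_subset_Ioi_self)

/-- The layer-cake formula for `f*` with respect to the measure `log^α (2e/t) dt` on `(0, 2)`. -/
lemma lintegral_decRearr_mul_log_rpow (hf : AEStronglyMeasurable f μI) (α : ℝ) :
    ∫⁻ t in Ioo 0 2, ENNReal.ofReal (decRearr f t * Real.log (2 * Real.exp 1 / t) ^ α)
      = zygENorm α f := by
  have hw : Measurable fun t => ENNReal.ofReal (zygLog t ^ α) := by fun_prop
  set m : Measure ℝ :=
    (volume.restrict (Ioo 0 2)).withDensity fun t => ENNReal.ofReal (zygLog t ^ α)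
  have hm (l : ℝ) : m (Ioo 0 (distFun f l)) = logMass α (distFun f l) := by
    rw [withDensity_apply _ measurableSet_Ioo, Measure.restrict_restrict measurableSet_Ioo,
      Ioo_inter_Ioo, max_self, min_eq_left (distFun_le_two f l), logMass]
  have hpos : ∀ᵐ t ∂m, t ∈ Ioo (0 : ℝ) 2 :=
    (withDensity_absolutelyContinuous _ _).ae_le (ae_restrict_mem measurableSet_Ioo)
  have hmeas : AEMeasurable (decRearr f) m :=
    (aemeasurable_decRearr hf).mono_ac (withDensity_absolutelyContinuous _ _)
  calc ∫⁻ t in Ioo 0 2, ENNReal.ofReal (decRearr f t * Real.log (2 * Real.exp 1 / t) ^ α)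
      = ∫⁻ t, ENNReal.ofReal (decRearr f t) ∂m := by
        rw [lintegral_withDensity_eq_lintegral_mul₀ hw.aemeasurable
          (aemeasurable_decRearr hf).ennreal_ofReal]
        refine setLIntegral_congr_fun measurableSet_Ioo fun t ht => ?_
        rw [Pi.mul_apply, mul_comm, ← zygLog_of_le_two ht.1 ht.2.le,
          ENNReal.ofReal_mul (Real.rpow_nonneg (zygLog_pos t).le α)]
    _ = zygENorm α f := le_antisymm ?_ ?_
  · rw [lintegral_eq_lintegral_meas_lt _ (ae_of_all _ fun t => decRearr_nonneg f t) hmeas]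
    refine setLIntegral_mono' measurableSet_Ioi fun l hl => (measure_mono_ae ?_).trans_eq (hm l)
    filter_upwards [hpos] with t ht hlt using ⟨ht.1, lt_distFun_of_lt_decRearr (le_of_lt hl) hlt⟩
  · rw [lintegral_eq_lintegral_meas_le _ (ae_of_all _ fun t => decRearr_nonneg f t) hmeas]
    exact lintegral_mono fun l => (hm l).symm.trans_le (measure_mono fun t ht =>
      le_decRearr_of_lt_distFun hf ht.1 ht.2)

lemma decRearr_mul_log_rpow_nonneg (f : ℝ → ℂ) {t : ℝ} (ht : t ∈ Ioo 0 2) (α : ℝ) :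
    0 ≤ decRearr f t * Real.log (2 * Real.exp 1 / t) ^ α := by
  rw [← zygLog_of_le_two ht.1 ht.2.le]
  exact mul_nonneg (decRearr_nonneg f t) (Real.rpow_nonneg (zygLog_pos t).le α)

lemma aestronglyMeasurable_decRearr_mul_log_rpow (hf : AEStronglyMeasurable f μI) (α : ℝ) :
    AEStronglyMeasurable (fun t => decRearr f t * Real.log (2 * Real.exp 1 / t) ^ α)
      (volume.restrict (Ioo 0 2)) :=
  ((aemeasurable_decRearr hf).mul (by fun_prop)).aestronglyMeasurable

lemma memZyg_iff {α : ℝ} (hf : AEStronglyMeasurable f μI) :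
    MemZyg α f ↔ zygENorm α f ≠ ∞ := by
  rw [← lintegral_decRearr_mul_log_rpow hf, MemZyg, lintegral_ofReal_ne_top_iff_integrable
    (aestronglyMeasurable_decRearr_mul_log_rpow hf α) ((ae_restrict_iff' measurableSet_Ioo).2
      (ae_of_all _ fun t ht => decRearr_mul_log_rpow_nonneg f ht α))]
  exact and_iff_right hf

lemma zygNorm_eq (α : ℝ) (hf : AEStronglyMeasurable f μI) :
    zygNorm α f = (zygENorm α f).toReal := by
  rw [← lintegral_decRearr_mul_log_rpow hf, zygNorm, integral_eq_lintegral_of_nonneg_ae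
    ((ae_restrict_iff' measurableSet_Ioo).2
      (ae_of_all _ fun t ht => decRearr_mul_log_rpow_nonneg f ht α))
    (aestronglyMeasurable_decRearr_mul_log_rpow hf α)]

end

/-! ### Ranking a function by its own size -/

lemma antitone_measureReal_Ici (m : Measure ℝ) [IsFiniteMeasure m] :
    Antitone fun s => m.real (Ici s) := fun _ _ hst => measureReal_mono (Ici_subset_Ici.2 hst)

lemma measure_measureReal_Ici_lt_le (m : Measure ℝ) [IsFiniteMeasure m] (r : ℝ) :
    m {s | m.real (Ici s) < r} ≤ ENNReal.ofReal r := by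
  have hupper : IsUpperSet {s | m.real (Ici s) < r} := fun s t hst hs =>
    (antitone_measureReal_Ici m hst).trans_lt hs
  rw [hupper.ordConnected.measurableSet.measure_eq_iSup_isCompact]
  refine iSup₂_le fun K hK => iSup_le fun hKc => ?_
  rcases K.eq_empty_or_nonempty with rfl | hne
  · simp
  have hle : m.real (Ici (sInf K)) < r := hK (hKc.sInf_mem hne)
  calc m K ≤ m (Ici (sInf K)) := measure_mono fun s hs => csInf_le hKc.bddBelow hs
    _ = ENNReal.ofReal (m.real (Ici (sInf K))) := (ofReal_measureReal).symm
    _ ≤ ENNReal.ofReal r := ENNReal.ofReal_le_ofReal hle.le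

section

variable {α : Type*} [MeasurableSpace α] {μ : Measure α} {u : α → ℝ}

/-- The position of `x` when the points are listed in decreasing order of `u`, measured by `μ`;
ties are counted in full. -/
def decRank (μ : Measure α) (u : α → ℝ) (x : α) : ℝ := μ.real {y | u x ≤ u y}

lemma decRank_eq_map (hu : Measurable u) (x : α) :
    decRank μ u x = (μ.map u).real (Ici (u x)) :=
  (map_measureReal_apply hu measurableSet_Ici).symm

variable [IsFiniteMeasure μ]

lemma measurable_decRank (hu : Measurable u) : Measurable (decRank μ u) := by
  simp only [funext (decRank_eq_map hu)]
  exact (antitone_measureReal_Ici _).measurable.comp hu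

lemma measure_decRank_lt_le (hu : Measurable u) (r : ℝ) :
    μ {x | decRank μ u x < r} ≤ ENNReal.ofReal r := by
  simp only [decRank_eq_map hu]
  exact (Measure.le_map_apply hu.aemeasurable _).trans (measure_measureReal_Ici_lt_le (μ.map u) r)

lemma decRank_le (l : ℝ) {x : α} (hx : l < u x) : decRank μ u x ≤ μ.real {y | l < u y} :=
  measureReal_mono fun _ hy => lt_of_lt_of_le hx hy

lemma logDominated_withDensity_decRank {β : ℝ} (hβ : 0 ≤ β) (hu : Measurable u) :
    LogDominated β (μ.withDensity fun x => ENNReal.ofReal (zygLog (decRank μ u x) ^ β)) μ :=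
  fun S hS => by
    rw [withDensity_apply _ hS]
    exact setLIntegral_comp_le_of_antitoneOn (measurable_decRank hu) (measure_decRank_lt_le hu)
      (by fun_prop) (antitoneOn_zygLog_rpow hβ) (fun t => Real.rpow_nonneg (zygLog_pos t).le β) S

lemma exists_lintegral_logMass_le {β : ℝ} (hβ : 0 ≤ β) :
    ∃ C, 0 < C ∧ ∀ (μ : Measure α) [IsFiniteMeasure μ] (u : α → ℝ), Measurable u →
      (∀ x, 0 ≤ u x) → ∃ ν, LogDominated β ν μ ∧
        ∫⁻ l in Ioi 0, logMass β (μ.real {x | l < u x})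
          ≤ ENNReal.ofReal C * ∫⁻ x, ENNReal.ofReal (u x) ∂ν := by
  obtain ⟨C, hC, hle⟩ := exists_logMass_le hβ
  refine ⟨C, hC, fun μ _ u hu hu0 => ⟨_, logDominated_withDensity_decRank hβ hu, ?_⟩⟩
  set ν := μ.withDensity fun x => ENNReal.ofReal (zygLog (decRank μ u x) ^ β)
  rw [lintegral_eq_lintegral_meas_lt _ (ae_of_all _ hu0) hu.aemeasurable,
    ← lintegral_const_mul' _ _ ENNReal.ofReal_ne_top]
  refine lintegral_mono fun l => ?_
  set E : Set α := {x | l < u x}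
  have hE : MeasurableSet E := measurableSet_lt measurable_const hu
  calc logMass β (μ.real E) ≤ ENNReal.ofReal (C * (μ.real E * zygLog (μ.real E) ^ β)) := hle _
    _ = ENNReal.ofReal C * ∫⁻ _ in E, ENNReal.ofReal (zygLog (μ.real E) ^ β) ∂μ := by
        rw [setLIntegral_const, ENNReal.ofReal_mul hC.le, ENNReal.ofReal_mul measureReal_nonneg,
          ofReal_measureReal, mul_comm (μ E)]
    _ ≤ ENNReal.ofReal C * ν E := by
        rw [withDensity_apply _ hE]
        gcongr ENNReal.ofReal C * ?_
        refine setLIntegral_mono_ae' hE ?_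
        filter_upwards [ae_pos_of_measure_lt_le (measure_decRank_lt_le (μ := μ) hu)] with x hx hxE
        exact ENNReal.ofReal_le_ofReal (antitoneOn_zygLog_rpow hβ hx
          (hx.trans_le (decRank_le l hxE)) (decRank_le l hxE))

end

/-! ### Membership in `L log L` -/

lemma one_add_log_nonneg {l : ℝ} (hl : 0 ≤ l) : 0 ≤ 1 + 2 * Real.log (1 + l) := by
  linarith [Real.log_nonneg (by linarith : 1 ≤ 1 + l)]

lemma zygLog_two_div_sq {l : ℝ} (hl : 0 < l) :
    zygLog (2 / (1 + l) ^ 2) = 1 + 2 * Real.log (1 + l) := by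
  have hlog : Real.log (2 * Real.exp 1 / (2 / (1 + l) ^ 2)) = 1 + 2 * Real.log (1 + l) := by
    have harg : 2 * Real.exp 1 / (2 / (1 + l) ^ 2) = Real.exp 1 * (1 + l) ^ 2 := by field_simp
    rw [harg, Real.log_mul (Real.exp_ne_zero 1) (by positivity), Real.log_exp, Real.log_pow]
    norm_num
  rw [zygLog, hlog, max_eq_right]
  linarith [Real.log_nonneg (by linarith : 1 ≤ 1 + l)]

lemma lintegral_two_div_sq_mul_log_ne_top :
    ∫⁻ l in Ioi 0, ENNReal.ofReal (2 / (1 + l) ^ 2 * (1 + 2 * Real.log (1 + l))) ≠ ∞ := by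
  have hint : IntegrableOn (fun l : ℝ => 10 * (1 + ‖l‖) ^ (-(3 / 2) : ℝ)) (Ioi 0) :=
    ((integrable_one_add_norm (by norm_num)).const_mul 10).integrableOn
  refine ne_top_of_le_ne_top hint.lintegral_lt_top.ne
    (setLIntegral_mono' measurableSet_Ioi fun l (hl : 0 < l) => ENNReal.ofReal_le_ofReal ?_)
  have hlog := Real.log_le_rpow_div (by linarith : 0 ≤ 1 + l) (show (0 : ℝ) < 1 / 2 by norm_num)
  have hone := Real.one_le_rpow (by linarith : 1 ≤ 1 + l) (show (0 : ℝ) ≤ 1 / 2 by norm_num)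
  have hpow : (1 + l) ^ (1 / 2 : ℝ) / (1 + l) ^ 2 = (1 + l) ^ (-(3 / 2) : ℝ) := by
    rw [← Real.rpow_natCast, ← Real.rpow_sub (by linarith)]
    norm_num
  rw [Real.norm_of_nonneg hl.le, ← hpow, div_mul_eq_mul_div, mul_div_assoc']
  refine div_le_div_of_nonneg_right ?_ (sq_nonneg _)
  linarith

lemma monotoneOn_one_add_log : MonotoneOn (fun l : ℝ => 1 + 2 * Real.log (1 + l)) (Ici 0) :=
  fun s hs t _ hst => by
    rw [mem_Ici] at hs
    beta_reduce
    gcongr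

lemma intervalIntegrable_one_add_log {a : ℝ} (ha : 0 ≤ a) :
    IntervalIntegrable (fun l : ℝ => 1 + 2 * Real.log (1 + l)) volume 0 a :=
  (monotoneOn_one_add_log.mono
    (by rw [uIcc_of_le ha]; exact Icc_subset_Ici_self)).intervalIntegrable

lemma integral_one_add_log_le {a : ℝ} (ha : 0 ≤ a) :
    ∫ l in 0..a, (1 + 2 * Real.log (1 + l)) ≤ 3 * a + 2 * (a * Real.posLog a) := by
  have hlog : Real.log (1 + a) ≤ 1 + Real.posLog a := by
    have h := Real.posLog_add (x := 1) (y := a)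
    rw [Real.posLog_one, add_zero] at h
    linarith [Real.log_two_lt_d9, show Real.log (1 + a) ≤ Real.posLog (1 + a) from le_max_right _ _]
  calc ∫ l in 0..a, (1 + 2 * Real.log (1 + l)) ≤ ∫ _ in 0..a, (1 + 2 * Real.log (1 + a)) :=
        intervalIntegral.integral_mono_on ha (intervalIntegrable_one_add_log ha)
          intervalIntegrable_const fun l hl => monotoneOn_one_add_log hl.1 ha hl.2
    _ = a * (1 + 2 * Real.log (1 + a)) := by
        rw [intervalIntegral.integral_const, sub_zero, smul_eq_mul]
    _ ≤ a * (1 + 2 * (1 + Real.posLog a)) := by gcongr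
    _ = 3 * a + 2 * (a * Real.posLog a) := by ring

section

variable {α : Type*} [MeasurableSpace α] {μ : Measure α} [IsFiniteMeasure μ] {u : α → ℝ}

lemma integrable_of_integrable_mul_posLog (hu : AEMeasurable u μ) (hu0 : ∀ x, 0 ≤ u x)
    (h : Integrable (fun x => u x * Real.posLog (u x)) μ) : Integrable u μ := by
  refine ((integrable_const (Real.exp 1)).add h).mono' hu.aestronglyMeasurable
    (ae_of_all _ fun x => ?_)
  rw [Real.norm_of_nonneg (hu0 x), Pi.add_apply]
  rcases le_total (u x) (Real.exp 1) with hle | hle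
  · exact hle.trans (le_add_of_nonneg_right (mul_nonneg (hu0 x) Real.posLog_nonneg))
  · have hlog : 1 ≤ Real.posLog (u x) :=
      ((Real.le_log_iff_exp_le ((Real.exp_pos 1).trans_le hle)).2 hle).trans (le_max_right _ _)
    nlinarith [Real.exp_pos 1, hu0 x]

lemma lintegral_meas_lt_mul_log_ne_top (hu : AEMeasurable u μ) (hu0 : ∀ x, 0 ≤ u x)
    (h : Integrable (fun x => u x * Real.posLog (u x)) μ) :
    ∫⁻ l in Ioi 0, μ {x | l < u x} * ENNReal.ofReal (1 + 2 * Real.log (1 + l)) ≠ ∞ := by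
  have hw0 : ∀ᵐ l ∂volume.restrict (Ioi (0 : ℝ)), 0 ≤ 1 + 2 * Real.log (1 + l) :=
    (ae_restrict_iff' measurableSet_Ioi).2
      (ae_of_all _ fun l hl => one_add_log_nonneg (le_of_lt hl))
  rw [← lintegral_comp_eq_lintegral_meas_lt_mul μ (ae_of_all _ hu0) hu
    (fun a ha => intervalIntegrable_one_add_log (le_of_lt ha)) hw0]
  exact ne_top_of_le_ne_top (((integrable_of_integrable_mul_posLog hu hu0 h).const_mul 3).add
    (h.const_mul 2)).lintegral_lt_top.ne
    (lintegral_mono fun x => ENNReal.ofReal_le_ofReal (integral_one_add_log_le (hu0 x)))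

lemma lintegral_logMass_one_ne_top (hu : AEMeasurable u μ) (hu0 : ∀ x, 0 ≤ u x)
    (h : Integrable (fun x => u x * Real.posLog (u x)) μ) :
    ∫⁻ l in Ioi 0, logMass 1 (μ.real {x | l < u x}) ≠ ∞ := by
  obtain ⟨C, hC, hle⟩ := exists_logMass_le zero_le_one
  have hpoint : ∀ l ∈ Ioi (0 : ℝ), logMass 1 (μ.real {x | l < u x}) ≤
      ENNReal.ofReal C * (μ {x | l < u x} * ENNReal.ofReal (1 + 2 * Real.log (1 + l))
        + ENNReal.ofReal (2 / (1 + l) ^ 2 * (1 + 2 * Real.log (1 + l)))) := fun l (hl : 0 < l) => by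
    have hw := one_add_log_nonneg hl.le
    set D := μ.real {x | l < u x}
    have hD0 : 0 ≤ D := measureReal_nonneg
    rw [← ofReal_measureReal (μ := μ), ← ENNReal.ofReal_mul hD0,
      ← ENNReal.ofReal_add (by positivity) (by positivity), ← ENNReal.ofReal_mul hC.le, ← add_mul]
    -- Enlarging `D` by `2 / (1 + l) ^ 2` makes its logarithm at most `1 + 2 log (1 + l)`.
    calc logMass 1 D ≤ logMass 1 (D + 2 / (1 + l) ^ 2) :=
          logMass_mono 1 (le_add_of_nonneg_right (by positivity))
      _ ≤ _ := hle _
      _ ≤ _ := by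
          gcongr
          rw [Real.rpow_one, ← zygLog_two_div_sq hl]
          exact antitoneOn_zygLog (mem_Ioi.2 (by positivity)) (mem_Ioi.2 (by positivity))
            (le_add_of_nonneg_left hD0)
  refine ne_top_of_le_ne_top ?_ (setLIntegral_mono' measurableSet_Ioi hpoint)
  rw [lintegral_const_mul' _ _ ENNReal.ofReal_ne_top, lintegral_add_right _ (by fun_prop)]
  exact ENNReal.mul_ne_top ENNReal.ofReal_ne_top (ENNReal.add_ne_top.2
    ⟨lintegral_meas_lt_mul_log_ne_top hu hu0 h, lintegral_two_div_sq_mul_log_ne_top⟩)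

end

/-! ### Zygmund-space bounds for the operator -/

section

variable {f g : ℝ → ℂ}

lemma distFun_congr_ae (h : f =ᵐ[μI] g) : distFun f = distFun g := by
  ext l
  simp only [distFun_eq_measureReal]
  exact measureReal_congr (eventuallyEq_set.2 (h.mono fun x hx => by simp only [mem_ofPred_eq, hx]))

lemma zygENorm_congr_ae (h : f =ᵐ[μI] g) (α : ℝ) : zygENorm α f = zygENorm α g := by
  simp only [zygENorm, distFun_congr_ae h]

lemma zygENorm_mono_exponent (f : ℝ → ℂ) : Monotone fun α => zygENorm α f := fun _ _ h =>
  lintegral_mono fun _ => lintegral_mono fun t =>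
    ENNReal.ofReal_le_ofReal (Real.rpow_le_rpow_of_exponent_le (one_le_zygLog t) h)

lemma zygENorm_zero (hf : AEStronglyMeasurable f μI) : zygENorm 0 f = ∫⁻ x, ‖f x‖ₑ ∂μI := by
  simp only [← ofReal_norm, zygENorm]
  rw [lintegral_eq_lintegral_meas_lt _ (ae_of_all _ fun x => norm_nonneg _) hf.norm.aemeasurable]
  simp [logMass, distFun_eq_measureReal]

lemma memZyg_zero_iff : MemZyg 0 f ↔ IntegrableOn f (Ioo (-1) 1) :=
  ⟨fun h => ⟨h.1, lt_top_iff_ne_top.2 (zygENorm_zero h.1 ▸ (memZyg_iff h.1).1 h)⟩,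
    fun h => (memZyg_iff h.1).2 (by rw [zygENorm_zero h.1]; exact h.2.ne)⟩

lemma zygNorm_zero (hf : AEStronglyMeasurable f μI) :
    zygNorm 0 f = ∫ x in Ioo (-1) 1, ‖f x‖ := by
  rw [zygNorm_eq 0 hf, zygENorm_zero hf]
  exact (integral_norm_eq_lintegral_enorm hf).symm

lemma memZyg_one_of_memLlogL (hf : MemLlogL f) : MemZyg 1 f := by
  have h : IntegrableOn (fun x => ‖f x‖ * Real.posLog ‖f x‖) (Ioo (-1) 1) := by
    simpa only [Real.posLog_apply, max_comm] using hf.2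
  rw [memZyg_iff hf.1, zygENorm]
  simpa only [distFun_eq_measureReal] using
    lintegral_logMass_one_ne_top hf.1.norm.aemeasurable (fun x => norm_nonneg _) h

lemma llogLNorm_eq_zygNorm_one (f : ℝ → ℂ) : llogLNorm f = zygNorm 1 f := by
  simp only [llogLNorm, zygNorm, Real.rpow_one]

end

lemma exists_ae_eq_hatT {β : ℝ} (hβ : 0 ≤ β) :
    ∃ C, 0 < C ∧ ∀ f : ℝ → ℂ, AEStronglyMeasurable f μI → zygENorm 1 f ≠ ∞ →
      ∃ h : ℝ → ℂ, Measurable h ∧ hatT f =ᵐ[μI] h ∧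
        ∀ ν, LogDominated β ν μI → ∫⁻ x, ‖h x‖ₑ ∂ν ≤ ENNReal.ofReal C * zygENorm (1 + β) f := by
  obtain ⟨C, hC, hbound⟩ := exists_ae_eq_hatT_of_integrable hβ
  refine ⟨C, hC, fun f hf hfin => ?_⟩
  set F : ℝ → ℂ := (Ioo (-1) 1).indicator (hf.mk f)
  have hFm : Measurable F := hf.stronglyMeasurable_mk.measurable.indicator measurableSet_Ioo
  have hmk : hf.mk f =ᵐ[μI] f := hf.ae_eq_mk.symm
  have hfF : f =ᵐ[μI] F := by
    filter_upwards [hmk, ae_mem_Ioo_μI] with x hx hxI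
      using hx.symm.trans (indicator_of_mem hxI _).symm
  have hmass (α : ℝ) : zygMass α (fun x => ‖F x‖) = zygENorm α f := by
    rw [zygMass_norm_indicator, zygENorm_congr_ae hmk]
  have hint : IntegrableOn f (Ioo (-1) 1) := memZyg_zero_iff.1
    ((memZyg_iff hf).2 (ne_top_of_le_ne_top hfin (zygENorm_mono_exponent f zero_le_one)))
  have hF : Integrable F := (integrable_indicator_iff measurableSet_Ioo).2 (hint.congr hmk.symm)
  obtain ⟨h, hhm, hh, hle⟩ := hbound F hFm hF (fun t ht => indicator_of_notMem ht _)
    (by rwa [hmass])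
  rw [hmass] at hle
  exact ⟨h, hhm, hatT_congr_ae hfF ▸ hh, hle⟩

lemma exists_zygENorm_hatT_le {β : ℝ} (hβ : 0 ≤ β) :
    ∃ C, 0 < C ∧ ∀ f : ℝ → ℂ, AEStronglyMeasurable f μI → zygENorm 1 f ≠ ∞ →
      AEStronglyMeasurable (hatT f) μI ∧
        zygENorm β (hatT f) ≤ ENNReal.ofReal C * zygENorm (1 + β) f := by
  obtain ⟨C₁, hC₁, hT⟩ := exists_ae_eq_hatT hβ
  obtain ⟨C₂, hC₂, hrank⟩ := exists_lintegral_logMass_le (α := ℝ) hβ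
  refine ⟨C₂ * C₁, by positivity, fun f hf hfin => ?_⟩
  obtain ⟨h, hhm, hh, hle⟩ := hT f hf hfin
  obtain ⟨ν, hν, hνle⟩ := hrank μI (fun x => ‖h x‖) hhm.norm fun x => norm_nonneg _
  refine ⟨⟨h, hhm.stronglyMeasurable, hh⟩, ?_⟩
  calc zygENorm β (hatT f) = ∫⁻ l in Ioi 0, logMass β (μI.real {x | l < ‖h x‖}) := by
        rw [zygENorm_congr_ae hh]
        simp only [zygENorm, distFun_eq_measureReal]
    _ ≤ ENNReal.ofReal C₂ * ∫⁻ x, ‖h x‖ₑ ∂ν := by simpa only [ofReal_norm] using hνle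
    _ ≤ ENNReal.ofReal C₂ * (ENNReal.ofReal C₁ * zygENorm (1 + β) f) := by
        gcongr
        exact hle ν hν
    _ = ENNReal.ofReal (C₂ * C₁) * zygENorm (1 + β) f := by
        rw [ENNReal.ofReal_mul hC₂.le, mul_assoc]

lemma exists_zygNorm_hatT_le {β : ℝ} (hβ : 0 ≤ β) :
    ∃ C, 0 < C ∧ ∀ f : ℝ → ℂ, MemZyg (1 + β) f →
      MemZyg β (hatT f) ∧ zygNorm β (hatT f) ≤ C * zygNorm (1 + β) f := by
  obtain ⟨C, hC, hbound⟩ := exists_zygENorm_hatT_le hβ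
  refine ⟨C, hC, fun f hf => ?_⟩
  have hfin : zygENorm (1 + β) f ≠ ∞ := (memZyg_iff hf.1).1 hf
  obtain ⟨hTm, hle⟩ := hbound f hf.1
    (ne_top_of_le_ne_top hfin (zygENorm_mono_exponent f (by linarith)))
  have htop : ENNReal.ofReal C * zygENorm (1 + β) f ≠ ∞ :=
    ENNReal.mul_ne_top ENNReal.ofReal_ne_top hfin
  refine ⟨(memZyg_iff hTm).2 (ne_top_of_le_ne_top htop hle), ?_⟩
  rw [zygNorm_eq β hTm, zygNorm_eq (1 + β) hf.1, ← ENNReal.toReal_ofReal hC.le,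
    ← ENNReal.toReal_mul]
  exact ENNReal.toReal_mono htop hle

/-- For every `β ≥ 0` the operator `T̂` maps `L(log L)^{1+β}(-1,1)` boundedly into
`L(log L)^β(-1,1)`; in particular `T̂ : L log L(-1,1) → L¹(-1,1)` is bounded. -/
theorem hatT_Zygmund_bound :
    (∀ β : ℝ, 0 ≤ β → ∃ C : ℝ, 0 < C ∧ ∀ f : ℝ → ℂ, MemZyg (1 + β) f →
      MemZyg β (hatT f) ∧ zygNorm β (hatT f) ≤ C * zygNorm (1 + β) f) ∧
    (∃ C : ℝ, 0 < C ∧ ∀ f : ℝ → ℂ, MemLlogL f →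
      IntegrableOn (hatT f) (Set.Ioo (-1 : ℝ) 1) ∧
      ∫ x in Set.Ioo (-1 : ℝ) 1, ‖hatT f x‖ ≤ C * llogLNorm f) := by
  refine ⟨fun β hβ => exists_zygNorm_hatT_le hβ, ?_⟩
  obtain ⟨C, hC, hbound⟩ := exists_zygNorm_hatT_le le_rfl
  refine ⟨C, hC, fun f hf => ?_⟩
  rw [add_zero] at hbound
  obtain ⟨hmem, hle⟩ := hbound f (memZyg_one_of_memLlogL hf)
  exact ⟨memZyg_zero_iff.1 hmem,
    by rwa [← zygNorm_zero hmem.1, llogLNorm_eq_zygNorm_one]⟩
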